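/- Let p_i, p_j, p_k be distinct odd primes and M = p_i^2 p_j^2 p_k^2. Assume A ⊕ B = ℤ_M, |A| = |B| = p_i p_j p_k, Φ_M | A, and that for every a ∈ A the set A ∩ Λ(a, D(M)) is M-fibered in at least one of the three directions. Define I = {a ∈ A : a∗F_i ⊆ A}, J = {a ∈ A : a∗F_j ⊆ A}, K = {a ∈ A : a∗F_k ⊆ A}, and assume I, J, K are pairwise disjoint. Then at least one of the sets I, J, K is empty. -/

import Mathlib

open Polynomial

/-- The mask polynomial `A(X) = Σ_{a ∈ A} X^a` of a finite subset of `ZMod M`,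
using the representatives in `{0, …, M-1}`. -/
noncomputable def maskPoly (M : ℕ) (A : Finset (ZMod M)) : Polynomial ℤ :=
  ∑ a ∈ A, X ^ a.val

/-- `Φ_s | A` : the `s`-th cyclotomic polynomial divides the mask polynomial of `A` in `ℤ[X]`. -/
def cycDvd (M s : ℕ) (A : Finset (ZMod M)) : Prop :=
  cyclotomic s ℤ ∣ maskPoly M A

/-- `A ⊕ B = ℤ_M` : every element of `ℤ_M` has a unique representation `a + b`
with `a ∈ A` and `b ∈ B`. -/
def IsTiling (M : ℕ) (A B : Set (ZMod M)) : Prop :=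
  ∀ z : ZMod M, ∃! ab : ZMod M × ZMod M, ab.1 ∈ A ∧ ab.2 ∈ B ∧ ab.1 + ab.2 = z

/-- The Coven–Meyerowitz property (T2): whenever `s_1, …, s_m` are prime powers dividing `M`,
powers of pairwise distinct primes, with `Φ_{s_t} | A` for each `t`, then `Φ_{s_1 ⋯ s_m} | A`. -/
def SatisfiesT2 (M : ℕ) (A : Finset (ZMod M)) : Prop :=
  ∀ (P : Finset ℕ) (e : ℕ → ℕ), P.Nonempty →
    (∀ p ∈ P, p.Prime ∧ 1 ≤ e p ∧ p ^ e p ∣ M ∧ cycDvd M (p ^ e p) A) →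
    cycDvd M (∏ p ∈ P, p ^ e p) A

/-- The `D`-grid through `x` in `ZMod M` : `Λ(x, D) = {y : D ∣ y - x}`. -/
def gridSet (M : ℕ) (x : ZMod M) (D : ℕ) : Set (ZMod M) :=
  {y : ZMod M | (D : ZMod M) ∣ (y - x)}

/-- `S` is fibered in the `p` direction on scale `M`: every element of `S` has its whole
fiber `Λ(s, M/p)` contained in `S`. -/
def Fibered (M p : ℕ) (S : Set (ZMod M)) : Prop :=
  ∀ s ∈ S, gridSet M s (M / p) ⊆ S

/-- `Div_N(S)` : the set of values `(s - s', N) = gcd(s - s', N)` for `s, s' ∈ S`. -/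
def DivSet (M N : ℕ) (S : Set (ZMod M)) : Set ℕ :=
  {m : ℕ | ∃ s ∈ S, ∃ s' ∈ S, Nat.gcd (s - s').val N = m}

/-!
Chinese remaindering and base-`p` digits turn `A` and `B` into zero-one arrays on
`(P × P) × (Q × Q) × (R × R)`, where `P`, `Q`, `R` have `p`, `q`, `r` elements. The tiling is used
through Sands' theorem, by which `A` and `B` have no nonzero differences with the same greatest
common divisor with `M`, and through the fact that each `Φ_s` with `1 ≠ s ∣ M` divides the mask
polynomial of `A` or of `B`. Suppose that `A` contains fibers in all three directions and let `p`
be the smallest prime. If `Φ_{M / p ^ 2}` divides the polynomial of a set, the numbers of points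
of the set in the columns, that is, on the cosets of order `p ^ 2`, are additively separable on
each grid; a separable function with values in `{0, 1}` is constant in one of its variables.

* Suppose `Φ_{M / p ^ 2}` divides `A`, not `B`. By positivity, the `p`-fibers of `A` lie above all
  points of some fiber in another direction, and as `p` is smallest, Sands' theorem forces each
  `p`-fiber in a column to contain equally many points of `B`. Comparing the `p`-fibers of `A`
  with its fibers in the remaining direction confines the projection of `B` along the columns so
  much that the count `|B| = p q r` is contradicted.
* Suppose `Φ_{M / p ^ 2}` divides `B`. Then `Φ_{M / p}` divides `A`, so that `B` meets each
  column at most once, and `A` contains a full column. Comparing this column with the fibers of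
  `A` in the other two directions, and counting modulo the primes, shows that `B` is
  equidistributed enough for `Φ_q` and `Φ_r` to divide `A`. Hence `Φ_{q r}` divides `B`, as
  otherwise `A` would have only `p` points on each grid of columns, fewer than the `p ^ 2` points
  of its full column. By separability `B` has points above a whole line of such grids, more than
  the comparison permits.
-/

/-! ### Additively separable functions -/

/-- A function of two variables of the form `g a + h b`, encoded by the vanishing of its mixed
second differences. -/
def IsAddSeparable {X Y G : Type*} [Add G] (f : X → Y → G) : Prop :=
  ∀ a a' b b', f a b + f a' b' = f a b' + f a' b

namespace IsAddSeparable

section AddCommMonoid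

variable {ι X Y G : Type*} [AddCommMonoid G] {f g : X → Y → G}

theorem swap (hf : IsAddSeparable f) : IsAddSeparable (Function.swap f) := fun a a' b b' =>
  (hf b b' a a').trans (add_comm _ _)

theorem of_const_left (hf : ∀ a a' b, f a b = f a' b) : IsAddSeparable f := fun a a' b b' => by
  rw [hf a a' b, hf a' a b', add_comm]

theorem of_const_right (hf : ∀ a b b', f a b = f a b') : IsAddSeparable f := fun a a' b b' => by
  rw [hf a b b', hf a' b' b]

theorem add (hf : IsAddSeparable f) (hg : IsAddSeparable g) :
    IsAddSeparable fun a b => f a b + g a b := fun a a' b b' => by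
  have hfg := congrArg₂ (· + ·) (hf a a' b b') (hg a a' b b')
  simpa only [add_add_add_comm] using hfg

theorem sum [Fintype ι] {f : ι → X → Y → G} (hf : ∀ i, IsAddSeparable (f i)) :
    IsAddSeparable fun a b => ∑ i, f i a b := fun a a' b b' => by
  simp only [← Finset.sum_add_distrib]
  exact Finset.sum_congr rfl fun i _ => hf i a a' b b'

end AddCommMonoid

section Int

variable {ι X Y : Type*} {f : X → Y → ℤ}

theorem of_mul_left {n : ℤ} (hn : n ≠ 0) (hf : IsAddSeparable fun a b => n * f a b) :
    IsAddSeparable f := fun a a' b b' => by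
  have hmul := hf a a' b b'
  simp only [← mul_add] at hmul
  exact mul_left_cancel₀ hn hmul

theorem of_sub_of_sum [Fintype ι] {f : ι → X → Y → ℤ}
    (hsub : ∀ i j, IsAddSeparable fun a b => f i a b - f j a b)
    (hsum : IsAddSeparable fun a b => ∑ i, f i a b) (i : ι) : IsAddSeparable (f i) := by
  have : Nonempty ι := ⟨i⟩
  apply of_mul_left (n := Fintype.card ι) (by exact_mod_cast Fintype.card_ne_zero)
  have hadd := (sum (hsub i)).add hsum
  simpa using hadd

theorem const_left_or_const_right (hf : IsAddSeparable f) (h01 : ∀ a b, f a b = 0 ∨ f a b = 1) :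
    (∀ a a' b, f a b = f a' b) ∨ (∀ a b b', f a b = f a b') := by
  by_contra! ⟨⟨a, a', b, hab⟩, c, d, d', hcd⟩
  have hrow : ∀ e, f a e = f a b := fun e => by
    have := hf a a' b e
    have := h01 a b
    have := h01 a' b
    have := h01 a e
    have := h01 a' e
    omega
  have := hf a c d d'
  have := hrow d
  have := hrow d'
  omega

theorem exists_forall_pos (hf : IsAddSeparable f) (h0 : ∀ a b, 0 ≤ f a b) {a : X} {b : Y}
    (hab : f a b ≠ 0) : (∃ a, ∀ b, 0 < f a b) ∨ (∃ b, ∀ a, 0 < f a b) := by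
  by_contra! ⟨hrow, hcol⟩
  obtain ⟨d, hd⟩ := hrow a
  obtain ⟨c, hc⟩ := hcol b
  have := hf a c b d
  have := h0 a b
  have := h0 a d
  have := h0 c b
  have := h0 c d
  omega

end Int

end IsAddSeparable

theorem card_dvd_sum_of_const {X : Type*} [Fintype X] {f : X → ℤ} (hf : ∀ x y, f x = f y) :
    (Fintype.card X : ℤ) ∣ ∑ x, f x := by
  rcases isEmpty_or_nonempty X with _ | ⟨⟨x⟩⟩
  · simp
  · simp [hf _ x]

namespace IsAddSeparable

variable {X Y : Type*} {f : X → Y → ℤ}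

theorem card_dvd_sum_sub_sum [Fintype X] (hf : IsAddSeparable f) (b b' : Y) :
    (Fintype.card X : ℤ) ∣ (∑ a, f a b) - ∑ a, f a b' := by
  rw [← Finset.sum_sub_distrib]
  refine card_dvd_sum_of_const fun a a' => ?_
  have := hf a a' b b'
  omega

theorem card_dvd_sum_or [Fintype X] [Fintype Y] (hf : IsAddSeparable f)
    (h01 : ∀ a b, f a b = 0 ∨ f a b = 1) :
    (Fintype.card X : ℤ) ∣ ∑ a, ∑ b, f a b ∨ (Fintype.card Y : ℤ) ∣ ∑ a, ∑ b, f a b := by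
  rcases hf.const_left_or_const_right h01 with h | h
  · exact Or.inl (card_dvd_sum_of_const fun a a' => Finset.sum_congr rfl fun b _ => h a a' b)
  · exact Or.inr (Finset.dvd_sum fun a _ => card_dvd_sum_of_const (h a))

end IsAddSeparable

section ZeroOne

variable {X Y : Type*}

theorem sum_eq_one_iff_exists_eq_one [Fintype X] {f : X → ℤ} (h01 : ∀ x, f x = 0 ∨ f x = 1)
    (huniq : ∀ x y, f x = 1 → f y = 1 → x = y) : ∑ x, f x = 1 ↔ ∃ x, f x = 1 := by
  constructor
  · contrapose!
    intro h
    simp [fun x => (h01 x).resolve_right (h x)]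
  · rintro ⟨x, hx⟩
    rw [Finset.sum_eq_single x (fun y _ hy => ?_) (by simp), hx]
    exact (h01 y).resolve_right fun e => hy (huniq y x e hx)

theorem sum_eq_zero_or_one [Fintype X] {f : X → ℤ} (h01 : ∀ x, f x = 0 ∨ f x = 1)
    (huniq : ∀ x y, f x = 1 → f y = 1 → x = y) : ∑ x, f x = 0 ∨ ∑ x, f x = 1 := by
  by_cases h : ∃ x, f x = 1
  · exact Or.inr ((sum_eq_one_iff_exists_eq_one h01 huniq).2 h)
  · push Not at h
    exact Or.inl (Finset.sum_eq_zero fun x _ => (h01 x).resolve_right (h x))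

theorem sum_le_card_of_injOn [Fintype X] [Fintype Y] {f : X → ℤ} (h01 : ∀ x, f x = 0 ∨ f x = 1)
    (g : X → Y) (hg : Set.InjOn g {x | f x = 1}) : ∑ x, f x ≤ Fintype.card Y := by
  classical
  have hind : ∀ x, f x = if f x = 1 then 1 else 0 := fun x => by
    rcases h01 x with h | h <;> simp [h]
  rw [Finset.sum_congr rfl fun x _ => hind x, Finset.sum_boole]
  exact_mod_cast Finset.card_le_card_of_injOn g (by simp) (by simpa using hg)

theorem exists_ne_of_three_le [Fintype X] (h : 3 ≤ Fintype.card X) (x : X) : ∃ a, a ≠ x :=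
  Fintype.exists_ne_of_one_lt_card (by omega) x

theorem forall_eq_or_forall_eq_of_pairwise {E : X → Y → Prop}
    (h : ∀ a b a' b', E a b → E a' b' → a = a' ∨ b = b') :
    (∀ a b a' b', E a b → E a' b' → a = a') ∨ (∀ a b a' b', E a b → E a' b' → b = b') := by
  by_contra! ⟨⟨a, b, a', b', h₁, h₂, ha⟩, ⟨c, d, c', d', h₃, h₄, hd⟩⟩
  have := h _ _ _ _ h₁ h₂
  have := h _ _ _ _ h₁ h₃
  have := h _ _ _ _ h₁ h₄
  have := h _ _ _ _ h₂ h₃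
  have := h _ _ _ _ h₂ h₄
  have := h _ _ _ _ h₃ h₄
  grind

end ZeroOne

section OverlappingLayers

variable {X Y ι : Type*} {f g : X → Y → ℤ}

theorem IsAddSeparable.forall_eq_one_of_disjoint (hsep : IsAddSeparable fun a b => f a b - g a b)
    (hf : ∀ a b, f a b = 0 ∨ f a b = 1) (hg : ∀ a b, g a b = 0 ∨ g a b = 1)
    (hdisj : ∀ a b, f a b = 1 → g a b ≠ 1) {a : X} {b b' : Y} (hab : f a b = 1)
    (hab' : g a b' = 1) (a' : X) : f a' b = 1 := by
  have hgap := hsep a a' b b'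
  beta_reduce at hgap
  have := hdisj a b hab
  have := hdisj a b'
  have := hf a' b
  have := hg a' b
  have := hf a' b'
  have := hg a' b'
  have := hg a b
  have := hf a b'
  omega

theorem IsAddSeparable.forall_eq_one_of_row_eq_zero
    (hsep : IsAddSeparable fun a b => f a b - g a b) (hg : ∀ a b, g a b = 0 ∨ g a b = 1)
    (hf : ∀ a b, f a b = 0 ∨ f a b = 1) (hdisj : ∀ a b, f a b = 1 → g a b ≠ 1) {a a' : X}
    (hfa : ∀ b, f a b = 0) (hga : ∀ b, g a b = 0) {b : Y} (hab : f a' b = 1) (b' : Y) :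
    f a' b' = 1 := by
  have hgap := hsep a a' b b'
  beta_reduce at hgap
  have := hdisj a' b hab
  have := hf a' b'
  have := hg a' b'
  have := hg a' b
  have := hfa b
  have := hfa b'
  have := hga b
  have := hga b'
  omega

theorem exists_overlapping_layers [Fintype ι] {f : ι → X → Y → ℤ} (hι : 3 ≤ Fintype.card ι)
    (h01 : ∀ i a b, f i a b = 0 ∨ f i a b = 1)
    (hsub : ∀ i j, IsAddSeparable fun a b => f i a b - f j a b)
    (hsum : ¬ IsAddSeparable fun a b => ∑ i, f i a b)
    (hcol : ∀ i b, ¬ ∀ a, f i a b = 1) (hrow : ∀ i a, ¬ ∀ b, f i a b = 1) :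
    ∃ i j a b, i ≠ j ∧ f i a b = 1 ∧ f j a b = 1 := by
  by_contra! hdisj
  have hlayer : ∀ i, ¬ IsAddSeparable (f i) := fun i hi =>
    hsum (.sum fun j => by simpa using (hsub j i).add hi)
  have hnonempty : ∀ i, ∃ a b, f i a b = 1 := fun i => by
    by_contra! h
    have hzero : ∀ a b, f i a b = 0 := fun a b => (h01 i a b).resolve_right (h a b)
    exact hlayer i (.of_const_left fun a a' b => by rw [hzero, hzero])
  obtain ⟨x, y, z, hxy, hxz, hyz⟩ := Fintype.two_lt_card_iff.1 (show 2 < Fintype.card ι from hι)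
  obtain ⟨a, -⟩ := hnonempty x
  -- In any fixed row exactly one of two layers has a point, which is impossible for three layers.
  have hexactly_one : ∀ i j, i ≠ j → ((∃ b, f i a b = 1) ↔ ¬ ∃ b, f j a b = 1) := by
    intro i j hij
    constructor
    · rintro ⟨b, hb⟩ ⟨b', hb'⟩
      exact hcol i b ((hsub i j).forall_eq_one_of_disjoint (h01 i) (h01 j)
        (fun a b => hdisj i j a b hij) hb hb')
    · intro hj
      by_contra hi
      push Not at hi hj
      obtain ⟨a', b, hb⟩ := hnonempty i
      exact hrow i a' ((hsub i j).forall_eq_one_of_row_eq_zero (h01 j) (h01 i)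
        (fun a b => hdisj i j a b hij) (fun b => (h01 i a b).resolve_right (hi b))
        (fun b => (h01 j a b).resolve_right (hj b)) hb)
  have := hexactly_one x y hxy
  have := hexactly_one x z hxz
  have := hexactly_one y z hyz
  tauto

theorem IsAddSeparable.eq_one_or_eq_one (hsep : IsAddSeparable fun a b => f a b - g a b)
    (hf : ∀ a b, f a b = 0 ∨ f a b = 1) (hg : ∀ a b, g a b = 0 ∨ g a b = 1) {a : X} {b b' : Y}
    (hfab : f a b = 1) (hgab : g a b = 0) (hfab' : f a b' ≠ 1) (d : X) :
    f d b = 1 ∨ g d b' = 1 := by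
  have hgap := hsep a d b b'
  beta_reduce at hgap
  have := hf a b'
  have := hg a b'
  have := hf d b
  have := hg d b
  have := hf d b'
  have := hg d b'
  omega

end OverlappingLayers

/-! ### Arrays indexed by two-digit expansions -/

/-- Integer arrays on `(P × P) × (Q × Q) × (R × R)`. A pair `(x, h)` stands for the residue
`x + p * h` modulo `p ^ 2`, so that its first component is the low digit. -/
abbrev DigitArray (P Q R : Type*) : Type _ := P × P → Q × Q → R × R → ℤ

/-- Two pairs of residues modulo `p ^ 2`, given by their digits, have the same gap if the
differences `y' - y` and `z' - z` have the same greatest common divisor with `p ^ 2`. -/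
def SameGap {P : Type*} (y y' z z' : P × P) : Prop :=
  (y.1 = y'.1 ↔ z.1 = z'.1) ∧ (y = y' ↔ z = z')

namespace SameGap

variable {P : Type*}

theorem refl (y z : P × P) : SameGap y y z z := ⟨by simp, by simp⟩

theorem of_high {x z h h' k k' : P} (hh : h ≠ h') (hk : k ≠ k') :
    SameGap (x, h) (x, h') (z, k) (z, k') := ⟨by simp, by simp [hh, hk]⟩

theorem of_low {y y' z z' : P × P} (hy : y.1 ≠ y'.1) (hz : z.1 ≠ z'.1) : SameGap y y' z z' :=
  ⟨by simp [hy, hz], by simp [Prod.ext_iff, hy, hz]⟩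

theorem symm {y y' z z' : P × P} (h : SameGap y y' z z') : SameGap y' y z' z :=
  ⟨by rw [eq_comm, h.1, eq_comm], by rw [eq_comm, h.2, eq_comm]⟩

theorem exists_high [Fintype P] (hP : 3 ≤ Fintype.card P) (x h z k k' : P) :
    ∃ a, SameGap (x, a) (x, h) (z, k) (z, k') := by
  by_cases hk : k = k'
  · exact ⟨h, hk ▸ refl _ _⟩
  · obtain ⟨a, ha⟩ := exists_ne_of_three_le hP h
    exact ⟨a, of_high ha hk⟩

end SameGap

/-- A function of a residue modulo `p ^ 2`, given by its digits, whose Fourier transform is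
supported on the frequencies of exact order `p ^ s` (where `s ≤ 2`, and `s > 2` is read as `2`). -/
def IsPureLevel {P : Type*} [Fintype P] (s : ℕ) (φ : P × P → ℤ) : Prop :=
  match s with
  | 0 => ∀ y y', φ y = φ y'
  | 1 => (∀ x h h', φ (x, h) = φ (x, h')) ∧ ∑ y, φ y = 0
  | _ => ∀ x, ∑ h, φ (x, h) = 0

section PointDiff

variable {X : Type*}

open Classical in
/-- The difference of two point masses, the test function extracting `g a - g b`. -/
noncomputable def pointDiff (a b : X) : X → ℤ := Pi.single a 1 - Pi.single b 1

theorem sum_pointDiff_mul [Fintype X] (a b : X) (g : X → ℤ) :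
    ∑ y, pointDiff a b y * g y = g a - g b := by
  classical
  simp [pointDiff, Pi.single_apply, sub_mul, Finset.sum_sub_distrib]

theorem sum_pointDiff_fst_mul [Fintype X] (a b : X) (g : X × X → ℤ) :
    ∑ y, pointDiff a b y.1 * g y = ∑ h, g (a, h) - ∑ h, g (b, h) := by
  simp only [Fintype.sum_prod_type, ← Finset.mul_sum]
  exact sum_pointDiff_mul a b fun x => ∑ h, g (x, h)

theorem isPureLevel_one_pointDiff [Fintype X] (a b : X) :
    IsPureLevel 1 fun y : X × X => pointDiff a b y.1 := by
  refine ⟨fun _ _ _ => rfl, ?_⟩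
  simpa using sum_pointDiff_fst_mul a b fun _ => 1

theorem isPureLevel_two_pointDiff [Fintype X] (x h h' : X) :
    IsPureLevel 2 (pointDiff (x, h) (x, h')) := by
  classical
  intro x'
  by_cases hx : x' = x <;> simp [pointDiff, Pi.single_apply, hx]

end PointDiff

namespace DigitArray

section Swap

variable {P Q R : Type*}

/-- Exchange of the first two coordinates of an array. -/
abbrev swap₁₂ (F : DigitArray P Q R) : DigitArray Q P R := fun y₂ y₁ y₃ => F y₁ y₂ y₃

/-- Exchange of the last two coordinates of an array. -/
abbrev swap₂₃ (F : DigitArray P Q R) : DigitArray P R Q := fun y₁ y₃ y₂ => F y₁ y₂ y₃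

/-- The array `A` contains the whole fiber in the first direction through the given point. -/
def IsFiber₁ (A : DigitArray P Q R) (x₁ : P) (y₂ : Q × Q) (y₃ : R × R) : Prop :=
  ∀ h, A (x₁, h) y₂ y₃ = 1

/-- The array `A` contains the whole fiber in the second direction through the given point. -/
def IsFiber₂ (A : DigitArray P Q R) (y₁ : P × P) (x₂ : Q) (y₃ : R × R) : Prop :=
  ∀ h, A y₁ (x₂, h) y₃ = 1

/-- The array `A` contains the whole fiber in the third direction through the given point. -/
def IsFiber₃ (A : DigitArray P Q R) (y₁ : P × P) (y₂ : Q × Q) (x₃ : R) : Prop :=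
  ∀ h, A y₁ y₂ (x₃, h) = 1

/-- The projection to the last two coordinates of the set with indicator `B`. -/
def Shadow (B : DigitArray P Q R) (y₂ : Q × Q) (y₃ : R × R) : Prop := ∃ y₁, B y₁ y₂ y₃ = 1

end Swap

variable {P Q R : Type*} [Fintype P]

/-- The number of points of the set with indicator `F` on a fiber in the first direction. -/
def fiberSum (F : DigitArray P Q R) (x₁ : P) (y₂ : Q × Q) (y₃ : R × R) : ℤ := ∑ h, F (x₁, h) y₂ y₃

/-- The number of points of the set with indicator `F` above a point of the last two
coordinates. -/
def columnSum (F : DigitArray P Q R) (y₂ : Q × Q) (y₃ : R × R) : ℤ := ∑ y₁, F y₁ y₂ y₃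

theorem columnSum_eq_sum_fiberSum (F : DigitArray P Q R) (y₂ : Q × Q) (y₃ : R × R) :
    columnSum F y₂ y₃ = ∑ x₁, fiberSum F x₁ y₂ y₃ := Fintype.sum_prod_type _

variable [Fintype Q] [Fintype R] {F : DigitArray P Q R}

/-- The Fourier transform of `F` vanishes at the frequencies of exact order
`p ^ s₁ * q ^ s₂ * r ^ s₃`. For the indicator of a set this says that the cyclotomic polynomial of
that index divides the mask polynomial. -/
def VanishesAt (s₁ s₂ s₃ : ℕ) (F : DigitArray P Q R) : Prop :=
  ∀ φ₁ φ₂ φ₃, IsPureLevel s₁ φ₁ → IsPureLevel s₂ φ₂ → IsPureLevel s₃ φ₃ →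
    ∑ y₁, φ₁ y₁ * ∑ y₂, φ₂ y₂ * ∑ y₃, φ₃ y₃ * F y₁ y₂ y₃ = 0

namespace VanishesAt

variable {s₁ s₂ s₃ : ℕ}

theorem swap₁₂ (hF : VanishesAt s₁ s₂ s₃ F) : VanishesAt s₂ s₁ s₃ (swap₁₂ F) := by
  intro φ₂ φ₁ φ₃ h₂ h₁ h₃
  rw [← hF φ₁ φ₂ φ₃ h₁ h₂ h₃]
  simp only [Finset.mul_sum]
  rw [Finset.sum_comm]
  simp only [mul_left_comm]

theorem swap₂₃ (hF : VanishesAt s₁ s₂ s₃ F) : VanishesAt s₁ s₃ s₂ (swap₂₃ F) := by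
  intro φ₁ φ₃ φ₂ h₁ h₃ h₂
  rw [← hF φ₁ φ₂ φ₃ h₁ h₂ h₃]
  simp only [Finset.mul_sum]
  refine Finset.sum_congr rfl fun _ _ => ?_
  rw [Finset.sum_comm]
  simp only [mul_left_comm]

theorem isAddSeparable_columnSum (hF : VanishesAt 0 2 2 F) (x₂ : Q) (x₃ : R) :
    IsAddSeparable fun h₂ h₃ => columnSum F (x₂, h₂) (x₃, h₃) := by
  intro a a' b b'
  have h := hF (fun _ => 1) _ _ (fun _ _ => rfl) (isPureLevel_two_pointDiff x₂ a a')
    (isPureLevel_two_pointDiff x₃ b b')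
  simp only [sum_pointDiff_mul, one_mul, Finset.sum_sub_distrib] at h
  simp only [columnSum]
  linarith

theorem isAddSeparable_fiberSum_sub (hF : VanishesAt 1 2 2 F) (x₁ x₁' : P) (x₂ : Q) (x₃ : R) :
    IsAddSeparable fun h₂ h₃ =>
      fiberSum F x₁ (x₂, h₂) (x₃, h₃) - fiberSum F x₁' (x₂, h₂) (x₃, h₃) := by
  intro a a' b b'
  have h := hF _ _ _ (isPureLevel_one_pointDiff x₁ x₁') (isPureLevel_two_pointDiff x₂ a a')
    (isPureLevel_two_pointDiff x₃ b b')
  simp only [sum_pointDiff_mul, sum_pointDiff_fst_mul, Finset.sum_sub_distrib] at h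
  simp only [fiberSum]
  linarith

end VanishesAt

end DigitArray

open DigitArray

/-- The digit form of a tiling `A ⊕ B` of `ℤ / p² q² r²` with `|A| = |B| = p q r`, where `A` is
fibered on `D(M)`-grids and no point of `A` lies on full fibers in two directions. The tiling
property is recorded through two consequences: the condition of Sands' theorem, that differences
of `A` and of `B` with the same gaps vanish, and the vanishing at every nontrivial frequency of the
Fourier transform of `A` or of `B`. -/
structure FiberedTiling {P Q R : Type*} [Fintype P] [Fintype Q] [Fintype R]
    (A B : DigitArray P Q R) : Prop where
  left_zero_or_one : ∀ y₁ y₂ y₃, A y₁ y₂ y₃ = 0 ∨ A y₁ y₂ y₃ = 1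
  right_zero_or_one : ∀ y₁ y₂ y₃, B y₁ y₂ y₃ = 0 ∨ B y₁ y₂ y₃ = 1
  sum_left : ∑ y₁, ∑ y₂, ∑ y₃, A y₁ y₂ y₃ =
    (Fintype.card P : ℤ) * Fintype.card Q * Fintype.card R
  sum_right : ∑ y₁, ∑ y₂, ∑ y₃, B y₁ y₂ y₃ =
    (Fintype.card P : ℤ) * Fintype.card Q * Fintype.card R
  prime₁ : (Fintype.card P).Prime
  prime₂ : (Fintype.card Q).Prime
  prime₃ : (Fintype.card R).Prime
  three_le₁ : 3 ≤ Fintype.card P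
  three_le₂ : 3 ≤ Fintype.card Q
  three_le₃ : 3 ≤ Fintype.card R
  card_ne₁₂ : Fintype.card P ≠ Fintype.card Q
  card_ne₁₃ : Fintype.card P ≠ Fintype.card R
  card_ne₂₃ : Fintype.card Q ≠ Fintype.card R
  sands : ∀ {y₁ y₂ y₃ y₁' y₂' y₃' z₁ z₂ z₃ z₁' z₂' z₃'}, A y₁ y₂ y₃ = 1 → A y₁' y₂' y₃' = 1 →
    B z₁ z₂ z₃ = 1 → B z₁' z₂' z₃' = 1 → SameGap y₁ y₁' z₁ z₁' → SameGap y₂ y₂' z₂ z₂' →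
    SameGap y₃ y₃' z₃ z₃' → y₁ = y₁' ∧ y₂ = y₂' ∧ y₃ = y₃'
  vanishesAt : ∀ s₁ s₂ s₃, s₁ ≤ 2 → s₂ ≤ 2 → s₃ ≤ 2 → (s₁ ≠ 0 ∨ s₂ ≠ 0 ∨ s₃ ≠ 0) →
    VanishesAt s₁ s₂ s₃ A ∨ VanishesAt s₁ s₂ s₃ B
  fibered : ∀ x₁ x₂ x₃,
    (∀ h₁ h₂ h₃, A (x₁, h₁) (x₂, h₂) (x₃, h₃) = 1 → IsFiber₁ A x₁ (x₂, h₂) (x₃, h₃)) ∨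
    (∀ h₁ h₂ h₃, A (x₁, h₁) (x₂, h₂) (x₃, h₃) = 1 → IsFiber₂ A (x₁, h₁) x₂ (x₃, h₃)) ∨
    (∀ h₁ h₂ h₃, A (x₁, h₁) (x₂, h₂) (x₃, h₃) = 1 → IsFiber₃ A (x₁, h₁) (x₂, h₂) x₃)
  not_isFiber₁₂ : ∀ y₁ y₂ y₃, IsFiber₁ A y₁.1 y₂ y₃ → ¬ IsFiber₂ A y₁ y₂.1 y₃
  not_isFiber₁₃ : ∀ y₁ y₂ y₃, IsFiber₁ A y₁.1 y₂ y₃ → ¬ IsFiber₃ A y₁ y₂ y₃.1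
  not_isFiber₂₃ : ∀ y₁ y₂ y₃, IsFiber₂ A y₁ y₂.1 y₃ → ¬ IsFiber₃ A y₁ y₂ y₃.1

namespace FiberedTiling

variable {P Q R : Type*} [Fintype P] [Fintype Q] [Fintype R] {A B : DigitArray P Q R}

protected theorem swap₁₂ (c : FiberedTiling A B) : FiberedTiling (swap₁₂ A) (swap₁₂ B) where
  left_zero_or_one _ _ _ := c.left_zero_or_one _ _ _
  right_zero_or_one _ _ _ := c.right_zero_or_one _ _ _
  sum_left := by rw [Finset.sum_comm, c.sum_left]; ring
  sum_right := by rw [Finset.sum_comm, c.sum_right]; ring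
  prime₁ := c.prime₂
  prime₂ := c.prime₁
  prime₃ := c.prime₃
  three_le₁ := c.three_le₂
  three_le₂ := c.three_le₁
  three_le₃ := c.three_le₃
  card_ne₁₂ := c.card_ne₁₂.symm
  card_ne₁₃ := c.card_ne₂₃
  card_ne₂₃ := c.card_ne₁₃
  sands a a' b b' h₂ h₁ h₃ := and_left_comm.1 (c.sands a a' b b' h₁ h₂ h₃)
  vanishesAt s₁ s₂ s₃ h₁ h₂ h₃ h :=
    (c.vanishesAt s₂ s₁ s₃ h₂ h₁ h₃ (or_left_comm.1 h)).imp (·.swap₁₂) (·.swap₁₂)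
  fibered x₂ x₁ x₃ := by
    rcases c.fibered x₁ x₂ x₃ with h | h | h
    · exact Or.inr (Or.inl fun _ _ _ => h _ _ _)
    · exact Or.inl fun _ _ _ => h _ _ _
    · exact Or.inr (Or.inr fun _ _ _ => h _ _ _)
  not_isFiber₁₂ _ _ _ h₂ h₁ := c.not_isFiber₁₂ _ _ _ h₁ h₂
  not_isFiber₁₃ _ _ _ := c.not_isFiber₂₃ _ _ _
  not_isFiber₂₃ _ _ _ := c.not_isFiber₁₃ _ _ _

protected theorem swap₂₃ (c : FiberedTiling A B) : FiberedTiling (swap₂₃ A) (swap₂₃ B) where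
  left_zero_or_one _ _ _ := c.left_zero_or_one _ _ _
  right_zero_or_one _ _ _ := c.right_zero_or_one _ _ _
  sum_left := by
    rw [mul_right_comm, ← c.sum_left]
    exact Finset.sum_congr rfl fun _ _ => Finset.sum_comm
  sum_right := by
    rw [mul_right_comm, ← c.sum_right]
    exact Finset.sum_congr rfl fun _ _ => Finset.sum_comm
  prime₁ := c.prime₁
  prime₂ := c.prime₃
  prime₃ := c.prime₂
  three_le₁ := c.three_le₁
  three_le₂ := c.three_le₃
  three_le₃ := c.three_le₂
  card_ne₁₂ := c.card_ne₁₃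
  card_ne₁₃ := c.card_ne₁₂
  card_ne₂₃ := c.card_ne₂₃.symm
  sands a a' b b' h₁ h₃ h₂ := (c.sands a a' b b' h₁ h₂ h₃).imp_right And.symm
  vanishesAt s₁ s₂ s₃ h₁ h₂ h₃ h :=
    (c.vanishesAt s₁ s₃ s₂ h₁ h₃ h₂ (h.imp_right Or.symm)).imp (·.swap₂₃) (·.swap₂₃)
  fibered x₁ x₃ x₂ := by
    rcases c.fibered x₁ x₂ x₃ with h | h | h
    · exact Or.inl fun _ _ _ => h _ _ _
    · exact Or.inr (Or.inr fun _ _ _ => h _ _ _)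
    · exact Or.inr (Or.inl fun _ _ _ => h _ _ _)
  not_isFiber₁₂ _ _ _ := c.not_isFiber₁₃ _ _ _
  not_isFiber₁₃ _ _ _ := c.not_isFiber₁₂ _ _ _
  not_isFiber₂₃ _ _ _ h₃ h₂ := c.not_isFiber₂₃ _ _ _ h₂ h₃

end FiberedTiling

namespace DigitArray

variable {P Q R : Type*} {A : DigitArray P Q R}

/-- Some full fiber in the first direction lies in the set with indicator `A`. -/
def HasFiber₁ (A : DigitArray P Q R) : Prop := ∃ x₁ y₂ y₃, IsFiber₁ A x₁ y₂ y₃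

/-- Some full fiber in the second direction lies in the set with indicator `A`. -/
def HasFiber₂ (A : DigitArray P Q R) : Prop := ∃ y₁ x₂ y₃, IsFiber₂ A y₁ x₂ y₃

/-- Some full fiber in the third direction lies in the set with indicator `A`. -/
def HasFiber₃ (A : DigitArray P Q R) : Prop := ∃ y₁ y₂ x₃, IsFiber₃ A y₁ y₂ x₃

theorem HasFiber₁.swap₁₂ (h : HasFiber₁ A) : HasFiber₂ (swap₁₂ A) :=
  let ⟨x₁, y₂, y₃, hA⟩ := h
  ⟨y₂, x₁, y₃, hA⟩

theorem HasFiber₂.swap₁₂ (h : HasFiber₂ A) : HasFiber₁ (swap₁₂ A) :=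
  let ⟨y₁, x₂, y₃, hA⟩ := h
  ⟨x₂, y₁, y₃, hA⟩

theorem HasFiber₃.swap₁₂ (h : HasFiber₃ A) : HasFiber₃ (swap₁₂ A) :=
  let ⟨y₁, y₂, x₃, hA⟩ := h
  ⟨y₂, y₁, x₃, hA⟩

theorem HasFiber₁.swap₂₃ (h : HasFiber₁ A) : HasFiber₁ (swap₂₃ A) :=
  let ⟨x₁, y₂, y₃, hA⟩ := h
  ⟨x₁, y₃, y₂, hA⟩

theorem HasFiber₂.swap₂₃ (h : HasFiber₂ A) : HasFiber₃ (swap₂₃ A) :=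
  let ⟨y₁, x₂, y₃, hA⟩ := h
  ⟨y₁, y₃, x₂, hA⟩

theorem HasFiber₃.swap₂₃ (h : HasFiber₃ A) : HasFiber₂ (swap₂₃ A) :=
  let ⟨y₁, y₂, x₃, hA⟩ := h
  ⟨y₁, x₃, y₂, hA⟩

open Classical in
/-- The indicator of the set of full fibers in the first direction contained in `A`. -/
noncomputable def fiberInd (A : DigitArray P Q R) (x₁ : P) (y₂ : Q × Q) (y₃ : R × R) : ℤ :=
  if IsFiber₁ A x₁ y₂ y₃ then 1 else 0

theorem fiberInd_zero_or_one (A : DigitArray P Q R) (x₁ : P) (y₂ : Q × Q) (y₃ : R × R) :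
    fiberInd A x₁ y₂ y₃ = 0 ∨ fiberInd A x₁ y₂ y₃ = 1 := by
  unfold fiberInd
  split_ifs <;> simp

theorem fiberInd_eq_one_iff {x₁ : P} {y₂ : Q × Q} {y₃ : R × R} :
    fiberInd A x₁ y₂ y₃ = 1 ↔ IsFiber₁ A x₁ y₂ y₃ := by
  unfold fiberInd
  split_ifs with h <;> simp [h]

theorem fiberInd_eq_zero {x₁ : P} {y₂ : Q × Q} {y₃ : R × R} (h : ¬ IsFiber₁ A x₁ y₂ y₃) :
    fiberInd A x₁ y₂ y₃ = 0 := if_neg h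

end DigitArray

namespace FiberedTiling

section Fibers

variable {P Q R : Type*} [Fintype P] [Fintype Q] [Fintype R] {A B : DigitArray P Q R}

theorem nonempty₁ (c : FiberedTiling A B) : Nonempty P := Fintype.card_pos_iff.1 c.prime₁.pos

theorem nonempty₂ (c : FiberedTiling A B) : Nonempty Q := Fintype.card_pos_iff.1 c.prime₂.pos

theorem nonempty₃ (c : FiberedTiling A B) : Nonempty R := Fintype.card_pos_iff.1 c.prime₃.pos

theorem isFiber₁_of_mem_grid (c : FiberedTiling A B) {x₁ : P} {x₂ : Q} {x₃ : R} {h₂ : Q} {h₃ : R}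
    (hfib : IsFiber₁ A x₁ (x₂, h₂) (x₃, h₃)) {k₁ : P} {k₂ : Q} {k₃ : R}
    (hA : A (x₁, k₁) (x₂, k₂) (x₃, k₃) = 1) : IsFiber₁ A x₁ (x₂, k₂) (x₃, k₃) := by
  rcases c.fibered x₁ x₂ x₃ with h | h | h
  · exact h _ _ _ hA
  · exact (c.not_isFiber₁₂ (x₁, k₁) (x₂, h₂) (x₃, h₃) hfib (h _ _ _ (hfib k₁))).elim
  · exact (c.not_isFiber₁₃ (x₁, k₁) (x₂, h₂) (x₃, h₃) hfib (h _ _ _ (hfib k₁))).elim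

theorem not_forall_fiberInd₂ (c : FiberedTiling A B) (x₁ : P) (x₂ : Q) (y₃ : R × R) :
    ¬ ∀ h₂, fiberInd A x₁ (x₂, h₂) y₃ = 1 := by
  simp only [fiberInd_eq_one_iff]
  intro h
  obtain ⟨a⟩ := c.nonempty₁
  obtain ⟨b⟩ := c.nonempty₂
  exact c.not_isFiber₁₂ (x₁, a) (x₂, b) y₃ (h b) fun h₂ => h h₂ a

theorem not_forall_fiberInd₃ (c : FiberedTiling A B) (x₁ : P) (y₂ : Q × Q) (x₃ : R) :
    ¬ ∀ h₃, fiberInd A x₁ y₂ (x₃, h₃) = 1 :=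
  c.swap₂₃.not_forall_fiberInd₂ x₁ x₃ y₂

theorem fiberSum_eq_card_mul_fiberInd (c : FiberedTiling A B) {x₁ : P} {y₂ : Q × Q} {y₃ : R × R}
    (h : ∀ h₁, A (x₁, h₁) y₂ y₃ = 1 → IsFiber₁ A x₁ y₂ y₃) :
    fiberSum A x₁ y₂ y₃ = Fintype.card P * fiberInd A x₁ y₂ y₃ := by
  unfold fiberSum
  by_cases hfib : IsFiber₁ A x₁ y₂ y₃
  · simp [fiberInd_eq_one_iff.2 hfib, hfib _]
  · simp [fiberInd_eq_zero hfib,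
      fun k => (c.left_zero_or_one (x₁, k) y₂ y₃).resolve_right (hfib ∘ h k)]

theorem fiberSum_eq_of_fibered₂ (c : FiberedTiling A B) {x₁ : P} {x₂ : Q} {y₃ : R × R}
    (h : ∀ h₁ h₂, A (x₁, h₁) (x₂, h₂) y₃ = 1 → IsFiber₂ A (x₁, h₁) x₂ y₃) (h₂ h₂' : Q) :
    fiberSum A x₁ (x₂, h₂) y₃ = fiberSum A x₁ (x₂, h₂') y₃ := by
  refine Finset.sum_congr rfl fun h₁ _ => ?_
  rcases c.left_zero_or_one (x₁, h₁) (x₂, h₂) y₃ with h0 | h1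
  · rcases c.left_zero_or_one (x₁, h₁) (x₂, h₂') y₃ with h0' | h1'
    · rw [h0, h0']
    · rw [h1', h _ _ h1' h₂]
  · rw [h1, h _ _ h1 h₂']

theorem isAddSeparable_fiberSum_sub_fiberInd (c : FiberedTiling A B) (x₁ : P) (x₂ : Q) (x₃ : R) :
    IsAddSeparable fun h₂ h₃ => fiberSum A x₁ (x₂, h₂) (x₃, h₃) -
      Fintype.card P * fiberInd A x₁ (x₂, h₂) (x₃, h₃) := by
  by_cases hfib : ∀ h₁ h₂ h₃, A (x₁, h₁) (x₂, h₂) (x₃, h₃) = 1 → IsFiber₁ A x₁ (x₂, h₂) (x₃, h₃)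
  · refine .of_const_left fun a a' b => ?_
    rw [c.fiberSum_eq_card_mul_fiberInd fun _ => hfib _ _ _,
      c.fiberSum_eq_card_mul_fiberInd fun _ => hfib _ _ _, sub_self, sub_self]
  · have hno : ∀ h₂ h₃, fiberInd A x₁ (x₂, h₂) (x₃, h₃) = 0 := fun h₂ h₃ =>
      fiberInd_eq_zero fun h => hfib fun _ _ _ => c.isFiber₁_of_mem_grid h
    simp only [hno, mul_zero, sub_zero]
    rcases (c.fibered x₁ x₂ x₃).resolve_left hfib with h | h
    · exact .of_const_left fun a a' b => c.fiberSum_eq_of_fibered₂ (fun _ _ => h _ _ _) a a'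
    · exact .of_const_right fun a b b' =>
        c.swap₂₃.fiberSum_eq_of_fibered₂ (fun _ _ => h _ _ _) b b'

theorem isAddSeparable_sum_fiberInd (c : FiberedTiling A B) (h : VanishesAt 0 2 2 A) (x₂ : Q)
    (x₃ : R) : IsAddSeparable fun h₂ h₃ => ∑ x₁, fiberInd A x₁ (x₂, h₂) (x₃, h₃) := by
  apply IsAddSeparable.of_mul_left (n := Fintype.card P) (by exact_mod_cast c.prime₁.ne_zero)
  intro a a' b b'
  have hcol := h.isAddSeparable_columnSum x₂ x₃ a a' b b'
  have hfib := IsAddSeparable.sum (fun x₁ => c.isAddSeparable_fiberSum_sub_fiberInd x₁ x₂ x₃)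
    a a' b b'
  simp only [columnSum_eq_sum_fiberSum, Finset.sum_sub_distrib, ← Finset.mul_sum] at hcol hfib
  linarith

theorem isAddSeparable_fiberInd_sub (c : FiberedTiling A B) (h : VanishesAt 1 2 2 A) (x₁ x₁' : P)
    (x₂ : Q) (x₃ : R) : IsAddSeparable fun h₂ h₃ =>
      fiberInd A x₁ (x₂, h₂) (x₃, h₃) - fiberInd A x₁' (x₂, h₂) (x₃, h₃) := by
  apply IsAddSeparable.of_mul_left (n := Fintype.card P) (by exact_mod_cast c.prime₁.ne_zero)
  intro a a' b b'
  have hsub := h.isAddSeparable_fiberSum_sub x₁ x₁' x₂ x₃ a a' b b'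
  have hfib := c.isAddSeparable_fiberSum_sub_fiberInd x₁ x₂ x₃ a a' b b'
  have hfib' := c.isAddSeparable_fiberSum_sub_fiberInd x₁' x₂ x₃ a a' b b'
  linarith

theorem not_isAddSeparable_sum_fiberInd (c : FiberedTiling A B) (hI : HasFiber₁ A)
    (h : VanishesAt 1 2 2 A) :
    ¬ ∀ x₂ x₃, IsAddSeparable fun h₂ h₃ => ∑ x₁, fiberInd A x₁ (x₂, h₂) (x₃, h₃) := by
  intro hsum
  obtain ⟨x₁, ⟨x₂, h₂⟩, ⟨x₃, h₃⟩, hfib⟩ := hI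
  have hind := fiberInd_eq_one_iff.2 hfib
  rcases (IsAddSeparable.of_sub_of_sum (fun i j => c.isAddSeparable_fiberInd_sub h i j x₂ x₃)
    (hsum x₂ x₃) x₁).const_left_or_const_right (fun _ _ => fiberInd_zero_or_one ..) with hc | hc
  · exact c.not_forall_fiberInd₂ x₁ x₂ (x₃, h₃) fun a => by rw [hc a h₂, hind]
  · exact c.not_forall_fiberInd₃ x₁ (x₂, h₂) x₃ fun a => by rw [hc h₂ a h₃, hind]

theorem not_vanishesAt_of_vanishesAt (c : FiberedTiling A B) (hI : HasFiber₁ A)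
    (h : VanishesAt 1 2 2 A) : ¬ VanishesAt 0 2 2 A := fun h0 =>
  c.not_isAddSeparable_sum_fiberInd hI h fun _ _ => c.isAddSeparable_sum_fiberInd h0 _ _

theorem exists_stacked_fibers (c : FiberedTiling A B) (hI : HasFiber₁ A) (h : VanishesAt 1 2 2 A) :
    ∃ x₁ x₁' y₂ y₃, x₁ ≠ x₁' ∧ IsFiber₁ A x₁ y₂ y₃ ∧ IsFiber₁ A x₁' y₂ y₃ := by
  have hsum := c.not_isAddSeparable_sum_fiberInd hI h
  push Not at hsum
  obtain ⟨x₂, x₃, hsum⟩ := hsum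
  obtain ⟨x₁, x₁', h₂, h₃, hne, hx, hx'⟩ := exists_overlapping_layers c.three_le₁
    (fun _ _ _ => fiberInd_zero_or_one ..) (fun i j => c.isAddSeparable_fiberInd_sub h i j x₂ x₃)
    hsum (fun _ _ => c.not_forall_fiberInd₂ _ _ _) (fun _ _ => c.not_forall_fiberInd₃ _ _ _)
  exact ⟨x₁, x₁', _, _, hne, fiberInd_eq_one_iff.1 hx, fiberInd_eq_one_iff.1 hx'⟩

theorem eq_of_mem_fiber₁ (c : FiberedTiling A B) (hI : HasFiber₁ A) {x₁ h₁ h₁' : P} {y₂ : Q × Q}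
    {y₃ : R × R} (hB : B (x₁, h₁) y₂ y₃ = 1) (hB' : B (x₁, h₁') y₂ y₃ = 1) : h₁ = h₁' := by
  by_contra hne
  obtain ⟨a, z₂, z₃, hA⟩ := hI
  obtain ⟨heq, -⟩ := c.sands (hA h₁) (hA h₁') hB hB' (.of_high hne hne) (.refl _ _) (.refl _ _)
  exact hne (congrArg Prod.snd heq)

theorem eq_of_mem_fiber₂ (c : FiberedTiling A B) (hJ : HasFiber₂ A) {y₁ : P × P} {x₂ h₂ h₂' : Q}
    {y₃ : R × R} (hB : B y₁ (x₂, h₂) y₃ = 1) (hB' : B y₁ (x₂, h₂') y₃ = 1) : h₂ = h₂' :=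
  c.swap₁₂.eq_of_mem_fiber₁ hJ.swap₁₂ hB hB'

theorem eq_of_mem_column (c : FiberedTiling A B) (hI : HasFiber₁ A) (h : VanishesAt 1 2 2 A)
    {y₁ y₁' : P × P} {y₂ : Q × Q} {y₃ : R × R} (hB : B y₁ y₂ y₃ = 1) (hB' : B y₁' y₂ y₃ = 1) :
    y₁ = y₁' := by
  obtain ⟨x, k⟩ := y₁
  obtain ⟨x', k'⟩ := y₁'
  have hx : x = x' := by
    by_contra hne
    obtain ⟨a, a', z₂, z₃, ha, hA, hA'⟩ := c.exists_stacked_fibers hI h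
    obtain ⟨heq, -⟩ := c.sands (hA k) (hA' k') hB hB' (.of_low ha hne) (.refl _ _) (.refl _ _)
    exact ha (congrArg Prod.fst heq)
  subst hx
  rw [c.eq_of_mem_fiber₁ hI hB hB']

theorem fiberSum_zero_or_one (c : FiberedTiling A B) (hI : HasFiber₁ A) (x₁ : P) (y₂ : Q × Q)
    (y₃ : R × R) : fiberSum B x₁ y₂ y₃ = 0 ∨ fiberSum B x₁ y₂ y₃ = 1 :=
  sum_eq_zero_or_one (fun _ => c.right_zero_or_one _ _ _) fun _ _ => c.eq_of_mem_fiber₁ hI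

theorem fiberSum_eq_one_iff (c : FiberedTiling A B) (hI : HasFiber₁ A) {x₁ : P} {y₂ : Q × Q}
    {y₃ : R × R} : fiberSum B x₁ y₂ y₃ = 1 ↔ ∃ h, B (x₁, h) y₂ y₃ = 1 :=
  sum_eq_one_iff_exists_eq_one (fun _ => c.right_zero_or_one _ _ _) fun _ _ =>
    c.eq_of_mem_fiber₁ hI

theorem not_forall_fiberSum₂ (c : FiberedTiling A B) (hI : HasFiber₁ A) (hJ : HasFiber₂ A)
    (hpq : Fintype.card P < Fintype.card Q) (x₁ : P) (x₂ : Q) (y₃ : R × R) :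
    ¬ ∀ h₂, fiberSum B x₁ (x₂, h₂) y₃ = 1 := by
  simp only [c.fiberSum_eq_one_iff hI]
  intro h
  choose g hg using h
  have hinj : Function.Injective g := fun a b hab => by
    have ha := hg a
    rw [hab] at ha
    exact c.eq_of_mem_fiber₂ hJ ha (hg b)
  exact hpq.not_ge (Fintype.card_le_of_injective g hinj)

theorem exists_right_eq_one (c : FiberedTiling A B) : ∃ y₁ y₂ y₃, B y₁ y₂ y₃ = 1 := by
  by_contra! h
  have hsum := c.sum_right
  simp only [fun y₁ y₂ y₃ => (c.right_zero_or_one y₁ y₂ y₃).resolve_right (h y₁ y₂ y₃),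
    Finset.sum_const_zero] at hsum
  have hpos : 0 < Fintype.card P * Fintype.card Q * Fintype.card R :=
    Nat.mul_pos (Nat.mul_pos c.prime₁.pos c.prime₂.pos) c.prime₃.pos
  exact hpos.ne (by exact_mod_cast hsum)

end Fibers

end FiberedTiling

namespace DigitArray

variable {P Q R : Type*}

/-- Every point of the fiber in the second direction through `(x₂, y₃)` lies under some full fiber
in the first direction contained in `A`. -/
def IsFiberOfFibers (A : DigitArray P Q R) (x₂ : Q) (y₃ : R × R) : Prop :=
  ∀ h₂, ∃ x₁, IsFiber₁ A x₁ (x₂, h₂) y₃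

/-- The set with indicator `B` contains two points which differ in the high digit of the second
coordinate and otherwise at most in the high digit of the first coordinate. -/
def HasTwistedPair (B : DigitArray P Q R) : Prop :=
  ∃ x₁ h₁ h₁' x₂ h₂ h₂' y₃, h₂ ≠ h₂' ∧ B (x₁, h₁) (x₂, h₂) y₃ = 1 ∧ B (x₁, h₁') (x₂, h₂') y₃ = 1

/-- The number of points of the set with indicator `B` on a fiber in the first direction does not
depend on the low digit of the first coordinate. -/
def UniformFiberSums [Fintype P] (B : DigitArray P Q R) : Prop :=
  ∀ x₁ x₁' y₂ y₃, fiberSum B x₁ y₂ y₃ = fiberSum B x₁' y₂ y₃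

end DigitArray

namespace FiberedTiling

section FirstDirection

variable {P Q R : Type*} [Fintype P] [Fintype Q] [Fintype R] {A B : DigitArray P Q R}

theorem vanishesAt_right (c : FiberedTiling A B) (hI : HasFiber₁ A) :
    VanishesAt 0 2 2 B ∨ VanishesAt 1 2 2 B := by
  rcases c.vanishesAt 0 2 2 (by omega) (by omega) (by omega) (by omega) with h0 | h0
  · exact Or.inr ((c.vanishesAt 1 2 2 (by omega) (by omega) (by omega) (by omega)).resolve_left
      fun h1 => c.not_vanishesAt_of_vanishesAt hI h1 h0)
  · exact Or.inl h0

theorem not_vanishesAt_right_of_lt (c : FiberedTiling A B) (hI : HasFiber₁ A) (hJ : HasFiber₂ A)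
    (hK : HasFiber₃ A) (hpq : Fintype.card P < Fintype.card Q)
    (hpr : Fintype.card P < Fintype.card R) (h : VanishesAt 1 2 2 B) : ¬ VanishesAt 0 2 2 B := by
  intro h0
  obtain ⟨⟨x₁, h₁⟩, ⟨x₂, h₂⟩, ⟨x₃, h₃⟩, hB⟩ := c.exists_right_eq_one
  have hsum := h0.isAddSeparable_columnSum x₂ x₃
  simp only [columnSum_eq_sum_fiberSum] at hsum
  have hone : fiberSum B x₁ (x₂, h₂) (x₃, h₃) = 1 := (c.fiberSum_eq_one_iff hI).2 ⟨_, hB⟩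
  rcases (IsAddSeparable.of_sub_of_sum (fun i j => h.isAddSeparable_fiberSum_sub i j x₂ x₃)
    hsum x₁).const_left_or_const_right (fun _ _ => c.fiberSum_zero_or_one hI _ _ _) with hc | hc
  · exact c.not_forall_fiberSum₂ hI hJ hpq x₁ x₂ (x₃, h₃) fun a => by rw [hc a h₂, hone]
  · exact c.swap₂₃.not_forall_fiberSum₂ hI.swap₂₃ hK.swap₂₃ hpr x₁ x₃ (x₂, h₂) fun a =>
      (hc h₂ a h₃).trans hone

theorem hasTwistedPair (c : FiberedTiling A B) (hI : HasFiber₁ A) (hK : HasFiber₃ A)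
    (hpr : Fintype.card P < Fintype.card R) (h : VanishesAt 1 2 2 B) (huni : ¬ UniformFiberSums B) :
    HasTwistedPair B := by
  obtain ⟨x₁, x₁', ⟨x₂, h₂⟩, ⟨x₃, h₃⟩, hone, hzero⟩ :
      ∃ x₁ x₁' y₂ y₃, fiberSum B x₁ y₂ y₃ = 1 ∧ fiberSum B x₁' y₂ y₃ = 0 := by
    by_contra! hcon
    refine huni fun x₁ x₁' y₂ y₃ => ?_
    have := hcon x₁ x₁' y₂ y₃
    have := hcon x₁' x₁ y₂ y₃
    have := c.fiberSum_zero_or_one hI x₁ y₂ y₃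
    have := c.fiberSum_zero_or_one hI x₁' y₂ y₃
    omega
  obtain ⟨k₃, hk₃⟩ := not_forall.1
    (c.swap₂₃.not_forall_fiberSum₂ hI.swap₂₃ hK.swap₂₃ hpr x₁ x₃ (x₂, h₂))
  have hcover := (h.isAddSeparable_fiberSum_sub x₁ x₁' x₂ x₃).eq_one_or_eq_one
    (fun _ _ => c.fiberSum_zero_or_one hI _ _ _) (fun _ _ => c.fiberSum_zero_or_one hI _ _ _)
    hone hzero hk₃
  classical
  -- The `q ≥ 3` values of the high digit are distributed over two sets.
  obtain ⟨a, a', hne, hside⟩ := Fintype.exists_ne_map_eq_of_card_lt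
    (fun d => decide (fiberSum B x₁ (x₂, d) (x₃, h₃) = 1))
    (by simpa [Nat.lt_iff_add_one_le] using c.three_le₂)
  simp only [decide_eq_decide] at hside
  have hpair : ∀ {x y₃}, fiberSum B x (x₂, a) y₃ = 1 → fiberSum B x (x₂, a') y₃ = 1 →
      HasTwistedPair B := fun ha ha' => by
    obtain ⟨k, hk⟩ := (c.fiberSum_eq_one_iff hI).1 ha
    obtain ⟨k', hk'⟩ := (c.fiberSum_eq_one_iff hI).1 ha'
    exact ⟨_, _, _, _, _, _, _, hne, hk, hk'⟩
  by_cases ha : fiberSum B x₁ (x₂, a) (x₃, h₃) = 1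
  · exact hpair ha (hside.1 ha)
  · exact hpair ((hcover a).resolve_left ha) ((hcover a').resolve_left fun ha' => ha (hside.2 ha'))

theorem eq_of_hasTwistedPair (c : FiberedTiling A B) (hJ : HasFiber₂ A) (hB : HasTwistedPair B)
    {x₁ : P} {x₂ h₂ h₂' : Q} {y₃ : R × R} (h : IsFiber₁ A x₁ (x₂, h₂) y₃)
    (h' : IsFiber₁ A x₁ (x₂, h₂') y₃) : h₂ = h₂' := by
  obtain ⟨z₁, k, k', z₂, a, a', z₃, ha, hBk, hBk'⟩ := hB
  have hk : k ≠ k' := by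
    rintro rfl
    exact ha (c.eq_of_mem_fiber₂ hJ hBk hBk')
  by_contra hne
  obtain ⟨-, heq, -⟩ := c.sands (h k) (h' k') hBk hBk' (.of_high hk hk) (.of_high hne ha)
    (.refl _ _)
  exact hne (congrArg Prod.snd heq)

theorem card_le_of_isFiberOfFibers (c : FiberedTiling A B) (hJ : HasFiber₂ A)
    (hB : HasTwistedPair B) {x₂ : Q} {y₃ : R × R} (hA : IsFiberOfFibers A x₂ y₃) :
    Fintype.card Q ≤ Fintype.card P := by
  choose g hg using hA
  refine Fintype.card_le_of_injective g fun a b hab => ?_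
  have ha := hg a
  rw [hab] at ha
  exact c.eq_of_hasTwistedPair hJ hB ha (hg b)

theorem exists_isFiberOfFibers (c : FiberedTiling A B) (hI : HasFiber₁ A)
    (h : VanishesAt 0 2 2 A) :
    (∃ x₂ y₃, IsFiberOfFibers A x₂ y₃) ∨ ∃ x₃ y₂, IsFiberOfFibers (swap₂₃ A) x₃ y₂ := by
  obtain ⟨x₁, ⟨x₂, h₂⟩, ⟨x₃, h₃⟩, hA⟩ := hI
  have hnonneg : ∀ x y₂ y₃, 0 ≤ fiberInd A x y₂ y₃ := fun x y₂ y₃ => by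
    rcases fiberInd_zero_or_one A x y₂ y₃ with h | h <;> simp [h]
  have hex : ∀ {y₂ y₃}, 0 < ∑ x, fiberInd A x y₂ y₃ → ∃ x, IsFiber₁ A x y₂ y₃ := by
    intro y₂ y₃
    contrapose!
    intro hno
    simp [fun x => fiberInd_eq_zero (hno x)]
  have hpos : 0 < ∑ x, fiberInd A x (x₂, h₂) (x₃, h₃) :=
    Finset.sum_pos' (fun _ _ => hnonneg _ _ _)
      ⟨x₁, Finset.mem_univ _, by simp [fiberInd_eq_one_iff.2 hA]⟩
  rcases (c.isAddSeparable_sum_fiberInd h x₂ x₃).exists_forall_pos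
    (fun _ _ => Finset.sum_nonneg fun _ _ => hnonneg _ _ _) hpos.ne' with ⟨a, ha⟩ | ⟨b, hb⟩
  · exact Or.inr ⟨x₃, (x₂, a), fun b => hex (ha b)⟩
  · exact Or.inl ⟨x₂, (x₃, b), fun a => hex (hb a)⟩

theorem uniformFiberSums (c : FiberedTiling A B) (hI : HasFiber₁ A) (hJ : HasFiber₂ A)
    (hK : HasFiber₃ A) (hpq : Fintype.card P < Fintype.card Q)
    (hpr : Fintype.card P < Fintype.card R) (hA : VanishesAt 0 2 2 A) (hB : VanishesAt 1 2 2 B) :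
    UniformFiberSums B := by
  by_contra huni
  rcases c.exists_isFiberOfFibers hI hA with ⟨x₂, y₃, h⟩ | ⟨x₃, y₂, h⟩
  · exact hpq.not_ge (c.card_le_of_isFiberOfFibers hJ (c.hasTwistedPair hI hK hpr hB huni) h)
  · have huni' : ¬ UniformFiberSums (swap₂₃ B) := fun hu => huni fun _ _ _ _ => hu _ _ _ _
    exact hpr.not_ge (c.swap₂₃.card_le_of_isFiberOfFibers hK.swap₂₃
      (c.swap₂₃.hasTwistedPair hI.swap₂₃ hJ.swap₂₃ hpq hB.swap₂₃ huni') h)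

theorem isAddSeparable_fiberSum_of_concentrated (c : FiberedTiling A B) (hI : HasFiber₁ A) {u : P}
    {x₂ : Q} {x₃ : R} (hu : ∀ u' h₂ h₃, fiberSum B u' (x₂, h₂) (x₃, h₃) = 1 → u' = u) :
    IsAddSeparable fun h₂ h₃ => fiberSum B u (x₂, h₂) (x₃, h₃) := by
  have hzero : ∀ u', u' ≠ u → ∀ h₂ h₃, fiberSum B u' (x₂, h₂) (x₃, h₃) = 0 :=
    fun u' hne h₂ h₃ => (c.fiberSum_zero_or_one hI _ _ _).resolve_right fun h => hne (hu _ _ _ h)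
  rcases c.vanishesAt_right hI with h | h
  · have hsum := h.isAddSeparable_columnSum x₂ x₃
    simp only [columnSum_eq_sum_fiberSum] at hsum
    have hsingle : ∀ h₂ h₃, ∑ x₁, fiberSum B x₁ (x₂, h₂) (x₃, h₃) =
        fiberSum B u (x₂, h₂) (x₃, h₃) := fun h₂ h₃ =>
      Finset.sum_eq_single u (fun u' _ hne => hzero u' hne h₂ h₃) (by simp)
    simpa only [hsingle] using hsum
  · obtain ⟨u', hne⟩ := exists_ne_of_three_le c.three_le₁ u
    simpa only [hzero u' hne, sub_zero] using h.isAddSeparable_fiberSum_sub u u' x₂ x₃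

end FirstDirection

end FiberedTiling

namespace DigitArray

variable {P Q R : Type*}

/-- The shadow of the set with indicator `B` meets each fiber in the second direction at most
once. -/
def ShadowThin₂ (B : DigitArray P Q R) : Prop :=
  ∀ x₂ h h' y₃, Shadow B (x₂, h) y₃ → Shadow B (x₂, h') y₃ → h = h'

/-- In the shadow of the set with indicator `B`, the low digit of the second coordinate determines
the low digit of the third one. -/
def LowDetermined (B : DigitArray P Q R) : Prop :=
  ∀ x₂ h h' y₃ y₃', Shadow B (x₂, h) y₃ → Shadow B (x₂, h') y₃' → y₃.1 = y₃'.1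

end DigitArray

namespace FiberedTiling

section Uniform

variable {P Q R : Type*} [Fintype P] [Fintype Q] [Fintype R] {A B : DigitArray P Q R}

theorem shadow_of_fiberSum_eq_one (c : FiberedTiling A B) (hI : HasFiber₁ A) {x₁ : P} {y₂ : Q × Q}
    {y₃ : R × R} (h : fiberSum B x₁ y₂ y₃ = 1) : Shadow B y₂ y₃ :=
  let ⟨k, hk⟩ := (c.fiberSum_eq_one_iff hI).1 h
  ⟨(x₁, k), hk⟩

theorem exists_mem_of_shadow (c : FiberedTiling A B) (hI : HasFiber₁ A) (huni : UniformFiberSums B)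
    {y₂ : Q × Q} {y₃ : R × R} (h : Shadow B y₂ y₃) (x₁ : P) : ∃ k, B (x₁, k) y₂ y₃ = 1 := by
  obtain ⟨⟨x, k⟩, hB⟩ := h
  rw [← c.fiberSum_eq_one_iff hI, huni x₁ x]
  exact (c.fiberSum_eq_one_iff hI).2 ⟨k, hB⟩

theorem sum_fiberSum_of_uniform (c : FiberedTiling A B) (huni : UniformFiberSums B) (x₁ : P) :
    ∑ y₂, ∑ y₃, fiberSum B x₁ y₂ y₃ = (Fintype.card Q : ℤ) * Fintype.card R := by
  have htotal : ∑ y₁, ∑ y₂, ∑ y₃, B y₁ y₂ y₃ = ∑ x, ∑ y₂, ∑ y₃, fiberSum B x y₂ y₃ := by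
    rw [Fintype.sum_prod_type]
    refine Finset.sum_congr rfl fun x _ => ?_
    rw [Finset.sum_comm]
    refine Finset.sum_congr rfl fun y₂ _ => ?_
    rw [Finset.sum_comm]
    rfl
  have hsum := c.sum_right
  simp only [htotal, huni _ x₁, Finset.sum_const, Finset.card_univ, nsmul_eq_mul, mul_assoc] at hsum
  exact mul_left_cancel₀ (by exact_mod_cast c.prime₁.ne_zero) hsum

theorem sum_layer_fiberSum (c : FiberedTiling A B) (hI : HasFiber₁ A) (huni : UniformFiberSums B)
    (hfiber : ShadowThin₂ B) (hlow : LowDetermined B) (x₁ : P) (x₂ : Q) :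
    ∑ h, ∑ y₃, fiberSum B x₁ (x₂, h) y₃ = Fintype.card R := by
  have hle : ∀ x₂, ∑ h, ∑ y₃, fiberSum B x₁ (x₂, h) y₃ ≤ Fintype.card R := fun x₂ => by
    rw [← Fintype.sum_prod_type' fun h y₃ => fiberSum B x₁ (x₂, h) y₃]
    refine sum_le_card_of_injOn (fun _ => c.fiberSum_zero_or_one hI _ _ _) (fun z => z.2.2) ?_
    rintro ⟨h, u, k⟩ hz ⟨h', u', k'⟩ hz' (rfl : k = k')
    have hs := c.shadow_of_fiberSum_eq_one hI hz
    have hs' := c.shadow_of_fiberSum_eq_one hI hz'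
    obtain rfl : u = u' := hlow _ _ _ _ _ hs hs'
    obtain rfl : h = h' := hfiber _ _ _ _ hs hs'
    rfl
  have hsum := c.sum_fiberSum_of_uniform huni x₁
  rw [Fintype.sum_prod_type] at hsum
  exact (Finset.sum_eq_sum_iff_of_le fun x₂ _ => hle x₂).1 (by simpa using hsum) x₂
    (Finset.mem_univ _)

theorem exists_shadow_layer (c : FiberedTiling A B) (hI : HasFiber₁ A) {x₁ : P} {x₂ : Q}
    (hlayer : ∑ h, ∑ y₃, fiberSum B x₁ (x₂, h) y₃ = Fintype.card R) :
    ∃ h y₃, Shadow B (x₂, h) y₃ := by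
  by_contra! hno
  have hzero : ∀ h y₃, fiberSum B x₁ (x₂, h) y₃ = 0 := fun h y₃ =>
    (c.fiberSum_zero_or_one hI _ _ _).resolve_right fun hone =>
      hno h y₃ (c.shadow_of_fiberSum_eq_one hI hone)
  simp only [hzero, Finset.sum_const_zero] at hlayer
  exact c.prime₃.ne_zero (by exact_mod_cast hlayer.symm)

theorem not_lowDetermined_of_shadowThin₂ (c : FiberedTiling A B) (hI : HasFiber₁ A)
    (hK : HasFiber₃ A) (huni : UniformFiberSums B) (hfiber : ShadowThin₂ B) :
    ¬ LowDetermined B := by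
  intro hlow
  obtain ⟨x₁⟩ := c.nonempty₁
  obtain ⟨x₂⟩ := c.nonempty₂
  have hlayer := c.sum_layer_fiberSum hI huni hfiber hlow x₁ x₂
  obtain ⟨h, ⟨u, k⟩, hs⟩ := c.exists_shadow_layer hI hlayer
  have c' := c.swap₂₃.swap₁₂
  have hK' : HasFiber₁ (swap₁₂ (swap₂₃ A)) := hK.swap₂₃.swap₁₂
  have hu : ∀ u' h₁ h₂, fiberSum (swap₁₂ (swap₂₃ B)) u' (x₁, h₁) (x₂, h₂) = 1 → u' = u :=
    fun u' h₁ h₂ hone => by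
      obtain ⟨h₃, hB⟩ := (c'.fiberSum_eq_one_iff hK').1 hone
      exact hlow _ _ _ _ _ ⟨_, hB⟩ hs
  have hsum : ∑ h₁, ∑ h₂, fiberSum (swap₁₂ (swap₂₃ B)) u (x₁, h₁) (x₂, h₂) = Fintype.card R := by
    rw [← hlayer, Finset.sum_comm]
    refine Finset.sum_congr rfl fun h₂ _ => ?_
    rw [Fintype.sum_prod_type, Finset.sum_eq_single u]
    · simp only [fiberSum]
      exact Finset.sum_comm
    · exact fun u' _ hne => Finset.sum_eq_zero fun h₃ _ =>
        (c.fiberSum_zero_or_one hI _ _ _).resolve_right fun hone =>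
          hne (hlow _ _ _ _ _ (c.shadow_of_fiberSum_eq_one hI hone) hs)
    · simp
  rcases (c'.isAddSeparable_fiberSum_of_concentrated hK' hu).card_dvd_sum_or
    (fun _ _ => c'.fiberSum_zero_or_one hK' _ _ _) with hdvd | hdvd
  · rw [hsum] at hdvd
    exact c.card_ne₁₃ ((Nat.prime_dvd_prime_iff_eq c.prime₁ c.prime₃).1 (by exact_mod_cast hdvd))
  · rw [hsum] at hdvd
    exact c.card_ne₂₃ ((Nat.prime_dvd_prime_iff_eq c.prime₂ c.prime₃).1 (by exact_mod_cast hdvd))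

theorem card_le_card_of_lowDetermined_swap₂₃ (c : FiberedTiling A B) (hI : HasFiber₁ A)
    (huni : UniformFiberSums B) (hfiber : ShadowThin₂ B) (hlow : LowDetermined (swap₂₃ B)) :
    Fintype.card Q ≤ Fintype.card R := by
  obtain ⟨x₁⟩ := c.nonempty₁
  have hle : ∑ z : (Q × Q) × (R × R), fiberSum B x₁ z.1 z.2 ≤ Fintype.card (R × R) := by
    refine sum_le_card_of_injOn (fun _ => c.fiberSum_zero_or_one hI _ _ _) (fun z => z.2) ?_
    rintro ⟨⟨x₂, h⟩, y₃⟩ hz ⟨⟨x₂', h'⟩, y₃'⟩ hz' (rfl : y₃ = y₃')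
    have hs := c.shadow_of_fiberSum_eq_one hI hz
    have hs' := c.shadow_of_fiberSum_eq_one hI hz'
    obtain rfl : x₂ = x₂' := hlow _ _ _ _ _ hs hs'
    rw [hfiber _ _ _ _ hs hs']
  rw [Fintype.sum_prod_type, c.sum_fiberSum_of_uniform huni x₁, Fintype.card_prod] at hle
  exact Nat.le_of_mul_le_mul_right (by exact_mod_cast hle) c.prime₃.pos

theorem not_lowDetermined_swap₂₃_of_shadowThin₂ (c : FiberedTiling A B) (hI : HasFiber₁ A)
    (hJ : HasFiber₂ A) (hK : HasFiber₃ A) (huni : UniformFiberSums B) (hfiber : ShadowThin₂ B) :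
    ¬ LowDetermined (swap₂₃ B) := by
  intro hlow
  obtain ⟨⟨x₁, h₁⟩, ⟨x₂, h₂⟩, ⟨x₃, h₃⟩, hB⟩ := c.exists_right_eq_one
  have c' := c.swap₁₂
  have hJ' := hJ.swap₁₂
  have hu : ∀ u h₁ h₃, fiberSum (swap₁₂ B) u (x₁, h₁) (x₃, h₃) = 1 → u = x₂ :=
    fun u h₁ h₃ hone => by
      obtain ⟨h₂, hB'⟩ := (c'.fiberSum_eq_one_iff hJ').1 hone
      exact hlow _ _ _ _ _ ⟨_, hB'⟩ ⟨_, hB⟩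
  have hone : fiberSum (swap₁₂ B) x₂ (x₁, h₁) (x₃, h₃) = 1 :=
    (c'.fiberSum_eq_one_iff hJ').2 ⟨_, hB⟩
  rcases (c'.isAddSeparable_fiberSum_of_concentrated hJ' hu).const_left_or_const_right
    (fun _ _ => c'.fiberSum_zero_or_one hJ' _ _ _) with hc | hc
  · obtain ⟨k, hne⟩ := exists_ne_of_three_le c.three_le₁ h₁
    obtain ⟨a, ha⟩ := (c'.fiberSum_eq_one_iff hJ').1 ((hc k h₁ h₃).trans hone)
    obtain rfl : a = h₂ := hfiber _ _ _ _ ⟨_, ha⟩ ⟨_, hB⟩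
    exact hne (c.eq_of_mem_fiber₁ hI ha hB)
  · have hfull : ∀ k, fiberSum (swap₁₂ B) x₂ (x₁, h₁) (x₃, k) = 1 := fun k =>
      (hc h₁ k h₃).trans hone
    have hle := c.card_le_card_of_lowDetermined_swap₂₃ hI huni hfiber hlow
    exact c'.swap₂₃.not_forall_fiberSum₂ hJ'.swap₂₃ hK.swap₁₂.swap₂₃
      (lt_of_le_of_ne hle c.card_ne₂₃) x₂ x₃ (x₁, h₁) hfull

theorem sands_of_shadow (c : FiberedTiling A B) (hI : HasFiber₁ A) (huni : UniformFiberSums B)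
    {x₁ : P} {y₂ : Q × Q} {y₃ : R × R} (hfib : IsFiber₁ A x₁ y₂ y₃) {y₁' : P × P} {y₂' : Q × Q}
    {y₃' : R × R} (hA : A y₁' y₂' y₃' = 1) {z₂ z₂' : Q × Q} {z₃ z₃' : R × R} (hz : Shadow B z₂ z₃)
    (hz' : Shadow B z₂' z₃') (h₂ : SameGap y₂ y₂' z₂ z₂') (h₃ : SameGap y₃ y₃' z₃ z₃') :
    x₁ = y₁'.1 ∧ y₂ = y₂' ∧ y₃ = y₃' := by
  obtain ⟨x₁', h₁'⟩ := y₁'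
  obtain ⟨k, hk⟩ := c.exists_mem_of_shadow hI huni hz x₁
  obtain ⟨k', hk'⟩ := c.exists_mem_of_shadow hI huni hz' x₁'
  obtain ⟨h₁, h₁gap⟩ : ∃ h₁, SameGap (x₁, h₁) (x₁', h₁') (x₁, k) (x₁', k') := by
    by_cases hx : x₁ = x₁'
    · subst hx
      exact SameGap.exists_high c.three_le₁ x₁ h₁' x₁ k k'
    · exact ⟨h₁', .of_low hx hx⟩
  obtain ⟨heq, heq₂₃⟩ := c.sands (hfib h₁) hA hk hk' h₁gap h₂ h₃
  exact ⟨congrArg Prod.fst heq, heq₂₃⟩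

theorem eq_of_shadow_fiber₂ (c : FiberedTiling A B) (hI : HasFiber₁ A) (huni : UniformFiberSums B)
    {x₂ : Q} {y₃ : R × R} (hfib : IsFiberOfFibers A x₂ y₃) {z₂ h h' : Q} {z₃ : R × R}
    (hz : Shadow B (z₂, h) z₃) (hz' : Shadow B (z₂, h') z₃) : h = h' := by
  by_contra hne
  obtain ⟨x₁, hx₁⟩ := hfib h
  obtain ⟨x₁', hx₁'⟩ := hfib h'
  obtain ⟨-, heq, -⟩ := c.sands_of_shadow hI huni hx₁ (hx₁' x₁) hz hz' (.of_high hne hne)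
    (.refl _ _)
  exact hne (congrArg Prod.snd heq)

theorem low₃_eq_of_shadow (c : FiberedTiling A B) (hI : HasFiber₁ A) (huni : UniformFiberSums B)
    {x₂ h₂ : Q} {y₃ : R × R} (hfib : IsFiberOfFibers A x₂ y₃) {y₁' : P × P} {y₃' : R × R}
    (hA : A y₁' (x₂, h₂) y₃' = 1) (hne : y₃.1 ≠ y₃'.1) {z₂ h h' : Q} {z₃ z₃' : R × R}
    (hz : Shadow B (z₂, h) z₃) (hz' : Shadow B (z₂, h') z₃') : z₃.1 = z₃'.1 := by
  by_contra hz₃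
  obtain ⟨k, hk⟩ := SameGap.exists_high c.three_le₂ x₂ h₂ z₂ h h'
  obtain ⟨x₁, hx₁⟩ := hfib k
  obtain ⟨-, -, heq⟩ := c.sands_of_shadow hI huni hx₁ hA hz hz' hk (.of_low hne hz₃)
  exact hne (congrArg Prod.fst heq)

theorem low₂_eq_of_shadow (c : FiberedTiling A B) (hI : HasFiber₁ A) (huni : UniformFiberSums B)
    {x₂ : Q} {x₃ h₃ : R} (hfib : IsFiberOfFibers A x₂ (x₃, h₃)) {y₁' : P × P} {y₂' : Q × Q}
    (hA : IsFiber₃ A y₁' y₂' x₃) (hne : x₂ ≠ y₂'.1) {z₂ z₂' : Q × Q} {z₃ h h' : R}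
    (hz : Shadow B z₂ (z₃, h)) (hz' : Shadow B z₂' (z₃, h')) : z₂.1 = z₂'.1 := by
  by_contra hz₂
  obtain ⟨k, hk⟩ := SameGap.exists_high c.three_le₃ x₃ h₃ z₃ h' h
  obtain ⟨x₁, hx₁⟩ := hfib x₂
  obtain ⟨-, heq, -⟩ := c.sands_of_shadow hI huni hx₁ (hA k) hz hz' (.of_low hne hz₂) hk.symm
  exact hne (congrArg Prod.fst heq)

theorem low₂_eq_or_low₃_eq_of_shadow (c : FiberedTiling A B) (hI : HasFiber₁ A)
    (huni : UniformFiberSums B) {x₂ : Q} {y₃ : R × R} (hfib : IsFiberOfFibers A x₂ y₃)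
    {y₁' : P × P} {y₂' : Q × Q} {y₃' : R × R} (hA : A y₁' y₂' y₃' = 1) (hne₂ : x₂ ≠ y₂'.1)
    (hne₃ : y₃.1 ≠ y₃'.1) {z₂ z₂' : Q × Q} {z₃ z₃' : R × R} (hz : Shadow B z₂ z₃)
    (hz' : Shadow B z₂' z₃') : z₂.1 = z₂'.1 ∨ z₃.1 = z₃'.1 := by
  by_contra! ⟨hz₂, hz₃⟩
  obtain ⟨x₁, hx₁⟩ := hfib x₂
  obtain ⟨-, heq, -⟩ := c.sands_of_shadow hI huni hx₁ hA hz hz' (.of_low hne₂ hz₂)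
    (.of_low hne₃ hz₃)
  exact hne₂ (congrArg Prod.fst heq)

theorem not_isFiberOfFibers_of_uniform (c : FiberedTiling A B) (hI : HasFiber₁ A)
    (hJ : HasFiber₂ A) (hK : HasFiber₃ A) (huni : UniformFiberSums B) (x₂ : Q) (y₃ : R × R) :
    ¬ IsFiberOfFibers A x₂ y₃ := by
  intro hfib
  have hfiber : ShadowThin₂ B := fun _ _ _ _ => c.eq_of_shadow_fiber₂ hI huni hfib
  have hlow₃ := c.not_lowDetermined_of_shadowThin₂ hI hK huni hfiber
  have hlow₂ := c.not_lowDetermined_swap₂₃_of_shadowThin₂ hI hJ hK huni hfiber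
  obtain ⟨x₃, h₃⟩ := y₃
  obtain ⟨y₁, ⟨w₂, k⟩, w₃, hA⟩ := hK
  by_cases e₂ : x₂ = w₂ <;> by_cases e₃ : x₃ = w₃
  · subst e₂ e₃
    obtain ⟨x₁, hx₁⟩ := hfib k
    obtain ⟨z₁, z₂, z₃, hB⟩ := c.exists_right_eq_one
    obtain ⟨rfl, -⟩ := c.sands_of_shadow hI huni hx₁ (hA h₃) ⟨z₁, hB⟩ ⟨z₁, hB⟩ (.refl _ z₂)
      (.refl _ z₃)
    exact c.not_isFiber₁₃ y₁ (x₂, k) (x₃, h₃) hx₁ hA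
  · subst e₂
    exact hlow₃ fun _ _ _ _ _ => c.low₃_eq_of_shadow hI huni hfib (hA h₃) e₃
  · subst e₃
    exact hlow₂ fun _ _ _ _ _ => c.low₂_eq_of_shadow hI huni hfib hA e₂
  · rcases forall_eq_or_forall_eq_of_pairwise (E := fun z u => ∃ a k, Shadow B (z, a) (u, k))
      (fun _ _ _ _ ⟨_, _, hz⟩ ⟨_, _, hz'⟩ =>
        c.low₂_eq_or_low₃_eq_of_shadow hI huni hfib (hA h₃) e₂ e₃ hz hz') with h | h
    · exact hlow₂ fun _ _ _ _ _ hz hz' => h _ _ _ _ ⟨_, _, hz⟩ ⟨_, _, hz'⟩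
    · exact hlow₃ fun _ _ _ _ _ hz hz' => h _ _ _ _ ⟨_, _, hz⟩ ⟨_, _, hz'⟩

theorem not_vanishesAt_of_uniform (c : FiberedTiling A B) (hI : HasFiber₁ A) (hJ : HasFiber₂ A)
    (hK : HasFiber₃ A) (huni : UniformFiberSums B) : ¬ VanishesAt 0 2 2 A := by
  intro hA
  rcases c.exists_isFiberOfFibers hI hA with ⟨x₂, y₃, h⟩ | ⟨x₃, y₂, h⟩
  · exact c.not_isFiberOfFibers_of_uniform hI hJ hK huni x₂ y₃ h
  · exact c.swap₂₃.not_isFiberOfFibers_of_uniform hI.swap₂₃ hK.swap₂₃ hJ.swap₂₃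
      (fun _ _ _ _ => huni _ _ _ _) x₃ y₂ h

end Uniform

end FiberedTiling

theorem eq_zero_of_dvd_mul_of_abs_lt {m n x : ℤ} (hmn : IsCoprime m n) (h : m ∣ n * x)
    (hx : |x| < m) : x = 0 :=
  Int.eq_zero_of_abs_lt_dvd (hmn.dvd_of_dvd_mul_left h) hx

theorem IsAddSeparable.eq_of_sum_eq {X Y : Type*} [Fintype X] {f : X → Y → ℤ}
    (hf : IsAddSeparable f) {b b' : Y} (hsum : ∑ a, f a b = ∑ a, f a b') (a : X) :
    f a b = f a b' := by
  have : Nonempty X := ⟨a⟩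
  have hconst : ∀ x, f x b - f x b' = f a b - f a b' := fun x => by
    have := hf a x b b'
    omega
  rw [← sub_eq_zero, ← Finset.sum_sub_distrib, Finset.sum_congr rfl fun x _ => hconst x] at hsum
  simpa [sub_eq_zero] using hsum

theorem SameGap.exists_left {P : Type*} [Fintype P] (hP : 3 ≤ Fintype.card P) :
    ∀ y z z' : P × P, ∃ y', SameGap y' y z z'
  | (x, h), (w, k), (w', k') => by
    by_cases hw : w = w'
    · subst hw
      exact (exists_high hP x h w k k').imp' (x, ·) fun _ => id
    · obtain ⟨x', hx'⟩ := exists_ne_of_three_le hP x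
      exact ⟨(x', h), .of_low hx' hw⟩

namespace DigitArray

variable {P Q R : Type*} [Fintype P]

/-- The number of points of the set with indicator `F` above a fiber in the third direction. -/
def stripSum [Fintype R] (F : DigitArray P Q R) (y₂ : Q × Q) (x₃ : R) : ℤ :=
  ∑ h₃, columnSum F y₂ (x₃, h₃)

/-- The number of points of the set with indicator `F` with given low digits in the last two
coordinates. -/
def gridSum [Fintype Q] [Fintype R] (F : DigitArray P Q R) (x₂ : Q) (x₃ : R) : ℤ :=
  ∑ h₂, stripSum F (x₂, h₂) x₃

/-- The number of points of the set with indicator `F` with given second coordinate. -/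
def layerSum [Fintype R] (F : DigitArray P Q R) (y₂ : Q × Q) : ℤ := ∑ y₃, columnSum F y₂ y₃

/-- The layer sums in the second direction depend on the low digit only. -/
def IsBalanced [Fintype R] (F : DigitArray P Q R) : Prop :=
  ∀ x₂ h h', layerSum F (x₂, h) = layerSum F (x₂, h')

/-- A weak form of `IsBalanced`: the layer sums are at most `p ^ 2`, and modulo `p` they depend on
the low digit only. -/
def IsNearlyBalanced [Fintype R] (F : DigitArray P Q R) : Prop :=
  (∀ x₂ h h', (Fintype.card P : ℤ) ∣ layerSum F (x₂, h) - layerSum F (x₂, h')) ∧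
    ∀ y₂, layerSum F y₂ ≤ Fintype.card P * Fintype.card P

/-- Modulo `p`, the strip sums are the sum of a function of the high digit of the second coordinate
and of a function of the low digit of the third one. -/
def HasSeparableStrips [Fintype R] (F : DigitArray P Q R) : Prop :=
  ∀ x₂ h h' x₃ x₃', (Fintype.card P : ℤ) ∣
    (stripSum F (x₂, h) x₃ - stripSum F (x₂, h') x₃) -
      (stripSum F (x₂, h) x₃' - stripSum F (x₂, h') x₃')

/-- Above the grid with low digits `x₂`, `x₃`, the column sums do not depend on the high digit of
the second coordinate. -/
def IsConst₂ (F : DigitArray P Q R) (x₂ : Q) (x₃ : R) : Prop :=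
  ∀ h h' h₃, columnSum F (x₂, h) (x₃, h₃) = columnSum F (x₂, h') (x₃, h₃)

/-- If the shadow of the set with indicator `B` contains a full fiber in the third direction, then
all its points with the same low digit in the third coordinate as this fiber also have the same
low digit in the second coordinate. -/
def IsolatesFibers {P Q R : Type*} (B : DigitArray P Q R) : Prop :=
  ∀ x₂ h x₃, (∀ h₃, Shadow B (x₂, h) (x₃, h₃)) →
    ∀ y₂ h₃, Shadow B y₂ (x₃, h₃) → y₂.1 = x₂

theorem layerSum_eq_sum_stripSum [Fintype R] (F : DigitArray P Q R) (y₂ : Q × Q) :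
    layerSum F y₂ = ∑ x₃, stripSum F y₂ x₃ := Fintype.sum_prod_type _

theorem stripSum_eq_card_mul [Fintype R] {F : DigitArray P Q R} {x₂ : Q} {x₃ : R}
    (h : IsConst₂ (swap₂₃ F) x₃ x₂) (h₂ : Q) (h₃ : R) :
    stripSum F (x₂, h₂) x₃ = Fintype.card R * columnSum F (x₂, h₂) (x₃, h₃) := by
  have hconst : ∀ k, columnSum F (x₂, h₂) (x₃, k) = columnSum F (x₂, h₂) (x₃, h₃) :=
    fun k => h k h₃ h₂
  simp [stripSum, hconst]

theorem isBalanced_of_isConst₂ [Fintype R] {F : DigitArray P Q R} (h : ∀ x₂ x₃, IsConst₂ F x₂ x₃) :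
    IsBalanced F := fun _ _ _ => Finset.sum_congr rfl fun _ _ => h _ _ _ _ _

theorem stripSum_eq_sum_fiberSum [Fintype R] (F : DigitArray P Q R) (y₂ : Q × Q) (x₃ : R) :
    stripSum F y₂ x₃ = ∑ x₁, ∑ h₁, fiberSum (swap₁₂ (swap₂₃ F)) x₃ (x₁, h₁) y₂ :=
  Finset.sum_comm.trans (Fintype.sum_prod_type _)

theorem layerSum_eq_sum_columnSum [Fintype R] (F : DigitArray P Q R) (y₂ : Q × Q) :
    layerSum F y₂ = ∑ x₁, ∑ h₁, columnSum (swap₁₂ (swap₂₃ F)) (x₁, h₁) y₂ :=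
  Finset.sum_comm.trans (Fintype.sum_prod_type _)

section Sums

variable [Fintype Q] [Fintype R] {F : DigitArray P Q R}

theorem gridSum_swap₂₃ (F : DigitArray P Q R) (x₂ : Q) (x₃ : R) :
    gridSum (swap₂₃ F) x₃ x₂ = gridSum F x₂ x₃ := Finset.sum_comm

theorem sum_gridSum (F : DigitArray P Q R) (x₂ : Q) :
    ∑ x₃, gridSum F x₂ x₃ = ∑ h₂, layerSum F (x₂, h₂) := by
  simp only [gridSum, layerSum_eq_sum_stripSum]
  exact Finset.sum_comm

theorem sum_layerSum (F : DigitArray P Q R) :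
    ∑ y₂, layerSum F y₂ = ∑ y₁, ∑ y₂, ∑ y₃, F y₁ y₂ y₃ := by
  simp only [layerSum, columnSum]
  rw [Finset.sum_comm (s := Finset.univ (α := P × P))]
  exact Finset.sum_congr rfl fun _ _ => Finset.sum_comm

theorem VanishesAt.isAddSeparable_gridSum (hF : VanishesAt 0 1 1 F) :
    IsAddSeparable (gridSum F) := by
  intro a a' b b'
  have h := hF (fun _ => 1) _ _ (fun _ _ => rfl) (isPureLevel_one_pointDiff a a')
    (isPureLevel_one_pointDiff b b')
  have hgrid : ∀ x₂ x₃, ∑ y₁, ∑ h₂, ∑ h₃, F y₁ (x₂, h₂) (x₃, h₃) = gridSum F x₂ x₃ := by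
    intro x₂ x₃
    simp only [gridSum, stripSum, columnSum]
    rw [Finset.sum_comm]
    exact Finset.sum_congr rfl fun _ _ => Finset.sum_comm
  simp only [sum_pointDiff_fst_mul, one_mul, Finset.sum_sub_distrib, hgrid] at h
  linarith

theorem VanishesAt.sum_gridSum_eq (hF : VanishesAt 0 1 0 F) (a a' : Q) :
    ∑ x₃, gridSum F a x₃ = ∑ x₃, gridSum F a' x₃ := by
  have h := hF (fun _ => 1) _ (fun _ => 1) (fun _ _ => rfl) (isPureLevel_one_pointDiff a a')
    fun _ _ => rfl
  have hlayer : ∀ x₂, ∑ y₁, ∑ h₂, ∑ y₃, F y₁ (x₂, h₂) y₃ = ∑ x₃, gridSum F x₂ x₃ := by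
    intro x₂
    rw [sum_gridSum]
    simp only [layerSum, columnSum]
    rw [Finset.sum_comm]
    exact Finset.sum_congr rfl fun _ _ => Finset.sum_comm
  simp only [sum_pointDiff_fst_mul, one_mul, Finset.sum_sub_distrib, hlayer] at h
  linarith

theorem IsBalanced.card_mul_layerSum (hF : IsBalanced F) (x₂ h : Q) :
    Fintype.card Q * layerSum F (x₂, h) = ∑ x₃, gridSum F x₂ x₃ := by
  simp [sum_gridSum, hF x₂ _ h]

theorem VanishesAt.gridSum_eq_gridSum (h₁₁ : VanishesAt 0 1 1 F) (h₁₀ : VanishesAt 0 1 0 F)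
    (h₀₁ : VanishesAt 0 0 1 F) (a a' : Q) (b b' : R) : gridSum F a b = gridSum F a' b' := by
  have hsep := h₁₁.isAddSeparable_gridSum
  have hsum := h₀₁.swap₂₃.sum_gridSum_eq b b'
  simp only [gridSum_swap₂₃] at hsum
  rw [hsep.eq_of_sum_eq hsum a]
  exact hsep.swap.eq_of_sum_eq (h₁₀.sum_gridSum_eq a a') b'

end Sums

end DigitArray

/-- A fibered tiling with fibers in all three directions, whose first prime is the smallest, in
which `A` contains a full column in the first direction, whereas `B` meets each such column at most
once, and the fibers of its shadow point in one direction above each grid. -/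
structure ColumnTiling {P Q R : Type*} [Fintype P] [Fintype Q] [Fintype R]
    (A B : DigitArray P Q R) : Prop extends FiberedTiling A B where
  hasFiber₁ : HasFiber₁ A
  hasFiber₂ : HasFiber₂ A
  hasFiber₃ : HasFiber₃ A
  card_lt₁₂ : Fintype.card P < Fintype.card Q
  card_lt₁₃ : Fintype.card P < Fintype.card R
  eq_of_mem_column : ∀ {y₁ y₁' y₂ y₃}, B y₁ y₂ y₃ = 1 → B y₁' y₂ y₃ = 1 → y₁ = y₁'
  isConst₂_or : ∀ x₂ x₃, IsConst₂ B x₂ x₃ ∨ IsConst₂ (swap₂₃ B) x₃ x₂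
  exists_column : ∃ y₂ y₃, ∀ y₁, A y₁ y₂ y₃ = 1

namespace FiberedTiling

variable {P Q R : Type*} [Fintype P] [Fintype Q] [Fintype R] {A B : DigitArray P Q R}

theorem eq_of_forall_shadow (c : FiberedTiling A B) (hJ : HasFiber₂ A)
    (hpq : Fintype.card P < Fintype.card Q) {x₂ : Q} {y₃ : R × R}
    (hB : ∀ h₂, Shadow B (x₂, h₂) y₃) {x₁ x₁' : P} {w₂ h h' : Q} {w₃ : R × R}
    (hA : IsFiber₁ A x₁ (w₂, h) w₃) (hA' : IsFiber₁ A x₁' (w₂, h') w₃) : h = h' := by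
  by_contra hne
  choose g hg using hB
  have hg_inj : ∀ a a', g a = g a' → a = a' := fun a a' hgg =>
    c.eq_of_mem_fiber₂ hJ (hg a) (hgg ▸ hg a')
  have hcontra : ∀ {a a' k k'}, a ≠ a' → ¬ SameGap (x₁, k) (x₁', k') (g a) (g a') :=
    fun ha hgap => hne (congrArg Prod.snd
      (c.sands (hA _) (hA' _) (hg _) (hg _) hgap (.of_high hne ha) (.refl _ _)).2.1)
  by_cases hx : x₁ = x₁'
  · subst hx
    obtain ⟨a, a', ha, hlow⟩ := Fintype.exists_ne_map_eq_of_card_lt (fun a => (g a).1) hpq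
    have hhigh : (g a).2 ≠ (g a').2 := fun h => ha (hg_inj _ _ (Prod.ext hlow h))
    refine hcontra (k := (g a).2) (k' := (g a').2) ha ⟨by simpa using hlow, ?_⟩
    simp [Prod.ext_iff, hhigh]
  · obtain ⟨a, a', ha, hhigh⟩ := Fintype.exists_ne_map_eq_of_card_lt (fun a => (g a).2) hpq
    exact hcontra (k := x₁) (k' := x₁) ha
      (.of_low hx fun h => ha (hg_inj _ _ (Prod.ext h hhigh)))

theorem exists_column_of_forall_shadow (c : FiberedTiling A B) (hI : HasFiber₁ A)
    (hJ : HasFiber₂ A) (hpq : Fintype.card P < Fintype.card Q) (hA : VanishesAt 1 2 2 A) {x₂ : Q}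
    {y₃ : R × R} (hB : ∀ h₂, Shadow B (x₂, h₂) y₃) : ∃ y₂ y₃, ∀ y₁, A y₁ y₂ y₃ = 1 := by
  obtain ⟨x₁, ⟨w₂, h₂⟩, ⟨w₃, h₃⟩, hfib⟩ := hI
  refine ⟨(w₂, h₂), (w₃, h₃), fun ⟨x, h⟩ => ?_⟩
  suffices IsFiber₁ A x (w₂, h₂) (w₃, h₃) from this h
  by_contra hx
  obtain ⟨k₃, hk₃⟩ := not_forall.1 (c.not_forall_fiberInd₃ x₁ (w₂, h₂) w₃)
  have hcover := (c.isAddSeparable_fiberInd_sub hA x₁ x w₂ w₃).eq_one_or_eq_one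
    (fun _ _ => fiberInd_zero_or_one _ _ _ _) (fun _ _ => fiberInd_zero_or_one _ _ _ _)
    (fiberInd_eq_one_iff.2 hfib) (fiberInd_eq_zero hx) hk₃
  have hother : ∀ d, d ≠ h₂ → IsFiber₁ A x (w₂, d) (w₃, k₃) := fun d hd =>
    fiberInd_eq_one_iff.1 <| (hcover d).resolve_left fun hd' =>
      hd (c.eq_of_forall_shadow hJ hpq hB (fiberInd_eq_one_iff.1 hd') hfib)
  classical
  obtain ⟨d, hd, d', hd', hne⟩ : ∃ d ∈ Finset.univ.erase h₂, ∃ d' ∈ Finset.univ.erase h₂, d ≠ d' :=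
    Finset.one_lt_card.1 <| by
      rw [Finset.card_erase_of_mem (Finset.mem_univ _), Finset.card_univ]
      have := c.three_le₂
      omega
  exact hne (c.eq_of_forall_shadow hJ hpq hB (hother d (Finset.ne_of_mem_erase hd))
    (hother d' (Finset.ne_of_mem_erase hd')))

theorem columnTiling (c : FiberedTiling A B) (hI : HasFiber₁ A) (hJ : HasFiber₂ A)
    (hK : HasFiber₃ A) (hpq : Fintype.card P < Fintype.card Q)
    (hpr : Fintype.card P < Fintype.card R) (hA : VanishesAt 1 2 2 A) (hB : VanishesAt 0 2 2 B) :
    ColumnTiling A B := by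
  have hinj : ∀ y₂ y₃ y₁ y₁', B y₁ y₂ y₃ = 1 → B y₁' y₂ y₃ = 1 → y₁ = y₁' :=
    fun _ _ _ _ => c.eq_of_mem_column hI hA
  have hshadow : ∀ y₂ y₃, columnSum B y₂ y₃ = 1 ↔ Shadow B y₂ y₃ := fun y₂ y₃ =>
    sum_eq_one_iff_exists_eq_one (fun _ => c.right_zero_or_one _ _ _) (hinj y₂ y₃)
  have hconst : ∀ x₂ x₃, IsConst₂ B x₂ x₃ ∨ IsConst₂ (swap₂₃ B) x₃ x₂ := fun x₂ x₃ =>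
    ((hB.isAddSeparable_columnSum x₂ x₃).const_left_or_const_right fun h₂ h₃ =>
      sum_eq_zero_or_one (fun _ => c.right_zero_or_one _ _ _) (hinj _ _)).imp_right
        fun h _ _ _ => h _ _ _
  refine ⟨c, hI, hJ, hK, hpq, hpr, hinj _ _ _ _, hconst, ?_⟩
  obtain ⟨y₁, ⟨x₂, h₂⟩, ⟨x₃, h₃⟩, hy⟩ := c.exists_right_eq_one
  have hone := (hshadow (x₂, h₂) (x₃, h₃)).2 ⟨y₁, hy⟩
  rcases hconst x₂ x₃ with h | h
  · exact c.exists_column_of_forall_shadow hI hJ hpq hA fun k =>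
      (hshadow _ _).1 ((h k h₂ h₃).trans hone)
  · obtain ⟨y₃, y₂, hcol⟩ := c.swap₂₃.exists_column_of_forall_shadow hI.swap₂₃ hK.swap₂₃ hpr
      hA.swap₂₃ fun k => (hshadow _ _).1 ((h k h₃ h₂).trans hone)
    exact ⟨y₂, y₃, hcol⟩

theorem isCoprime₁₂ (c : FiberedTiling A B) :
    IsCoprime (Fintype.card P : ℤ) (Fintype.card Q : ℤ) :=
  Nat.isCoprime_iff_coprime.2 ((Nat.coprime_primes c.prime₁ c.prime₂).2 c.card_ne₁₂)

theorem exists_layerSum_ne (c : FiberedTiling A B) :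
    ∃ y₂ y₂', layerSum B y₂ ≠ layerSum B y₂' := by
  by_contra! h
  obtain ⟨x⟩ := c.nonempty₂
  have hsum := sum_layerSum B
  rw [c.sum_right, Finset.sum_congr rfl fun y₂ _ => h y₂ (x, x)] at hsum
  simp only [Finset.sum_const, Finset.card_univ, nsmul_eq_mul, Fintype.card_prod,
    Nat.cast_mul] at hsum
  have hQ : (Fintype.card Q : ℤ) ≠ 0 := by exact_mod_cast c.prime₂.ne_zero
  have hdvd : (Fintype.card Q : ℤ) ∣ (Fintype.card P * Fintype.card R : ℕ) :=
    ⟨layerSum B (x, x), mul_left_cancel₀ hQ (by push_cast; linarith)⟩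
  rcases (Nat.Prime.dvd_mul c.prime₂).1 (by exact_mod_cast hdvd) with h | h
  · exact c.card_ne₁₂ ((Nat.prime_dvd_prime_iff_eq c.prime₂ c.prime₁).1 h).symm
  · exact c.card_ne₂₃ ((Nat.prime_dvd_prime_iff_eq c.prime₂ c.prime₃).1 h)

theorem not_vanishesAt_of_isBalanced (c : FiberedTiling A B) (hB : IsBalanced B) :
    ¬ VanishesAt 0 1 0 B := by
  intro h
  obtain ⟨y₂, y₂', hne⟩ := c.exists_layerSum_ne
  have hQ : (Fintype.card Q : ℤ) ≠ 0 := by exact_mod_cast c.prime₂.ne_zero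
  refine hne (mul_left_cancel₀ hQ ?_)
  rw [hB.card_mul_layerSum, hB.card_mul_layerSum, h.sum_gridSum_eq]

theorem hasSeparableStrips_or_isNearlyBalanced (c : FiberedTiling A B) (hK : HasFiber₃ A) :
    HasSeparableStrips B ∨ IsNearlyBalanced B := by
  have c' := c.swap₂₃.swap₁₂
  by_cases hB : VanishesAt 1 2 2 (swap₁₂ (swap₂₃ B))
  · refine .inl fun x₂ h h' x₃ x₃' => ?_
    simp only [stripSum_eq_sum_fiberSum, ← Finset.sum_sub_distrib]
    refine Finset.dvd_sum fun x₁ _ => ?_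
    have hdvd := (hB.isAddSeparable_fiberSum_sub x₃ x₃' x₁ x₂).card_dvd_sum_sub_sum h h'
    simp only [Finset.sum_sub_distrib] at hdvd ⊢
    rwa [sub_sub_sub_comm]
  · have hA := (c'.vanishesAt 1 2 2 (by simp) (by simp) (by simp) (by simp)).resolve_right hB
    have hB' := (c'.vanishesAt 0 2 2 (by simp) (by simp) (by simp) (by simp)).resolve_left
      (c'.not_vanishesAt_of_vanishesAt hK.swap₂₃.swap₁₂ hA)
    refine .inr ⟨fun x₂ h h' => ?_, fun y₂ => ?_⟩
    · simp only [layerSum_eq_sum_columnSum, ← Finset.sum_sub_distrib]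
      refine Finset.dvd_sum fun x₁ _ => ?_
      simpa only [Finset.sum_sub_distrib] using
        (hB'.isAddSeparable_columnSum x₁ x₂).card_dvd_sum_sub_sum h h'
    · have hle := sum_le_card_of_injOn (f := fun y : (R × R) × (P × P) => B y.2 y₂ y.1)
        (fun _ => c.right_zero_or_one _ _ _) Prod.snd fun ⟨y₃, y₁⟩ hy ⟨y₃', y₁'⟩ hy' heq => by
          obtain rfl : y₁ = y₁' := heq
          exact Prod.ext (c'.eq_of_mem_column hK.swap₂₃.swap₁₂ hA hy hy') rfl
      rw [Fintype.sum_prod_type, Fintype.card_prod] at hle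
      exact_mod_cast hle

theorem columnSum_left_le_gridSum (c : FiberedTiling A B) (x₂ h₂ : Q) (x₃ h₃ : R) :
    columnSum A (x₂, h₂) (x₃, h₃) ≤ gridSum A x₂ x₃ := by
  have hnonneg : ∀ y₂ y₃, 0 ≤ columnSum A y₂ y₃ := fun y₂ y₃ =>
    Finset.sum_nonneg fun y₁ _ => by rcases c.left_zero_or_one y₁ y₂ y₃ with h | h <;> omega
  calc columnSum A (x₂, h₂) (x₃, h₃) ≤ stripSum A (x₂, h₂) x₃ :=
        Finset.single_le_sum (f := fun h => columnSum A (x₂, h₂) (x₃, h))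
          (fun _ _ => hnonneg _ _) (Finset.mem_univ h₃)
    _ ≤ gridSum A x₂ x₃ :=
        Finset.single_le_sum (f := fun h => stripSum A (x₂, h) x₃)
          (fun _ _ => Finset.sum_nonneg fun _ _ => hnonneg _ _) (Finset.mem_univ h₂)

theorem gridSum_left_eq (c : FiberedTiling A B) (h₁₁ : VanishesAt 0 1 1 A)
    (h₁₀ : VanishesAt 0 1 0 A) (h₀₁ : VanishesAt 0 0 1 A) (x₂ : Q) (x₃ : R) :
    gridSum A x₂ x₃ = Fintype.card P := by
  have hsum := sum_layerSum A
  rw [c.sum_left, Fintype.sum_prod_type] at hsum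
  simp only [← sum_gridSum, h₁₁.gridSum_eq_gridSum h₁₀ h₀₁ _ x₂ _ x₃, Finset.sum_const,
    Finset.card_univ, nsmul_eq_mul] at hsum
  have hQ : (Fintype.card Q : ℤ) ≠ 0 := by exact_mod_cast c.prime₂.ne_zero
  have hR : (Fintype.card R : ℤ) ≠ 0 := by exact_mod_cast c.prime₃.ne_zero
  exact mul_left_cancel₀ hR (mul_left_cancel₀ hQ (by linarith))

end FiberedTiling

namespace ColumnTiling

variable {P Q R : Type*} [Fintype P] [Fintype Q] [Fintype R] {A B : DigitArray P Q R}

protected theorem swap₂₃ (c : ColumnTiling A B) : ColumnTiling (swap₂₃ A) (swap₂₃ B) where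
  toFiberedTiling := c.toFiberedTiling.swap₂₃
  hasFiber₁ := c.hasFiber₁.swap₂₃
  hasFiber₂ := c.hasFiber₃.swap₂₃
  hasFiber₃ := c.hasFiber₂.swap₂₃
  card_lt₁₂ := c.card_lt₁₃
  card_lt₁₃ := c.card_lt₁₂
  eq_of_mem_column := c.eq_of_mem_column
  isConst₂_or x₃ x₂ := (c.isConst₂_or x₂ x₃).symm
  exists_column := let ⟨y₂, y₃, h⟩ := c.exists_column; ⟨y₃, y₂, h⟩

theorem columnSum_eq_one_iff (c : ColumnTiling A B) {y₂ : Q × Q} {y₃ : R × R} :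
    columnSum B y₂ y₃ = 1 ↔ Shadow B y₂ y₃ :=
  sum_eq_one_iff_exists_eq_one (fun _ => c.right_zero_or_one _ _ _) fun _ _ => c.eq_of_mem_column

theorem columnSum_zero_or_one (c : ColumnTiling A B) (y₂ : Q × Q) (y₃ : R × R) :
    columnSum B y₂ y₃ = 0 ∨ columnSum B y₂ y₃ = 1 :=
  sum_eq_zero_or_one (fun _ => c.right_zero_or_one _ _ _) fun _ _ => c.eq_of_mem_column

theorem columnSum_nonneg (c : ColumnTiling A B) (y₂ : Q × Q) (y₃ : R × R) :
    0 ≤ columnSum B y₂ y₃ := by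
  rcases c.columnSum_zero_or_one y₂ y₃ with h | h <;> omega

theorem columnSum_eq_zero (c : ColumnTiling A B) {y₂ : Q × Q} {y₃ : R × R} (h : ¬ Shadow B y₂ y₃) :
    columnSum B y₂ y₃ = 0 :=
  (c.columnSum_zero_or_one y₂ y₃).resolve_right fun hone => h (c.columnSum_eq_one_iff.1 hone)

theorem abs_columnSum_sub_lt (c : ColumnTiling A B) (y₂ y₂' : Q × Q) (y₃ y₃' : R × R) :
    |columnSum B y₂ y₃ - columnSum B y₂' y₃'| < Fintype.card P := by
  have : (3 : ℤ) ≤ Fintype.card P := by exact_mod_cast c.three_le₁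
  have := c.columnSum_zero_or_one y₂ y₃
  have := c.columnSum_zero_or_one y₂' y₃'
  rw [abs_lt]
  omega

theorem gridSum_nonneg (c : ColumnTiling A B) (x₂ : Q) (x₃ : R) : 0 ≤ gridSum B x₂ x₃ :=
  Finset.sum_nonneg fun _ _ => Finset.sum_nonneg fun _ _ => c.columnSum_nonneg _ _

theorem gridSum_ne_zero_iff (c : ColumnTiling A B) {x₂ : Q} {x₃ : R} :
    gridSum B x₂ x₃ ≠ 0 ↔ ∃ h₂ h₃, Shadow B (x₂, h₂) (x₃, h₃) := by
  refine not_iff_comm.1 ?_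
  simp only [gridSum, stripSum, Finset.sum_eq_zero_iff_of_nonneg fun _ _ =>
    Finset.sum_nonneg fun _ _ => c.columnSum_nonneg _ _,
    Finset.sum_eq_zero_iff_of_nonneg fun _ _ => c.columnSum_nonneg _ _, Finset.mem_univ,
    true_imp_iff, not_exists, ← c.columnSum_eq_one_iff]
  refine forall₂_congr fun h₂ h₃ => ?_
  rcases c.columnSum_zero_or_one (x₂, h₂) (x₃, h₃) with h | h <;> simp [h]

theorem exists_shadow (c : ColumnTiling A B) : ∃ x₂ h₂ x₃ h₃, Shadow B (x₂, h₂) (x₃, h₃) :=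
  let ⟨y₁, (x₂, h₂), (x₃, h₃), h⟩ := c.exists_right_eq_one
  ⟨x₂, h₂, x₃, h₃, y₁, h⟩

theorem eq_of_sameGap_column (c : ColumnTiling A B) {y₂ : Q × Q} {y₃ : R × R}
    (hcol : ∀ y₁, A y₁ y₂ y₃ = 1) {y₁' : P × P} {y₂' : Q × Q} {y₃' : R × R}
    (hA : A y₁' y₂' y₃' = 1) {z₂ z₂' : Q × Q} {z₃ z₃' : R × R} (hz : Shadow B z₂ z₃)
    (hz' : Shadow B z₂' z₃') (h₂ : SameGap y₂ y₂' z₂ z₂') (h₃ : SameGap y₃ y₃' z₃ z₃') :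
    y₂ = y₂' ∧ y₃ = y₃' := by
  obtain ⟨z₁, hB⟩ := hz
  obtain ⟨z₁', hB'⟩ := hz'
  obtain ⟨y₁, h₁⟩ := SameGap.exists_left c.three_le₁ y₁' z₁ z₁'
  exact (c.sands (hcol y₁) hA hB hB' h₁ h₂ h₃).2

end ColumnTiling

namespace ColumnTiling

variable {P Q R : Type*} [Fintype P] [Fintype Q] [Fintype R] {A B : DigitArray P Q R}

theorem vanishesAt_right_of_isBalanced (c : ColumnTiling A B) (h₂ : IsBalanced B)
    (h₃ : IsBalanced (swap₂₃ B)) : VanishesAt 0 1 1 B := by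
  by_contra hB
  have h₁₁ := (c.vanishesAt 0 1 1 (by simp) (by simp) (by simp) (by simp)).resolve_right hB
  have h₁₀ := (c.vanishesAt 0 1 0 (by simp) (by simp) (by simp) (by simp)).resolve_right
    (c.not_vanishesAt_of_isBalanced h₂)
  have h₀₁ := (c.vanishesAt 0 0 1 (by simp) (by simp) (by simp) (by simp)).resolve_right
    fun h => c.swap₂₃.not_vanishesAt_of_isBalanced h₃ h.swap₂₃
  obtain ⟨⟨x₂, h₂⟩, ⟨x₃, h₃⟩, hcol⟩ := c.exists_column
  have hle := c.columnSum_left_le_gridSum x₂ h₂ x₃ h₃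
  rw [c.gridSum_left_eq h₁₁ h₁₀ h₀₁, columnSum, Finset.sum_congr rfl fun y₁ _ => hcol y₁] at hle
  have hcard : Fintype.card P * Fintype.card P ≤ Fintype.card P := by
    rw [← Fintype.card_prod]
    exact_mod_cast (by simpa using hle : (Fintype.card (P × P) : ℤ) ≤ Fintype.card P)
  have := c.three_le₁
  nlinarith

theorem layerSum₃_eq_of_isConst₂ (c : ColumnTiling A B) (hB : IsNearlyBalanced (swap₂₃ B)) {x₃ : R}
    (hconst : ∀ x₂, IsConst₂ B x₂ x₃) (h h' : R) :
    layerSum (swap₂₃ B) (x₃, h) = layerSum (swap₂₃ B) (x₃, h') := by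
  obtain ⟨k⟩ := c.nonempty₂
  set t : R → ℤ := fun h => ∑ x₂, columnSum B (x₂, k) (x₃, h) with ht
  have hlayer : ∀ h, layerSum (swap₂₃ B) (x₃, h) = Fintype.card Q * t h := fun h => by
    have hrow : ∀ x₂ k', columnSum (swap₂₃ B) (x₃, h) (x₂, k') = columnSum B (x₂, k) (x₃, h) :=
      fun x₂ k' => hconst x₂ k' k h
    simp [layerSum, Fintype.sum_prod_type, hrow, ht, Finset.mul_sum]
  have hP : (0 : ℤ) < Fintype.card P := by exact_mod_cast c.prime₁.pos
  have hPQ : (Fintype.card P : ℤ) < Fintype.card Q := by exact_mod_cast c.card_lt₁₂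
  have hnonneg : ∀ h, 0 ≤ t h := fun h => Finset.sum_nonneg fun _ _ => c.columnSum_nonneg _ _
  have hlt : ∀ h, t h < Fintype.card P := fun h => by
    have := hlayer h ▸ hB.2 (x₃, h)
    nlinarith
  have hdvd := hB.1 x₃ h h'
  rw [hlayer, hlayer, ← mul_sub] at hdvd
  have habs : |t h - t h'| < Fintype.card P := by
    rw [abs_lt]
    constructor <;> linarith [hlt h, hlt h', hnonneg h, hnonneg h']
  rw [hlayer, hlayer, sub_eq_zero.1 (eq_zero_of_dvd_mul_of_abs_lt c.isCoprime₁₂ hdvd habs)]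

section LowDetermined

theorem columnSum_eq_zero_of_lowDetermined (c : ColumnTiling A B) (hB : LowDetermined B) {x₂ h : Q}
    {y₃ : R × R} (hy : Shadow B (x₂, h) y₃) {x₃ : R} (hne : x₃ ≠ y₃.1) (h₂ : Q) (h₃ : R) :
    columnSum B (x₂, h₂) (x₃, h₃) = 0 :=
  c.columnSum_eq_zero fun hx => hne (hB _ _ _ _ _ hx hy)

theorem card_dvd_stripSum_sub_stripSum (c : ColumnTiling A B) (hB : LowDetermined B) {x₂ h : Q}
    {y₃ : R × R} (hy : Shadow B (x₂, h) y₃) (h₂ h₂' : Q) :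
    (Fintype.card P : ℤ) ∣ stripSum B (x₂, h₂) y₃.1 - stripSum B (x₂, h₂') y₃.1 := by
  have hzero : ∀ x₃ ≠ y₃.1, ∀ k, stripSum B (x₂, k) x₃ = 0 := fun x₃ hne k =>
    Finset.sum_eq_zero fun _ _ => c.columnSum_eq_zero_of_lowDetermined hB hy hne _ _
  rcases c.hasSeparableStrips_or_isNearlyBalanced c.hasFiber₃ with hsep | hbal
  · obtain ⟨x₃, hne⟩ := exists_ne_of_three_le c.three_le₃ y₃.1
    simpa [hzero x₃ hne] using hsep x₂ h₂ h₂' y₃.1 x₃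
  · have hlayer : ∀ k, layerSum B (x₂, k) = stripSum B (x₂, k) y₃.1 := fun k => by
      rw [layerSum_eq_sum_stripSum]
      exact Fintype.sum_eq_single _ fun x₃ hne => hzero x₃ hne k
    simpa [hlayer] using hbal.1 x₂ h₂ h₂'

theorem isConst₂_of_lowDetermined (c : ColumnTiling A B) (hB : LowDetermined B) (x₂ : Q) (x₃ : R) :
    IsConst₂ B x₂ x₃ := by
  refine (c.isConst₂_or x₂ x₃).elim id fun hconst h h' h₃ => ?_
  by_cases hshadow : ∃ k k₃, Shadow B (x₂, k) (x₃, k₃)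
  · obtain ⟨k, k₃, hk⟩ := hshadow
    have hdvd := c.card_dvd_stripSum_sub_stripSum hB hk h h'
    rw [stripSum_eq_card_mul hconst h h₃, stripSum_eq_card_mul hconst h' h₃, ← mul_sub] at hdvd
    exact sub_eq_zero.1 (eq_zero_of_dvd_mul_of_abs_lt c.swap₂₃.isCoprime₁₂ hdvd
      (c.abs_columnSum_sub_lt _ _ _ _))
  · push Not at hshadow
    rw [c.columnSum_eq_zero (hshadow _ _), c.columnSum_eq_zero (hshadow _ _)]

theorem isAddSeparable_of_hasSeparableStrips (c : ColumnTiling A B)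
    (hconst : ∀ x₂ x₃, IsConst₂ B x₂ x₃) (hsep : HasSeparableStrips (swap₂₃ B)) (k : Q) (x₃ : R) :
    IsAddSeparable fun x₂ h₃ => columnSum B (x₂, k) (x₃, h₃) := by
  intro x₂ x₂' h h'
  have hstrip : ∀ x h, stripSum (swap₂₃ B) (x₃, h) x =
      Fintype.card Q * columnSum B (x, k) (x₃, h) := fun x h =>
    stripSum_eq_card_mul (hconst x x₃) h k
  have hdvd := hsep x₃ h h' x₂ x₂'
  simp only [hstrip, ← mul_sub] at hdvd
  have := c.columnSum_zero_or_one (x₂, k) (x₃, h)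
  have := c.columnSum_zero_or_one (x₂, k) (x₃, h')
  have := c.columnSum_zero_or_one (x₂', k) (x₃, h)
  have := c.columnSum_zero_or_one (x₂', k) (x₃, h')
  have : (3 : ℤ) ≤ Fintype.card P := by exact_mod_cast c.three_le₁
  have := eq_zero_of_dvd_mul_of_abs_lt c.isCoprime₁₂ hdvd (by rw [abs_lt]; omega)
  beta_reduce
  omega

theorem layerSum_eq_of_forall_shadow (c : ColumnTiling A B) (hB : LowDetermined B) {x₃ : R}
    (hshadow : ∀ x₂, ∃ h₂ h₃, Shadow B (x₂, h₂) (x₃, h₃)) (y₂ : Q × Q) :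
    layerSum B y₂ = stripSum B y₂ x₃ := by
  obtain ⟨h, h₃, hy⟩ := hshadow y₂.1
  rw [layerSum_eq_sum_stripSum]
  exact Fintype.sum_eq_single _ fun x hne => Finset.sum_eq_zero fun k _ =>
    c.columnSum_eq_zero_of_lowDetermined hB hy hne y₂.2 k

theorem isBalanced₃_of_lowDetermined (c : ColumnTiling A B) (hB : LowDetermined B) :
    IsBalanced (swap₂₃ B) := by
  have hconst := c.isConst₂_of_lowDetermined hB
  obtain ⟨k⟩ := c.nonempty₂
  rcases c.swap₂₃.hasSeparableStrips_or_isNearlyBalanced c.swap₂₃.hasFiber₃ with hsep | hbal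
  swap
  · exact fun x₃ => c.layerSum₃_eq_of_isConst₂ hbal fun x₂ => hconst x₂ x₃
  intro x₃ h h'
  rcases (c.isAddSeparable_of_hasSeparableStrips hconst hsep k x₃).const_left_or_const_right
    fun _ _ => c.columnSum_zero_or_one _ _ with hrow | hcol
  · by_contra hne
    obtain ⟨a, ⟨x, h₂⟩, ha⟩ : ∃ a y₂, Shadow B y₂ (x₃, a) := by
      by_contra! hempty
      have hzero : ∀ a, layerSum (swap₂₃ B) (x₃, a) = 0 := fun a =>
        Finset.sum_eq_zero fun _ _ => c.columnSum_eq_zero (hempty a _)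
      exact hne ((hzero h).trans (hzero h').symm)
    have hvalue : ∀ y₂ b, columnSum B y₂ (x₃, b) = columnSum B (x, k) (x₃, b) := fun y₂ b =>
      (hconst y₂.1 x₃ y₂.2 k b).trans (hrow y₂.1 x b)
    have hone := (hvalue (x, h₂) a).symm.trans (c.columnSum_eq_one_iff.2 ha)
    have hall : ∀ x₂, ∃ h₂ h₃, Shadow B (x₂, h₂) (x₃, h₃) := fun x₂ =>
      ⟨k, a, c.columnSum_eq_one_iff.1 ((hvalue _ a).trans hone)⟩
    obtain ⟨y₂, y₂', hlayer⟩ := c.exists_layerSum_ne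
    rw [c.layerSum_eq_of_forall_shadow hB hall, c.layerSum_eq_of_forall_shadow hB hall] at hlayer
    exact hlayer (Finset.sum_congr rfl fun b _ => (hvalue y₂ b).trans (hvalue y₂' b).symm)
  · exact Finset.sum_congr rfl fun ⟨x₂, h₂⟩ _ =>
      (hconst x₂ x₃ h₂ k h).trans ((hcol x₂ h h').trans (hconst x₂ x₃ k h₂ h'))

theorem exists_gridSum_pos (c : ColumnTiling A B) (hsep : VanishesAt 0 1 1 B) :
    (∃ x₂, ∀ x₃, 0 < gridSum B x₂ x₃) ∨ ∃ x₃, ∀ x₂, 0 < gridSum B x₂ x₃ := by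
  obtain ⟨x₂, h₂, x₃, h₃, hy⟩ := c.exists_shadow
  exact hsep.isAddSeparable_gridSum.exists_forall_pos c.gridSum_nonneg
    (c.gridSum_ne_zero_iff.2 ⟨h₂, h₃, hy⟩)

theorem not_lowDetermined (c : ColumnTiling A B) : ¬ LowDetermined B := by
  intro hB
  have hbal := isBalanced_of_isConst₂ (c.isConst₂_of_lowDetermined hB)
  have hvan := c.vanishesAt_right_of_isBalanced hbal (c.isBalanced₃_of_lowDetermined hB)
  rcases c.exists_gridSum_pos hvan with ⟨x₂, hpos⟩ | ⟨x₃, hpos⟩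
  · obtain ⟨x₃⟩ := c.nonempty₃
    obtain ⟨x₃', hne⟩ := exists_ne_of_three_le c.three_le₃ x₃
    obtain ⟨_, _, hy⟩ := c.gridSum_ne_zero_iff.1 (hpos x₃).ne'
    obtain ⟨_, _, hy'⟩ := c.gridSum_ne_zero_iff.1 (hpos x₃').ne'
    exact hne (hB _ _ _ _ _ hy' hy)
  · have hshadow : ∀ x₂, ∃ h₂ h₃, Shadow B (x₂, h₂) (x₃, h₃) := fun x₂ =>
      c.gridSum_ne_zero_iff.1 (hpos x₂).ne'
    obtain ⟨x₃', hne⟩ := exists_ne_of_three_le c.three_le₃ x₃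
    have hzero : ∀ x₂, gridSum B x₂ x₃' = 0 := fun x₂ => by
      obtain ⟨_, _, hy⟩ := hshadow x₂
      exact Finset.sum_eq_zero fun _ _ => Finset.sum_eq_zero fun _ _ =>
        c.columnSum_eq_zero_of_lowDetermined hB hy hne _ _
    obtain ⟨⟨x, h⟩, ⟨x', h'⟩, hlayer⟩ := c.exists_layerSum_ne
    have hsep := hvan.isAddSeparable_gridSum x x' x₃ x₃'
    have hQ : (Fintype.card Q : ℤ) ≠ 0 := by exact_mod_cast c.prime₂.ne_zero
    refine hlayer (mul_left_cancel₀ hQ ?_)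
    have hgrid : ∀ x h, Fintype.card Q * layerSum B (x, h) = gridSum B x x₃ := fun x h => by
      simp [gridSum, ← c.layerSum_eq_of_forall_shadow hB hshadow, hbal x _ h]
    rw [hgrid, hgrid]
    simpa [hzero] using hsep

end LowDetermined

end ColumnTiling

namespace ColumnTiling

variable {P Q R : Type*} [Fintype P] [Fintype Q] [Fintype R] {A B : DigitArray P Q R}

theorem exists_full_fiber_of_not_isConst₂ (c : ColumnTiling A B) {x₂ : Q} {x₃ : R}
    (h : ¬ IsConst₂ B x₂ x₃) : ∃ h₂, ∀ h₃, Shadow B (x₂, h₂) (x₃, h₃) := by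
  have hconst := (c.isConst₂_or x₂ x₃).resolve_left h
  simp only [IsConst₂, not_forall] at h
  obtain ⟨a, a', k, hne⟩ := h
  have hshadow : ∀ h₂, columnSum B (x₂, h₂) (x₃, k) = 1 → ∀ h₃, Shadow B (x₂, h₂) (x₃, h₃) :=
    fun h₂ hone h₃ => c.columnSum_eq_one_iff.1 ((hconst h₃ k h₂).trans hone)
  rcases c.columnSum_zero_or_one (x₂, a) (x₃, k) with h₀ | h₁
  · rcases c.columnSum_zero_or_one (x₂, a') (x₃, k) with h₀' | h₁'
    · exact absurd (h₀.trans h₀'.symm) hne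
    · exact ⟨a', hshadow a' h₁'⟩
  · exact ⟨a, hshadow a h₁⟩

theorem exists_not_isConst₂ (c : ColumnTiling A B) (hB : IsolatesFibers (swap₂₃ B)) :
    ∃ x₂ x₃, ¬ IsConst₂ B x₂ x₃ := by
  by_contra! hconst
  refine c.not_lowDetermined fun x₂ h h' y₃ y₃' hy hy' => ?_
  refine (hB y₃.1 y₃.2 x₂ (fun k => c.columnSum_eq_one_iff.1 ?_) y₃' h' hy').symm
  exact (hconst x₂ y₃.1 k h y₃.2).trans (c.columnSum_eq_one_iff.2 hy)

theorem not_isConst₂_of_hasSeparableStrips (c : ColumnTiling A B) (hsep : HasSeparableStrips B)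
    {x₂ : Q} {x₃ : R} (h : ¬ IsConst₂ B x₂ x₃) (x₃' : R) : ¬ IsConst₂ B x₂ x₃' := by
  intro h'
  refine h fun a a' k => sub_eq_zero.1 ?_
  have hstrip : stripSum B (x₂, a) x₃' = stripSum B (x₂, a') x₃' :=
    Finset.sum_congr rfl fun k _ => h' a a' k
  have hdvd := hsep x₂ a a' x₃ x₃'
  have hmul := fun b => stripSum_eq_card_mul ((c.isConst₂_or x₂ x₃).resolve_left h) b k
  rw [hstrip, sub_self, sub_zero, hmul, hmul, ← mul_sub] at hdvd
  exact eq_zero_of_dvd_mul_of_abs_lt c.toFiberedTiling.swap₂₃.isCoprime₁₂ hdvd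
    (c.abs_columnSum_sub_lt _ _ _ _)

theorem not_hasSeparableStrips (c : ColumnTiling A B) (h₂ : IsolatesFibers B)
    (h₃ : IsolatesFibers (swap₂₃ B)) : ¬ HasSeparableStrips B := by
  intro hsep
  obtain ⟨x₂, x₃, hx⟩ := c.exists_not_isConst₂ h₃
  have hlow : ∀ y₂ y₃, Shadow B y₂ y₃ → y₂.1 = x₂ := fun y₂ y₃ hy =>
    let ⟨h, hfull⟩ := c.exists_full_fiber_of_not_isConst₂
      (c.not_isConst₂_of_hasSeparableStrips hsep hx y₃.1)
    h₂ x₂ h y₃.1 hfull y₂ y₃.2 hy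
  exact c.swap₂₃.not_lowDetermined fun _ _ _ _ _ hy hy' => (hlow _ _ hy).trans (hlow _ _ hy').symm

theorem isBalanced_swap₂₃_of_isolatesFibers (c : ColumnTiling A B) (h₂ : IsolatesFibers B)
    (hbal : IsNearlyBalanced (swap₂₃ B)) : IsBalanced (swap₂₃ B) := by
  intro x₃ h h'
  by_cases hall : ∀ x₂, IsConst₂ B x₂ x₃
  · exact c.layerSum₃_eq_of_isConst₂ hbal hall h h'
  obtain ⟨x₂, hx₂⟩ := not_forall.1 hall
  obtain ⟨a, hfull⟩ := c.exists_full_fiber_of_not_isConst₂ hx₂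
  refine Finset.sum_congr rfl fun ⟨x, b⟩ _ => ?_
  by_cases hx : x = x₂
  · subst hx
    exact (c.isConst₂_or x x₃).resolve_left hx₂ h h' b
  · have hzero : ∀ k, columnSum B (x, b) (x₃, k) = 0 := fun k =>
      c.columnSum_eq_zero fun hy => hx (h₂ x₂ a x₃ hfull _ _ hy)
    exact (hzero h).trans (hzero h').symm

theorem eq_or_eq_of_isolatesFibers (c : ColumnTiling A B) (h₂ : IsolatesFibers B)
    (h₃ : IsolatesFibers (swap₂₃ B)) {x₂ : Q} {x₃ : R} (hpos : 0 < gridSum B x₂ x₃) :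
    (∀ x₃', 0 < gridSum B x₂ x₃' → x₃' = x₃) ∨ ∀ x₂', 0 < gridSum B x₂' x₃ → x₂' = x₂ := by
  obtain ⟨a, b, hy⟩ := c.gridSum_ne_zero_iff.1 hpos.ne'
  have hone := c.columnSum_eq_one_iff.2 hy
  rcases c.isConst₂_or x₂ x₃ with hconst | hconst
  · refine .inl fun x₃' hpos' => ?_
    obtain ⟨a', b', hy'⟩ := c.gridSum_ne_zero_iff.1 hpos'.ne'
    exact h₃ x₃ b x₂ (fun k => c.columnSum_eq_one_iff.1 ((hconst k a b).trans hone)) _ a' hy'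
  · refine .inr fun x₂' hpos' => ?_
    obtain ⟨a', b', hy'⟩ := c.gridSum_ne_zero_iff.1 hpos'.ne'
    exact h₂ x₂ a x₃ (fun k => c.columnSum_eq_one_iff.1 ((hconst k b a).trans hone)) _ b' hy'

theorem exists_gridSum_nonpos (c : ColumnTiling A B) (h₂ : IsolatesFibers B)
    (h₃ : IsolatesFibers (swap₂₃ B)) (x₂ : Q) : ∃ x₃, gridSum B x₂ x₃ ≤ 0 := by
  by_contra! hpos
  have hcol : ∀ x₃ x₂', 0 < gridSum B x₂' x₃ → x₂' = x₂ := fun x₃ => by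
    obtain ⟨x₃', hne⟩ := exists_ne_of_three_le c.three_le₃ x₃
    exact (c.eq_or_eq_of_isolatesFibers h₂ h₃ (hpos x₃)).resolve_left fun h => hne (h x₃' (hpos _))
  have hlow : ∀ y₂ y₃, Shadow B y₂ y₃ → y₂.1 = x₂ := fun y₂ y₃ hy =>
    hcol y₃.1 y₂.1 ((c.gridSum_nonneg _ _).lt_of_ne'
      (c.gridSum_ne_zero_iff.2 ⟨y₂.2, y₃.2, hy⟩))
  exact c.swap₂₃.not_lowDetermined fun _ _ _ _ _ hy hy' => (hlow _ _ hy).trans (hlow _ _ hy').symm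

theorem not_isolatesFibers (c : ColumnTiling A B) (h₂ : IsolatesFibers B) :
    ¬ IsolatesFibers (swap₂₃ B) := by
  intro h₃
  have hbal₂ := (c.hasSeparableStrips_or_isNearlyBalanced c.hasFiber₃).resolve_left
    (c.not_hasSeparableStrips h₂ h₃)
  have hbal₃ := (c.swap₂₃.hasSeparableStrips_or_isNearlyBalanced c.swap₂₃.hasFiber₃).resolve_left
    (c.swap₂₃.not_hasSeparableStrips h₃ h₂)
  have hvan := c.vanishesAt_right_of_isBalanced
    (c.swap₂₃.isBalanced_swap₂₃_of_isolatesFibers h₃ hbal₂)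
    (c.isBalanced_swap₂₃_of_isolatesFibers h₂ hbal₃)
  rcases c.exists_gridSum_pos hvan with ⟨x₂, hpos⟩ | ⟨x₃, hpos⟩
  · obtain ⟨x₃, hle⟩ := c.exists_gridSum_nonpos h₂ h₃ x₂
    exact (hpos x₃).not_ge hle
  · obtain ⟨x₂, hle⟩ := c.swap₂₃.exists_gridSum_nonpos h₃ h₂ x₃
    exact (hpos x₂).not_ge (gridSum_swap₂₃ B x₂ x₃ ▸ hle)

theorem not_forall_column_of_isFiber₂ (c : ColumnTiling A B) {y₁ : P × P} {x₂ h : Q}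
    {y₃ : R × R} (hA : IsFiber₂ A y₁ x₂ y₃) {h₃ : R} :
    ¬ ∀ y₁', A y₁' (x₂, h) (y₃.1, h₃) = 1 := fun hcol =>
  c.not_isFiber₁₂ y₁ (x₂, h) y₃
    (c.isFiber₁_of_mem_grid (fun k => hcol (y₁.1, k)) (hA h)) hA

theorem lowDetermined_of_isFiber₂ (c : ColumnTiling A B) {x₂ h : Q} {y₃ y₃' : R × R}
    (hcol : ∀ y₁, A y₁ (x₂, h) y₃ = 1) {y₁ : P × P} (hA : IsFiber₂ A y₁ x₂ y₃')
    (hne : y₃.1 ≠ y₃'.1) : LowDetermined B := by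
  intro z a a' z₃ z₃' hz hz'
  by_contra hz₃
  obtain ⟨b, hgap⟩ := SameGap.exists_high c.three_le₂ x₂ h z a' a
  exact hne (congrArg Prod.fst
    (c.eq_of_sameGap_column hcol (hA b) hz hz' hgap.symm (.of_low hne hz₃)).2)

theorem isolatesFibers_of_isFiber₂ (c : ColumnTiling A B) {y₂ : Q × Q} {x₃ h : R}
    (hcol : ∀ y₁, A y₁ y₂ (x₃, h) = 1) {y₁ : P × P} {x₂ : Q} {k : R}
    (hA : IsFiber₂ A y₁ x₂ (x₃, k)) (hne : y₂.1 ≠ x₂) : IsolatesFibers B := by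
  intro z₂ a z₃ hfull z₂' b hz
  by_contra hz₂
  obtain ⟨b', hgap⟩ := SameGap.exists_high c.three_le₃ z₃ b x₃ h k
  exact hne (congrArg Prod.fst (c.eq_of_sameGap_column hcol (hA x₂) (hfull b') hz
    (.of_low hne (Ne.symm hz₂)) ⟨hgap.1.symm, hgap.2.symm⟩).1)

theorem lowDetermined_or_lowDetermined (c : ColumnTiling A B) {y₂ : Q × Q} {y₃ y₃' : R × R}
    (hcol : ∀ y₁, A y₁ y₂ y₃ = 1) {y₁ : P × P} {x₂ : Q} (hA : IsFiber₂ A y₁ x₂ y₃')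
    (hne₂ : y₂.1 ≠ x₂) (hne₃ : y₃.1 ≠ y₃'.1) : LowDetermined (swap₂₃ B) ∨ LowDetermined B := by
  refine (forall_eq_or_forall_eq_of_pairwise
    (E := fun z₂ z₃ => ∃ a b, Shadow B (z₂, a) (z₃, b)) ?_).imp
    (fun h _ _ _ _ _ hz hz' => h _ _ _ _ ⟨_, _, hz⟩ ⟨_, _, hz'⟩)
    fun h _ _ _ _ _ hz hz' => h _ _ _ _ ⟨_, _, hz⟩ ⟨_, _, hz'⟩
  rintro z₂ z₃ z₂' z₃' ⟨a, b, hz⟩ ⟨a', b', hz'⟩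
  by_contra! hz₂₃
  exact hne₂ (congrArg Prod.fst (c.eq_of_sameGap_column hcol (hA x₂) hz hz'
    (.of_low hne₂ hz₂₃.1) (.of_low hne₃ hz₂₃.2)).1)

theorem isolatesFibers (c : ColumnTiling A B) : IsolatesFibers B := by
  obtain ⟨⟨x₂, h₂⟩, ⟨x₃, h₃⟩, hcol⟩ := c.exists_column
  obtain ⟨y₁, w₂, ⟨w₃, k₃⟩, hA⟩ := c.hasFiber₂
  by_cases e₂ : x₂ = w₂ <;> by_cases e₃ : x₃ = w₃
  · subst e₂ e₃
    exact absurd hcol (c.not_forall_column_of_isFiber₂ hA)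
  · subst e₂
    exact absurd (c.lowDetermined_of_isFiber₂ hcol hA e₃) c.not_lowDetermined
  · subst e₃
    exact c.isolatesFibers_of_isFiber₂ hcol hA e₂
  · rcases c.lowDetermined_or_lowDetermined hcol hA e₂ e₃ with h | h
    · exact absurd h c.swap₂₃.not_lowDetermined
    · exact absurd h c.not_lowDetermined

end ColumnTiling

namespace FiberedTiling

variable {P Q R : Type*} [Fintype P] [Fintype Q] [Fintype R] {A B : DigitArray P Q R}

theorem not_vanishesAt_of_lt (c : FiberedTiling A B) (hI : HasFiber₁ A) (hJ : HasFiber₂ A)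
    (hK : HasFiber₃ A) (hpq : Fintype.card P < Fintype.card Q)
    (hpr : Fintype.card P < Fintype.card R) : ¬ VanishesAt 0 2 2 B := by
  intro hB
  have hA := (c.vanishesAt 1 2 2 (by simp) (by simp) (by simp) (by simp)).resolve_right
    fun h => c.not_vanishesAt_right_of_lt hI hJ hK hpq hpr h hB
  have c' := c.columnTiling hI hJ hK hpq hpr hA hB
  exact c'.not_isolatesFibers c'.isolatesFibers c'.swap₂₃.isolatesFibers

theorem not_hasFiber₃_of_lt (c : FiberedTiling A B) (hI : HasFiber₁ A) (hJ : HasFiber₂ A)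
    (hpq : Fintype.card P < Fintype.card Q) (hpr : Fintype.card P < Fintype.card R) :
    ¬ HasFiber₃ A := by
  intro hK
  have hB₀ := c.not_vanishesAt_of_lt hI hJ hK hpq hpr
  have hA₀ := (c.vanishesAt 0 2 2 (by simp) (by simp) (by simp) (by simp)).resolve_right hB₀
  have hB₁ := (c.vanishesAt_right hI).resolve_left hB₀
  exact c.not_vanishesAt_of_uniform hI hJ hK (c.uniformFiberSums hI hJ hK hpq hpr hA₀ hB₁) hA₀

theorem not_hasFiber₁₂₃ (c : FiberedTiling A B) : ¬ (HasFiber₁ A ∧ HasFiber₂ A ∧ HasFiber₃ A) := by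
  rintro ⟨hI, hJ, hK⟩
  have h₁₂ := c.card_ne₁₂
  have h₁₃ := c.card_ne₁₃
  have h₂₃ := c.card_ne₂₃
  obtain ⟨hpq, hpr⟩ | ⟨hqp, hqr⟩ | ⟨hrp, hrq⟩ :
      (Fintype.card P < Fintype.card Q ∧ Fintype.card P < Fintype.card R) ∨
      (Fintype.card Q < Fintype.card P ∧ Fintype.card Q < Fintype.card R) ∨
      (Fintype.card R < Fintype.card P ∧ Fintype.card R < Fintype.card Q) := by omega
  · exact c.not_hasFiber₃_of_lt hI hJ hpq hpr hK
  · exact c.swap₁₂.not_hasFiber₃_of_lt hJ.swap₁₂ hI.swap₁₂ hqp hqr hK.swap₁₂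
  · exact c.swap₂₃.swap₁₂.not_hasFiber₃_of_lt hK.swap₂₃.swap₁₂ hI.swap₂₃.swap₁₂ hrp hrq
      hJ.swap₂₃.swap₁₂

end FiberedTiling

/-! ### Characters of finite abelian groups -/

open scoped Finset

section AddChar

variable {G ι : Type*} [AddCommGroup G]

theorem card_filter_mul_card_of_sum_char_eq_zero [Fintype G] [DecidableEq G] {S : Finset ι}
    {u : ι → G} (hS : ∀ ψ : AddChar G ℂ, ψ ≠ 0 → ∑ i ∈ S, ψ (u i) = 0) (g : G) :
    #{i ∈ S | u i = g} * Fintype.card G = #S := by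
  have hcount : ∑ i ∈ S, ∑ ψ : AddChar G ℂ, ψ (u i - g) =
      #{i ∈ S | u i = g} * Fintype.card G := by
    simp only [AddChar.sum_apply_eq_ite, sub_eq_zero, ← Finset.sum_filter, Finset.sum_const,
      nsmul_eq_mul]
  have htrivial : ∑ ψ : AddChar G ℂ, ∑ i ∈ S, ψ (u i - g) = #S := by
    rw [Fintype.sum_eq_single 0 fun ψ hψ => ?_]
    · simp
    · simp only [sub_eq_add_neg, AddChar.map_add_eq_mul, ← Finset.sum_mul, hS ψ hψ, zero_mul]
  rw [Finset.sum_comm, htrivial] at hcount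
  exact_mod_cast hcount.symm

theorem sum_mul_eq_zero_of_sum_char_eq_zero [Finite G] [Fintype ι] {u : ι → G}
    (hu : Function.Injective u) {f g : ι → ℂ}
    (hfg : ∀ ψ : AddChar G ℂ, ∑ i, f i * ψ (u i) = 0 ∨ ∑ i, g i * ψ (-u i) = 0) :
    ∑ i, f i * g i = 0 := by
  classical
  have := Fintype.ofFinite G
  have hparseval : ∑ ψ : AddChar G ℂ, (∑ i, f i * ψ (u i)) * ∑ j, g j * ψ (-u j) =
      Fintype.card G * ∑ i, f i * g i := by
    have hterm (i j : ι) : ∑ ψ : AddChar G ℂ, f i * ψ (u i) * (g j * ψ (-u j)) =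
        if i = j then Fintype.card G * (f i * g i) else 0 := by
      calc ∑ ψ : AddChar G ℂ, f i * ψ (u i) * (g j * ψ (-u j))
          = f i * g j * ∑ ψ : AddChar G ℂ, ψ (u i - u j) := by
            rw [Finset.mul_sum]
            refine Finset.sum_congr rfl fun ψ _ => ?_
            rw [sub_eq_add_neg, AddChar.map_add_eq_mul, mul_mul_mul_comm]
        _ = _ := by
            rw [AddChar.sum_apply_eq_ite]
            simp only [sub_eq_zero, hu.eq_iff]
            split_ifs with hij
            · rw [hij, mul_comm]
            · rw [mul_zero]
    simp only [Finset.sum_mul_sum]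
    rw [Finset.sum_comm, Finset.mul_sum]
    refine Finset.sum_congr rfl fun i _ => ?_
    rw [Finset.sum_comm]
    simp only [hterm, Finset.sum_ite_eq, Finset.mem_univ, if_true]
  rw [Finset.sum_eq_zero fun ψ _ => mul_eq_zero.2 (hfg ψ)] at hparseval
  exact (mul_eq_zero.1 hparseval.symm).resolve_left (Nat.cast_ne_zero.2 Fintype.card_ne_zero)

end AddChar

/-! ### Mask polynomials and tilings -/

section ZModChar

variable {M : ℕ}

theorem natCast_dvd_intCast_zmod_iff {D : ℕ} (hD : D ∣ M) (k : ℤ) :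
    (D : ZMod M) ∣ (k : ZMod M) ↔ (D : ℤ) ∣ k := by
  refine ⟨?_, fun ⟨c, hc⟩ => ⟨c, by rw [hc]; push_cast; rfl⟩⟩
  rintro ⟨c, hc⟩
  obtain ⟨c, rfl⟩ := ZMod.intCast_surjective c
  have hM : (M : ℤ) ∣ k - D * c := by
    rw [← ZMod.intCast_zmod_eq_zero_iff_dvd]
    push_cast
    rw [hc, sub_self]
  exact (dvd_sub_left (dvd_mul_right _ _)).1 ((Int.natCast_dvd_natCast.2 hD).trans hM)

theorem orderOf_char_one_dvd (ψ : AddChar (ZMod M) ℂ) : orderOf (ψ 1) ∣ M := by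
  rw [orderOf_dvd_iff_pow_eq_one, ← AddChar.map_nsmul_eq_pow]
  simp

variable [NeZero M]

theorem orderOf_char_of_isUnit (ψ : AddChar (ZMod M) ℂ) {u : ZMod M} (hu : IsUnit u) :
    orderOf (ψ u) = orderOf (ψ 1) := by
  have hcoprime : (orderOf (ψ 1)).Coprime u.val :=
    ((ZMod.isUnit_iff_coprime u.val M).1 (by rwa [ZMod.natCast_zmod_val])).symm.coprime_dvd_left
      (orderOf_char_one_dvd ψ)
  rw [← hcoprime.orderOf_pow, ← AddChar.map_nsmul_eq_pow, nsmul_one, ZMod.natCast_zmod_val]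

theorem exists_char_orderOf_eq {n : ℕ} (hn : n ∣ M) :
    ∃ ψ : AddChar (ZMod M) ℂ, orderOf (ψ 1) = n := by
  have hζ := Complex.isPrimitiveRoot_exp n (ne_zero_of_dvd_ne_zero (NeZero.ne M) hn)
  refine ⟨AddChar.zmodChar M ((hζ.pow_eq_one_iff_dvd M).2 hn), ?_⟩
  have hone := AddChar.zmodChar_apply' ((hζ.pow_eq_one_iff_dvd M).2 hn) 1
  rw [Nat.cast_one, pow_one] at hone
  rw [hone, ← hζ.eq_orderOf]

theorem aeval_maskPoly (ψ : AddChar (ZMod M) ℂ) (C : Finset (ZMod M)) :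
    aeval (ψ 1) (maskPoly M C) = ∑ c ∈ C, ψ c := by
  simp only [maskPoly, map_sum, map_pow, aeval_X, ← AddChar.map_nsmul_eq_pow, nsmul_one,
    ZMod.natCast_zmod_val]

theorem cycDvd_orderOf_char_iff (ψ : AddChar (ZMod M) ℂ) (C : Finset (ZMod M)) :
    cycDvd M (orderOf (ψ 1)) C ↔ ∑ c ∈ C, ψ c = 0 := by
  have hpos : 0 < orderOf (ψ 1) := Nat.pos_of_dvd_of_pos (orderOf_char_one_dvd ψ) (NeZero.pos M)
  have hζ := IsPrimitiveRoot.orderOf (ψ 1)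
  rw [cycDvd, cyclotomic_eq_minpoly hζ hpos,
    ← minpoly.isIntegrallyClosed_dvd_iff (hζ.isIntegral hpos), aeval_maskPoly]

end ZModChar

namespace IsTiling

variable {M : ℕ} [NeZero M] {A B : Finset (ZMod M)}

theorem sum_char_mul_sum_char (h : IsTiling M (A : Set (ZMod M)) (B : Set (ZMod M)))
    (ψ : AddChar (ZMod M) ℂ) : (∑ a ∈ A, ψ a) * ∑ b ∈ B, ψ b = ∑ z, ψ z := by
  rw [Finset.sum_mul_sum, ← Finset.sum_product']
  refine Finset.sum_bij (fun x _ => x.1 + x.2) (fun _ _ => Finset.mem_univ _) ?_ ?_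
    fun x _ => (ψ.map_add_eq_mul x.1 x.2).symm
  · intro x hx y hy hxy
    rw [Finset.mem_product] at hx hy
    exact (h (x.1 + x.2)).unique ⟨hx.1, hx.2, rfl⟩ ⟨hy.1, hy.2, hxy.symm⟩
  · intro z _
    obtain ⟨x, hxA, hxB, hx⟩ := (h z).exists
    exact ⟨x, Finset.mem_product.2 ⟨hxA, hxB⟩, hx⟩

theorem cycDvd_or_cycDvd (h : IsTiling M (A : Set (ZMod M)) (B : Set (ZMod M))) {n : ℕ}
    (hn : n ∣ M) (hn₁ : n ≠ 1) : cycDvd M n A ∨ cycDvd M n B := by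
  obtain ⟨ψ, rfl⟩ := exists_char_orderOf_eq hn
  have hψ : ψ ≠ 0 := fun h₀ => hn₁ (by rw [h₀, AddChar.zero_apply, orderOf_one])
  simp only [cycDvd_orderOf_char_iff]
  rw [← mul_eq_zero, h.sum_char_mul_sum_char, AddChar.sum_eq_zero_iff_ne_zero.2 hψ]

theorem eq_of_sub_eq_isUnit_mul (h : IsTiling M (A : Set (ZMod M)) (B : Set (ZMod M)))
    (hcard : #A * #B = M) {u : ZMod M} (hu : IsUnit u) {a a' b b' : ZMod M} (ha : a ∈ A)
    (ha' : a' ∈ A) (hb : b ∈ B) (hb' : b' ∈ B) (hab : a - a' = u * (b - b')) : a = a' := by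
  have hvanish : ∀ ψ : AddChar (ZMod M) ℂ, ψ ≠ 0 →
      ∑ x ∈ A ×ˢ B, ψ (x.1 + u * x.2) = 0 := by
    intro ψ hψ
    have hfactor : ∑ x ∈ A ×ˢ B, ψ (x.1 + u * x.2) =
        (∑ a ∈ A, ψ a) * ∑ b ∈ B, ψ.mulShift u b := by
      simp only [Finset.sum_mul_sum, ← Finset.sum_product', AddChar.map_add_eq_mul,
        AddChar.mulShift_apply]
    have horder : orderOf (ψ.mulShift u 1) = orderOf (ψ 1) := by
      rw [AddChar.mulShift_apply, mul_one, orderOf_char_of_isUnit ψ hu]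
    rw [hfactor, mul_eq_zero, ← cycDvd_orderOf_char_iff, ← cycDvd_orderOf_char_iff, horder]
    exact h.cycDvd_or_cycDvd (orderOf_char_one_dvd ψ)
      (mt orderOf_eq_one_iff.1 (AddChar.zmod_char_ne_one_iff M ψ |>.1 hψ))
  have hone := card_filter_mul_card_of_sum_char_eq_zero hvanish (a + u * b')
  rw [ZMod.card, Finset.card_product, hcard, Nat.mul_eq_right (NeZero.ne M)] at hone
  have huniq := Finset.card_le_one.1 hone.le (a, b') (by simp [ha, hb']) (a', b)
    (by simp only [Finset.mem_filter, Finset.mem_product]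
        exact ⟨⟨ha', hb⟩, by linear_combination -hab⟩)
  exact congrArg Prod.fst huniq

/-- Sands' theorem, with the equality of `gcd (a - a') M` and `gcd (b - b') M` expressed through
common divisors. -/
theorem eq_of_forall_dvd_sub_iff (h : IsTiling M (A : Set (ZMod M)) (B : Set (ZMod M)))
    (hcard : #A * #B = M) {a a' b b' : ZMod M} (ha : a ∈ A) (ha' : a' ∈ A) (hb : b ∈ B)
    (hb' : b' ∈ B) (hdvd : ∀ D : ℕ, D ∣ M → ((D : ZMod M) ∣ a - a' ↔ (D : ZMod M) ∣ b - b')) :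
    a = a' := by
  obtain ⟨d, hdM, u, hu, hd⟩ := (a - a').eq_unit_mul_divisor
  obtain ⟨e, heM, v, hv, he⟩ := (b - b').eq_unit_mul_divisor
  have hde : d = e := by
    apply Nat.dvd_antisymm
    · have hdb := (hdvd d hdM).1 (hd ▸ dvd_mul_left _ _)
      rw [he, hv.dvd_mul_left] at hdb
      exact_mod_cast (natCast_dvd_intCast_zmod_iff hdM e).1 (by exact_mod_cast hdb)
    · have hea := (hdvd e heM).2 (he ▸ dvd_mul_left _ _)
      rw [hd, hu.dvd_mul_left] at hea
      exact_mod_cast (natCast_dvd_intCast_zmod_iff heM d).1 (by exact_mod_cast hea)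
  obtain ⟨w, rfl⟩ := hv
  refine h.eq_of_sub_eq_isUnit_mul hcard (hu.mul (w⁻¹).isUnit) ha ha' hb hb' ?_
  rw [hd, he, hde, mul_assoc, w.inv_mul_cancel_left]

end IsTiling

/-! ### Two-digit expansions -/

section DigitValue

variable {p : ℕ}

/-- The natural number with base-`p` digits `y.1` (low) and `y.2` (high). -/
def digitValue (y : Fin p × Fin p) : ℕ := y.1 + p * y.2

theorem digitValue_lt (y : Fin p × Fin p) : digitValue y < p ^ 2 := by
  have hlow := y.1.2
  have hhigh := y.2.2
  unfold digitValue
  nlinarith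

theorem natCast_dvd_digitValue_sub_iff (y y' : Fin p × Fin p) :
    (p : ℤ) ∣ digitValue y - digitValue y' ↔ y.1 = y'.1 := by
  have hsub : (digitValue y - digitValue y' : ℤ) = (y.1 - y'.1) + p * (y.2 - y'.2) := by
    simp only [digitValue]
    push_cast
    ring
  rw [hsub, dvd_add_left (dvd_mul_right _ _)]
  refine ⟨fun h => ?_, fun h => by simp [h]⟩
  have := Int.eq_zero_of_abs_lt_dvd h (abs_lt.2 ⟨by omega, by omega⟩)
  exact Fin.ext (by omega)

theorem digitValue_injective : Function.Injective (digitValue (p := p)) := by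
  intro y y' h
  have hlow : y.1 = y'.1 := (natCast_dvd_digitValue_sub_iff y y').1 (by simp [h])
  have hhigh : p * y.2.val = p * y'.2.val := by
    simp only [digitValue, hlow] at h
    omega
  exact Prod.ext hlow (Fin.ext (Nat.eq_of_mul_eq_mul_left y.1.pos hhigh))

theorem sq_dvd_digitValue_sub_iff (y y' : Fin p × Fin p) :
    (p : ℤ) ^ 2 ∣ digitValue y - digitValue y' ↔ y = y' := by
  refine ⟨fun h => ?_, fun h => by simp [h]⟩
  have hy := digitValue_lt y
  have hy' := digitValue_lt y'
  zify at hy hy'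
  have := Int.eq_zero_of_abs_lt_dvd h (abs_lt.2 ⟨by omega, by omega⟩)
  exact digitValue_injective (by omega)

theorem SameGap.pow_dvd_digitValue_sub_iff {y y' z z' : Fin p × Fin p} (h : SameGap y y' z z')
    {a : ℕ} (ha : a ≤ 2) :
    (p : ℤ) ^ a ∣ digitValue y - digitValue y' ↔ (p : ℤ) ^ a ∣ digitValue z - digitValue z' := by
  interval_cases a
  · simp
  · simpa only [pow_one, natCast_dvd_digitValue_sub_iff] using h.1
  · simpa only [sq_dvd_digitValue_sub_iff] using h.2

theorem pow_digitValue (z : ℂ) (x h : Fin p) :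
    z ^ digitValue (x, h) = z ^ (x : ℕ) * (z ^ p) ^ (h : ℕ) := by
  rw [digitValue, pow_add, pow_mul]

theorem sum_fin_pow_eq_zero {z : ℂ} (hz : z ^ p = 1) (hne : z ≠ 1) :
    ∑ i : Fin p, z ^ (i : ℕ) = 0 := by
  rw [Fin.sum_univ_eq_sum_range (z ^ ·), geom_sum_eq hne, hz, sub_self, zero_div]

theorem sum_mul_pow_digitValue_of_pow_eq_one {z : ℂ} (hz : z ^ p = 1) (φ : Fin p × Fin p → ℂ) :
    ∑ y, φ y * z ^ digitValue y = ∑ x, (∑ h, φ (x, h)) * z ^ (x : ℕ) := by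
  simp only [Fintype.sum_prod_type, pow_digitValue, hz, one_pow, mul_one, ← Finset.sum_mul]

theorem sum_mul_pow_digitValue_of_pow_ne_one {z : ℂ} (hz : z ^ p ^ 2 = 1) (hne : z ^ p ≠ 1)
    {φ : Fin p × Fin p → ℂ} (hφ : ∀ x h h', φ (x, h) = φ (x, h')) :
    ∑ y, φ y * z ^ digitValue y = 0 := by
  rw [Fintype.sum_prod_type]
  refine Finset.sum_eq_zero fun x _ => ?_
  simp only [hφ x _ x, pow_digitValue, ← Finset.mul_sum]
  rw [sum_fin_pow_eq_zero (by rw [← pow_mul, ← sq, hz]) hne, mul_zero, mul_zero]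

theorem IsPureLevel.sum_mul_pow_digitValue_eq_zero (hp : p.Prime) {s : ℕ} (hs : s ≤ 2)
    {φ : Fin p × Fin p → ℤ} (hφ : IsPureLevel s φ) {z : ℂ} (hz : z ^ p ^ 2 = 1)
    (hord : orderOf z ≠ p ^ s) : ∑ y, (φ y : ℂ) * z ^ digitValue y = 0 := by
  have : Fact p.Prime := ⟨hp⟩
  interval_cases s
  · rw [pow_zero, ne_eq, orderOf_eq_one_iff] at hord
    by_cases hzp : z ^ p = 1
    · rw [sum_mul_pow_digitValue_of_pow_eq_one hzp]
      simp only [hφ _ (⟨0, hp.pos⟩, ⟨0, hp.pos⟩), ← Finset.mul_sum]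
      rw [sum_fin_pow_eq_zero hzp hord, mul_zero]
    · exact sum_mul_pow_digitValue_of_pow_ne_one hz hzp fun x h h' => by rw [hφ (x, h) (x, h')]
  · by_cases hzp : z ^ p = 1
    · have hz₁ : z = 1 := not_not.1 fun h => hord (by rw [orderOf_eq_prime hzp h, pow_one])
      simp only [hz₁, one_pow, mul_one]
      exact_mod_cast hφ.2
    · exact sum_mul_pow_digitValue_of_pow_ne_one hz hzp fun x h h' => by rw [hφ.1 x h h']
  · have hzp : z ^ p = 1 := not_not.1 fun h => hord (orderOf_eq_prime_pow (by rwa [pow_one]) hz)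
    rw [sum_mul_pow_digitValue_of_pow_eq_one hzp]
    refine Finset.sum_eq_zero fun x _ => ?_
    rw [← Int.cast_sum, hφ x, Int.cast_zero, zero_mul]

end DigitValue

/-! ### Chinese remaindering with three moduli -/

theorem dvd_mul_add_iff {R : Type*} [CommRing R] {d m x y : R} (hdm : IsCoprime d m)
    (hy : d ∣ y) : d ∣ x * m + y ↔ d ∣ x := by
  rw [dvd_add_left hy]
  exact ⟨hdm.dvd_of_dvd_mul_right, fun h => h.mul_right m⟩

theorem mul_mul_dvd_crt_sum_iff {R : Type*} [CommRing R] {m₁ m₂ m₃ d₁ d₂ d₃ : R}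
    (h₁₂ : IsCoprime m₁ m₂) (h₁₃ : IsCoprime m₁ m₃) (h₂₃ : IsCoprime m₂ m₃) (hd₁ : d₁ ∣ m₁)
    (hd₂ : d₂ ∣ m₂) (hd₃ : d₃ ∣ m₃) (x₁ x₂ x₃ : R) :
    d₁ * d₂ * d₃ ∣ x₁ * (m₂ * m₃) + x₂ * (m₁ * m₃) + x₃ * (m₁ * m₂) ↔
      d₁ ∣ x₁ ∧ d₂ ∣ x₂ ∧ d₃ ∣ x₃ := by
  set X := x₁ * (m₂ * m₃) + x₂ * (m₁ * m₃) + x₃ * (m₁ * m₂) with hX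
  have hX₁ : d₁ ∣ X ↔ d₁ ∣ x₁ := by
    rw [hX, add_assoc]
    exact dvd_mul_add_iff ((h₁₂.mul_right h₁₃).of_isCoprime_of_dvd_left hd₁)
      (dvd_add ((hd₁.mul_right _).mul_left _) ((hd₁.mul_right _).mul_left _))
  have hX₂ : d₂ ∣ X ↔ d₂ ∣ x₂ := by
    rw [hX, add_assoc, add_left_comm]
    exact dvd_mul_add_iff ((h₁₂.symm.mul_right h₂₃).of_isCoprime_of_dvd_left hd₂)
      (dvd_add ((hd₂.mul_right _).mul_left _) ((hd₂.mul_left _).mul_left _))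
  have hX₃ : d₃ ∣ X ↔ d₃ ∣ x₃ := by
    rw [hX, add_comm]
    exact dvd_mul_add_iff ((h₁₃.symm.mul_right h₂₃.symm).of_isCoprime_of_dvd_left hd₃)
      (dvd_add ((hd₃.mul_left _).mul_left _) ((hd₃.mul_left _).mul_left _))
  have hd₁₂ : IsCoprime d₁ d₂ :=
    (h₁₂.of_isCoprime_of_dvd_left hd₁).of_isCoprime_of_dvd_right hd₂
  have hd₁₂₃ : IsCoprime (d₁ * d₂) d₃ :=
    ((h₁₃.of_isCoprime_of_dvd_left hd₁).mul_left
      (h₂₃.of_isCoprime_of_dvd_left hd₂)).of_isCoprime_of_dvd_right hd₃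
  rw [← hX₁, ← hX₂, ← hX₃]
  refine ⟨fun h => ⟨?_, ?_, ?_⟩, fun ⟨h₁, h₂, h₃⟩ => hd₁₂₃.mul_dvd (hd₁₂.mul_dvd h₁ h₂) h₃⟩
  · exact ((dvd_mul_right _ _).mul_right _).trans h
  · exact ((dvd_mul_left _ _).mul_right _).trans h
  · exact (dvd_mul_left _ _).trans h

theorem orderOf_eq_mul_mul_of_orderOf_pow {G : Type*} [Monoid G] {ζ : G}
    {m₁ m₂ m₃ d₁ d₂ d₃ : ℕ} (h₁₂ : m₁.Coprime m₂) (h₁₃ : m₁.Coprime m₃) (h₂₃ : m₂.Coprime m₃)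
    (hd₁ : d₁ ∣ m₁) (hd₂ : d₂ ∣ m₂) (hd₃ : d₃ ∣ m₃) (ho₁ : orderOf (ζ ^ (m₂ * m₃)) = d₁)
    (ho₂ : orderOf (ζ ^ (m₁ * m₃)) = d₂) (ho₃ : orderOf (ζ ^ (m₁ * m₂)) = d₃) :
    orderOf ζ = d₁ * d₂ * d₃ := by
  have hpow : ∀ {k d e : ℕ}, orderOf (ζ ^ k) = d → d ∣ e → orderOf (ζ ^ e) ∣ k := by
    intro k d e hk hde
    rw [orderOf_dvd_iff_pow_eq_one, ← pow_mul, mul_comm, pow_mul, ← orderOf_dvd_iff_pow_eq_one, hk]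
    exact hde
  apply Nat.dvd_antisymm
  · have hdvd₁ := hpow ho₁ ((dvd_mul_right d₁ d₂).mul_right d₃)
    have hdvd₂ := hpow ho₂ ((dvd_mul_left d₂ d₁).mul_right d₃)
    have hdvd₃ := hpow ho₃ (dvd_mul_left d₃ (d₁ * d₂))
    have hm₁ : (orderOf (ζ ^ (d₁ * d₂ * d₃))).Coprime m₁ :=
      ((h₁₂.mul_right h₁₃).symm).coprime_dvd_left hdvd₁
    rw [orderOf_dvd_iff_pow_eq_one, ← orderOf_eq_one_iff]
    exact Nat.eq_one_of_dvd_coprimes h₂₃ (hm₁.dvd_of_dvd_mul_left hdvd₃)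
      (hm₁.dvd_of_dvd_mul_left hdvd₂)
  · have hc₁₂ : d₁.Coprime d₂ := (h₁₂.coprime_dvd_left hd₁).coprime_dvd_right hd₂
    have hc₁₂₃ : (d₁ * d₂).Coprime d₃ :=
      ((h₁₃.coprime_dvd_left hd₁).mul_left (h₂₃.coprime_dvd_left hd₂)).coprime_dvd_right hd₃
    exact hc₁₂₃.mul_dvd_of_dvd_of_dvd
      (hc₁₂.mul_dvd_of_dvd_of_dvd (ho₁ ▸ orderOf_pow_dvd _) (ho₂ ▸ orderOf_pow_dvd _))
      (ho₃ ▸ orderOf_pow_dvd _)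

/-! ### Digits of residues modulo `p² q² r²` -/

section ResidueOfDigits

variable {p q r : ℕ}

/-- The residue modulo `p² q² r²` whose Chinese remainder coordinates, up to units, have the
base-`p`, base-`q` and base-`r` digits given by `y`. -/
def residueOfDigits (y : (Fin p × Fin p) × (Fin q × Fin q) × (Fin r × Fin r)) :
    ZMod (p ^ 2 * q ^ 2 * r ^ 2) :=
  ((digitValue y.1 * (q ^ 2 * r ^ 2) + digitValue y.2.1 * (p ^ 2 * r ^ 2) +
    digitValue y.2.2 * (p ^ 2 * q ^ 2) : ℕ) : ZMod (p ^ 2 * q ^ 2 * r ^ 2))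

theorem dvd_residueOfDigits_sub_iff (hpq : p.Coprime q) (hpr : p.Coprime r) (hqr : q.Coprime r)
    {a b c : ℕ} (ha : a ≤ 2) (hb : b ≤ 2) (hc : c ≤ 2)
    (y y' : (Fin p × Fin p) × (Fin q × Fin q) × (Fin r × Fin r)) :
    ((p ^ a * q ^ b * r ^ c : ℕ) : ZMod (p ^ 2 * q ^ 2 * r ^ 2)) ∣
        residueOfDigits y - residueOfDigits y' ↔
      (p : ℤ) ^ a ∣ digitValue y.1 - digitValue y'.1 ∧
      (q : ℤ) ^ b ∣ digitValue y.2.1 - digitValue y'.2.1 ∧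
      (r : ℤ) ^ c ∣ digitValue y.2.2 - digitValue y'.2.2 := by
  have hsub : residueOfDigits y - residueOfDigits y' =
      (((digitValue y.1 - digitValue y'.1) * (q ^ 2 * r ^ 2) +
        (digitValue y.2.1 - digitValue y'.2.1) * (p ^ 2 * r ^ 2) +
        (digitValue y.2.2 - digitValue y'.2.2) * (p ^ 2 * q ^ 2) : ℤ) :
          ZMod (p ^ 2 * q ^ 2 * r ^ 2)) := by
    simp only [residueOfDigits]
    push_cast
    ring
  rw [hsub, natCast_dvd_intCast_zmod_iff
    (mul_dvd_mul (mul_dvd_mul (pow_dvd_pow p ha) (pow_dvd_pow q hb)) (pow_dvd_pow r hc))]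
  push_cast
  exact mul_mul_dvd_crt_sum_iff hpq.isCoprime.pow hpr.isCoprime.pow hqr.isCoprime.pow
    (pow_dvd_pow _ ha) (pow_dvd_pow _ hb) (pow_dvd_pow _ hc) _ _ _

theorem residueOfDigits_injective (hpq : p.Coprime q) (hpr : p.Coprime r) (hqr : q.Coprime r) :
    Function.Injective (residueOfDigits (p := p) (q := q) (r := r)) := by
  intro y y' h
  have hdvd := (dvd_residueOfDigits_sub_iff hpq hpr hqr le_rfl le_rfl le_rfl y y').1
    (by rw [h, sub_self]; exact dvd_zero _)
  simp only [sq_dvd_digitValue_sub_iff] at hdvd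
  exact Prod.ext hdvd.1 (Prod.ext hdvd.2.1 hdvd.2.2)

theorem residueOfDigits_bijective [NeZero (p ^ 2 * q ^ 2 * r ^ 2)] (hpq : p.Coprime q)
    (hpr : p.Coprime r) (hqr : q.Coprime r) :
    Function.Bijective (residueOfDigits (p := p) (q := q) (r := r)) := by
  refine (Fintype.bijective_iff_injective_and_card _).2 ⟨residueOfDigits_injective hpq hpr hqr, ?_⟩
  simp only [Fintype.card_prod, Fintype.card_fin, ZMod.card]
  ring

theorem char_residueOfDigits (ψ : AddChar (ZMod (p ^ 2 * q ^ 2 * r ^ 2)) ℂ)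
    (y : (Fin p × Fin p) × (Fin q × Fin q) × (Fin r × Fin r)) :
    ψ (residueOfDigits y) = (ψ 1 ^ (q ^ 2 * r ^ 2)) ^ digitValue y.1 *
      (ψ 1 ^ (p ^ 2 * r ^ 2)) ^ digitValue y.2.1 *
      (ψ 1 ^ (p ^ 2 * q ^ 2)) ^ digitValue y.2.2 := by
  simp only [residueOfDigits, ← pow_mul, ← pow_add]
  rw [← AddChar.map_nsmul_eq_pow, nsmul_one]
  congr 2
  ring

theorem sum_mul_char_residueOfDigits_eq_zero_or (hp : p.Prime) (hq : q.Prime) (hr : r.Prime)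
    {s₁ s₂ s₃ : ℕ} (hs₁ : s₁ ≤ 2) (hs₂ : s₂ ≤ 2) (hs₃ : s₃ ≤ 2) (hpq : p.Coprime q)
    (hpr : p.Coprime r) (hqr : q.Coprime r)
    {φ₁ : Fin p × Fin p → ℤ} {φ₂ : Fin q × Fin q → ℤ} {φ₃ : Fin r × Fin r → ℤ}
    (hφ₁ : IsPureLevel s₁ φ₁) (hφ₂ : IsPureLevel s₂ φ₂) (hφ₃ : IsPureLevel s₃ φ₃)
    (ψ : AddChar (ZMod (p ^ 2 * q ^ 2 * r ^ 2)) ℂ) :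
    ∑ y : (Fin p × Fin p) × (Fin q × Fin q) × (Fin r × Fin r),
        (φ₁ y.1 * φ₂ y.2.1 * φ₃ y.2.2 : ℂ) * ψ (residueOfDigits y) = 0 ∨
      orderOf (ψ 1) = p ^ s₁ * q ^ s₂ * r ^ s₃ := by
  have hone : ψ 1 ^ (p ^ 2 * q ^ 2 * r ^ 2) = 1 :=
    orderOf_dvd_iff_pow_eq_one.1 (orderOf_char_one_dvd ψ)
  have hfactor : ∑ y : (Fin p × Fin p) × (Fin q × Fin q) × (Fin r × Fin r),
      (φ₁ y.1 * φ₂ y.2.1 * φ₃ y.2.2 : ℂ) * ψ (residueOfDigits y) =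
      (∑ y₁, (φ₁ y₁ : ℂ) * (ψ 1 ^ (q ^ 2 * r ^ 2)) ^ digitValue y₁) *
        ((∑ y₂, (φ₂ y₂ : ℂ) * (ψ 1 ^ (p ^ 2 * r ^ 2)) ^ digitValue y₂) *
          ∑ y₃, (φ₃ y₃ : ℂ) * (ψ 1 ^ (p ^ 2 * q ^ 2)) ^ digitValue y₃) := by
    simp only [Finset.sum_mul_sum]
    simp only [Finset.mul_sum, Fintype.sum_prod_type, char_residueOfDigits, mul_assoc,
      mul_left_comm (_ ^ _ : ℂ) (Int.cast _)]
  rw [hfactor, or_iff_not_imp_left, mul_eq_zero, mul_eq_zero, not_or, not_or]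
  rintro ⟨h₁, h₂, h₃⟩
  refine orderOf_eq_mul_mul_of_orderOf_pow (hpq.pow 2 2) (hpr.pow 2 2) (hqr.pow 2 2)
    (pow_dvd_pow p hs₁) (pow_dvd_pow q hs₂) (pow_dvd_pow r hs₃) ?_ ?_ ?_
  · refine not_not.1 (mt (hφ₁.sum_mul_pow_digitValue_eq_zero hp hs₁ ?_) h₁)
    rw [← pow_mul, ← hone]
    ring
  · refine not_not.1 (mt (hφ₂.sum_mul_pow_digitValue_eq_zero hq hs₂ ?_) h₂)
    rw [← pow_mul, ← hone]
    ring
  · refine not_not.1 (mt (hφ₃.sum_mul_pow_digitValue_eq_zero hr hs₃ ?_) h₃)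
    rw [← pow_mul, ← hone]

/-- The indicator function of a set of residues modulo `p² q² r²`, in digit coordinates. -/
def digitIndicator (C : Finset (ZMod (p ^ 2 * q ^ 2 * r ^ 2))) :
    DigitArray (Fin p) (Fin q) (Fin r) :=
  fun y₁ y₂ y₃ => if residueOfDigits (y₁, y₂, y₃) ∈ C then 1 else 0

variable (C : Finset (ZMod (p ^ 2 * q ^ 2 * r ^ 2)))

theorem digitIndicator_eq_zero_or_one (y₁ : Fin p × Fin p) (y₂ : Fin q × Fin q)
    (y₃ : Fin r × Fin r) : digitIndicator C y₁ y₂ y₃ = 0 ∨ digitIndicator C y₁ y₂ y₃ = 1 := by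
  unfold digitIndicator
  split_ifs <;> simp

variable {C}

theorem digitIndicator_eq_one_iff {y₁ : Fin p × Fin p} {y₂ : Fin q × Fin q} {y₃ : Fin r × Fin r} :
    digitIndicator C y₁ y₂ y₃ = 1 ↔ residueOfDigits (y₁, y₂, y₃) ∈ C := by
  simp [digitIndicator]

variable [NeZero (p ^ 2 * q ^ 2 * r ^ 2)]

theorem sum_digitIndicator_mul {S : Type*} [CommRing S] (hpq : p.Coprime q) (hpr : p.Coprime r)
    (hqr : q.Coprime r) (C : Finset (ZMod (p ^ 2 * q ^ 2 * r ^ 2)))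
    (f : ZMod (p ^ 2 * q ^ 2 * r ^ 2) → S) :
    ∑ y : (Fin p × Fin p) × (Fin q × Fin q) × (Fin r × Fin r),
      (digitIndicator C y.1 y.2.1 y.2.2 : S) * f (residueOfDigits y) = ∑ c ∈ C, f c := by
  have hreindex :=
    (residueOfDigits_bijective hpq hpr hqr).sum_comp fun z => if z ∈ C then f z else 0
  rw [Finset.sum_ite_mem, Finset.univ_inter] at hreindex
  rw [← hreindex]
  refine Finset.sum_congr rfl fun y _ => ?_
  simp only [digitIndicator]
  split_ifs <;> simp

theorem sum_digitIndicator (hpq : p.Coprime q) (hpr : p.Coprime r) (hqr : q.Coprime r)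
    (C : Finset (ZMod (p ^ 2 * q ^ 2 * r ^ 2))) :
    ∑ y₁, ∑ y₂, ∑ y₃, digitIndicator C y₁ y₂ y₃ = #C := by
  have hsum := sum_digitIndicator_mul hpq hpr hqr C fun _ => (1 : ℤ)
  simpa [Fintype.sum_prod_type] using hsum

theorem vanishesAt_digitIndicator (hp : p.Prime) (hq : q.Prime) (hr : r.Prime) (hpq : p.Coprime q)
    (hpr : p.Coprime r) (hqr : q.Coprime r) {s₁ s₂ s₃ : ℕ} (hs₁ : s₁ ≤ 2) (hs₂ : s₂ ≤ 2)
    (hs₃ : s₃ ≤ 2) (hC : cycDvd (p ^ 2 * q ^ 2 * r ^ 2) (p ^ s₁ * q ^ s₂ * r ^ s₃) C) :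
    VanishesAt s₁ s₂ s₃ (digitIndicator C) := by
  intro φ₁ φ₂ φ₃ hφ₁ hφ₂ hφ₃
  have hsum := sum_mul_eq_zero_of_sum_char_eq_zero (residueOfDigits_injective hpq hpr hqr)
    (f := fun y => (φ₁ y.1 * φ₂ y.2.1 * φ₃ y.2.2 : ℂ))
    (g := fun y => (digitIndicator C y.1 y.2.1 y.2.2 : ℂ)) fun ψ => by
      refine (sum_mul_char_residueOfDigits_eq_zero_or hp hq hr hs₁ hs₂ hs₃ hpq hpr hqr
        hφ₁ hφ₂ hφ₃ ψ).imp_right fun hψ => ?_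
      have hinv : orderOf (ψ⁻¹ 1) = orderOf (ψ 1) := by
        rw [AddChar.inv_apply, orderOf_char_of_isUnit ψ isUnit_one.neg]
      rw [← hψ, ← hinv, cycDvd_orderOf_char_iff] at hC
      have hreindex := sum_digitIndicator_mul hpq hpr hqr C fun c => ψ⁻¹ c
      simpa only [AddChar.inv_apply] using hreindex.trans hC
  rw [← @Int.cast_eq_zero ℂ, ← hsum]
  push_cast
  simp only [Finset.mul_sum, mul_assoc, Fintype.sum_prod_type]

end ResidueOfDigits

/-! ### The digit form of a tiling -/

/-- The points of `A` whose whole `M`-fiber in the `p` direction is contained in `A`: the sets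
`I`, `J`, `K` of the theorem. -/
def fiberedPart (M p : ℕ) (A : Finset (ZMod M)) : Set (ZMod M) :=
  {a | a ∈ A ∧ gridSet M a (M / p) ⊆ A}

theorem mem_fiberedPart_of_fibered {M D n : ℕ} {A : Finset (ZMod M)} {a b : ZMod M}
    (h : Fibered M n ((A : Set (ZMod M)) ∩ gridSet M a D)) (hb : b ∈ A) (hab : b ∈ gridSet M a D) :
    b ∈ fiberedPart M n A :=
  ⟨hb, fun _ hc => (h b ⟨hb, hab⟩ hc).1⟩

theorem three_le_of_prime_of_odd {p : ℕ} (hp : p.Prime) (h : Odd p) : 3 ≤ p :=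
  hp.two_le.lt_of_ne' (h.ne_two_of_dvd_nat dvd_rfl)

section FiberedPart

variable {p q r : ℕ} {A B : Finset (ZMod (p ^ 2 * q ^ 2 * r ^ 2))}

theorem exists_pow_mul_pow_mul_pow_eq_of_dvd (hp : p.Prime) (hq : q.Prime) (hr : r.Prime) {D : ℕ}
    (hD : D ∣ p ^ 2 * q ^ 2 * r ^ 2) :
    ∃ a ≤ 2, ∃ b ≤ 2, ∃ c ≤ 2, p ^ a * q ^ b * r ^ c = D := by
  obtain ⟨_, _, hDpq, hDr, rfl⟩ := Nat.dvd_mul.1 hD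
  obtain ⟨_, _, hDp, hDq, rfl⟩ := Nat.dvd_mul.1 hDpq
  obtain ⟨a, ha, rfl⟩ := (Nat.dvd_prime_pow hp).1 hDp
  obtain ⟨b, hb, rfl⟩ := (Nat.dvd_prime_pow hq).1 hDq
  obtain ⟨c, hc, rfl⟩ := (Nat.dvd_prime_pow hr).1 hDr
  exact ⟨a, ha, b, hb, c, hc, rfl⟩

theorem IsTiling.eq_of_sameGap [NeZero (p ^ 2 * q ^ 2 * r ^ 2)]
    (h : IsTiling (p ^ 2 * q ^ 2 * r ^ 2) (A : Set (ZMod _)) (B : Set (ZMod _)))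
    (hcard : #A * #B = p ^ 2 * q ^ 2 * r ^ 2) (hp : p.Prime) (hq : q.Prime) (hr : r.Prime)
    (hpq : p.Coprime q) (hpr : p.Coprime r) (hqr : q.Coprime r)
    {y y' z z' : (Fin p × Fin p) × (Fin q × Fin q) × (Fin r × Fin r)}
    (hy : residueOfDigits y ∈ A) (hy' : residueOfDigits y' ∈ A) (hz : residueOfDigits z ∈ B)
    (hz' : residueOfDigits z' ∈ B) (h₁ : SameGap y.1 y'.1 z.1 z'.1)
    (h₂ : SameGap y.2.1 y'.2.1 z.2.1 z'.2.1) (h₃ : SameGap y.2.2 y'.2.2 z.2.2 z'.2.2) : y = y' := by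
  refine residueOfDigits_injective hpq hpr hqr
    (h.eq_of_forall_dvd_sub_iff hcard hy hy' hz hz' fun D hD => ?_)
  obtain ⟨a, ha, b, hb, c, hc, rfl⟩ := exists_pow_mul_pow_mul_pow_eq_of_dvd hp hq hr hD
  rw [dvd_residueOfDigits_sub_iff hpq hpr hqr ha hb hc,
    dvd_residueOfDigits_sub_iff hpq hpr hqr ha hb hc, h₁.pow_dvd_digitValue_sub_iff ha,
    h₂.pow_dvd_digitValue_sub_iff hb, h₃.pow_dvd_digitValue_sub_iff hc]

theorem residueOfDigits_mem_gridSet_iff (hpq : p.Coprime q) (hpr : p.Coprime r) (hqr : q.Coprime r)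
    (y y' : (Fin p × Fin p) × (Fin q × Fin q) × (Fin r × Fin r)) :
    residueOfDigits y' ∈ gridSet (p ^ 2 * q ^ 2 * r ^ 2) (residueOfDigits y) (p * q * r) ↔
      y'.1.1 = y.1.1 ∧ y'.2.1.1 = y.2.1.1 ∧ y'.2.2.1 = y.2.2.1 := by
  have hdvd := dvd_residueOfDigits_sub_iff hpq hpr hqr one_le_two one_le_two one_le_two y' y
  simpa only [gridSet, Set.mem_ofPred_eq, pow_one, natCast_dvd_digitValue_sub_iff] using hdvd

theorem residueOfDigits_mem_gridSet_div_iff₁ (hp : p ≠ 0) (hpq : p.Coprime q) (hpr : p.Coprime r)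
    (hqr : q.Coprime r) (y y' : (Fin p × Fin p) × (Fin q × Fin q) × (Fin r × Fin r)) :
    residueOfDigits y' ∈ gridSet (p ^ 2 * q ^ 2 * r ^ 2) (residueOfDigits y)
      (p ^ 2 * q ^ 2 * r ^ 2 / p) ↔ y'.1.1 = y.1.1 ∧ y'.2 = y.2 := by
  have hdiv : p ^ 2 * q ^ 2 * r ^ 2 / p = p ^ 1 * q ^ 2 * r ^ 2 :=
    Nat.div_eq_of_eq_mul_right (Nat.pos_of_ne_zero hp) (by ring)
  rw [hdiv, Prod.ext_iff (x := y'.2)]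
  have hdvd := dvd_residueOfDigits_sub_iff hpq hpr hqr one_le_two le_rfl le_rfl y' y
  simpa only [gridSet, Set.mem_ofPred_eq, pow_one, natCast_dvd_digitValue_sub_iff,
    sq_dvd_digitValue_sub_iff] using hdvd

theorem residueOfDigits_mem_gridSet_div_iff₂ (hq : q ≠ 0) (hpq : p.Coprime q) (hpr : p.Coprime r)
    (hqr : q.Coprime r) (y y' : (Fin p × Fin p) × (Fin q × Fin q) × (Fin r × Fin r)) :
    residueOfDigits y' ∈ gridSet (p ^ 2 * q ^ 2 * r ^ 2) (residueOfDigits y)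
      (p ^ 2 * q ^ 2 * r ^ 2 / q) ↔ y'.1 = y.1 ∧ y'.2.1.1 = y.2.1.1 ∧ y'.2.2 = y.2.2 := by
  have hdiv : p ^ 2 * q ^ 2 * r ^ 2 / q = p ^ 2 * q ^ 1 * r ^ 2 :=
    Nat.div_eq_of_eq_mul_right (Nat.pos_of_ne_zero hq) (by ring)
  rw [hdiv]
  have hdvd := dvd_residueOfDigits_sub_iff hpq hpr hqr le_rfl one_le_two le_rfl y' y
  simpa only [gridSet, Set.mem_ofPred_eq, pow_one, natCast_dvd_digitValue_sub_iff,
    sq_dvd_digitValue_sub_iff] using hdvd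

theorem residueOfDigits_mem_gridSet_div_iff₃ (hr : r ≠ 0) (hpq : p.Coprime q) (hpr : p.Coprime r)
    (hqr : q.Coprime r) (y y' : (Fin p × Fin p) × (Fin q × Fin q) × (Fin r × Fin r)) :
    residueOfDigits y' ∈ gridSet (p ^ 2 * q ^ 2 * r ^ 2) (residueOfDigits y)
      (p ^ 2 * q ^ 2 * r ^ 2 / r) ↔ y'.1 = y.1 ∧ y'.2.1 = y.2.1 ∧ y'.2.2.1 = y.2.2.1 := by
  have hdiv : p ^ 2 * q ^ 2 * r ^ 2 / r = p ^ 2 * q ^ 2 * r ^ 1 :=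
    Nat.div_eq_of_eq_mul_right (Nat.pos_of_ne_zero hr) (by ring)
  rw [hdiv]
  have hdvd := dvd_residueOfDigits_sub_iff hpq hpr hqr le_rfl le_rfl one_le_two y' y
  simpa only [gridSet, Set.mem_ofPred_eq, pow_one, natCast_dvd_digitValue_sub_iff,
    sq_dvd_digitValue_sub_iff] using hdvd

variable [NeZero (p ^ 2 * q ^ 2 * r ^ 2)]

theorem residueOfDigits_mem_fiberedPart_iff₁ (hp : p ≠ 0) (hpq : p.Coprime q) (hpr : p.Coprime r)
    (hqr : q.Coprime r) (y : (Fin p × Fin p) × (Fin q × Fin q) × (Fin r × Fin r)) :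
    residueOfDigits y ∈ fiberedPart (p ^ 2 * q ^ 2 * r ^ 2) p A ↔
      IsFiber₁ (digitIndicator A) y.1.1 y.2.1 y.2.2 := by
  refine ⟨fun h g => digitIndicator_eq_one_iff.2 (h.2 ?_), fun h => ?_⟩
  · exact (residueOfDigits_mem_gridSet_div_iff₁ hp hpq hpr hqr _ _).2 ⟨rfl, rfl⟩
  refine ⟨digitIndicator_eq_one_iff.1 (h y.1.2), fun z hz => ?_⟩
  obtain ⟨⟨⟨x₁, g₁⟩, y'⟩, rfl⟩ := (residueOfDigits_bijective hpq hpr hqr).surjective z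
  obtain ⟨rfl, rfl⟩ := (residueOfDigits_mem_gridSet_div_iff₁ hp hpq hpr hqr _ _).1 hz
  exact digitIndicator_eq_one_iff.1 (h g₁)

theorem residueOfDigits_mem_fiberedPart_iff₂ (hq : q ≠ 0) (hpq : p.Coprime q) (hpr : p.Coprime r)
    (hqr : q.Coprime r) (y : (Fin p × Fin p) × (Fin q × Fin q) × (Fin r × Fin r)) :
    residueOfDigits y ∈ fiberedPart (p ^ 2 * q ^ 2 * r ^ 2) q A ↔
      IsFiber₂ (digitIndicator A) y.1 y.2.1.1 y.2.2 := by
  refine ⟨fun h g => digitIndicator_eq_one_iff.2 (h.2 ?_), fun h => ?_⟩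
  · exact (residueOfDigits_mem_gridSet_div_iff₂ hq hpq hpr hqr _ _).2 ⟨rfl, rfl, rfl⟩
  refine ⟨digitIndicator_eq_one_iff.1 (h y.2.1.2), fun z hz => ?_⟩
  obtain ⟨⟨y₁, ⟨x₂, g₂⟩, y₃⟩, rfl⟩ := (residueOfDigits_bijective hpq hpr hqr).surjective z
  obtain ⟨rfl, rfl, rfl⟩ := (residueOfDigits_mem_gridSet_div_iff₂ hq hpq hpr hqr _ _).1 hz
  exact digitIndicator_eq_one_iff.1 (h g₂)

theorem residueOfDigits_mem_fiberedPart_iff₃ (hr : r ≠ 0) (hpq : p.Coprime q) (hpr : p.Coprime r)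
    (hqr : q.Coprime r) (y : (Fin p × Fin p) × (Fin q × Fin q) × (Fin r × Fin r)) :
    residueOfDigits y ∈ fiberedPart (p ^ 2 * q ^ 2 * r ^ 2) r A ↔
      IsFiber₃ (digitIndicator A) y.1 y.2.1 y.2.2.1 := by
  refine ⟨fun h g => digitIndicator_eq_one_iff.2 (h.2 ?_), fun h => ?_⟩
  · exact (residueOfDigits_mem_gridSet_div_iff₃ hr hpq hpr hqr _ _).2 ⟨rfl, rfl, rfl⟩
  refine ⟨digitIndicator_eq_one_iff.1 (h y.2.2.2), fun z hz => ?_⟩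
  obtain ⟨⟨y₁, y₂, ⟨x₃, g₃⟩⟩, rfl⟩ := (residueOfDigits_bijective hpq hpr hqr).surjective z
  obtain ⟨rfl, rfl, rfl⟩ := (residueOfDigits_mem_gridSet_div_iff₃ hr hpq hpr hqr _ _).1 hz
  exact digitIndicator_eq_one_iff.1 (h g₃)

theorem isFiber_digitIndicator_of_fibered (hp : p ≠ 0) (hq : q ≠ 0) (hr : r ≠ 0)
    (hpq : p.Coprime q) (hpr : p.Coprime r) (hqr : q.Coprime r)
    (hfib : ∀ a ∈ A,
      Fibered _ p ((A : Set (ZMod _)) ∩ gridSet _ a (p * q * r)) ∨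
      Fibered _ q ((A : Set (ZMod _)) ∩ gridSet _ a (p * q * r)) ∨
      Fibered _ r ((A : Set (ZMod _)) ∩ gridSet _ a (p * q * r)))
    (x₁ : Fin p) (x₂ : Fin q) (x₃ : Fin r) :
    (∀ h₁ h₂ h₃, digitIndicator A (x₁, h₁) (x₂, h₂) (x₃, h₃) = 1 →
      IsFiber₁ (digitIndicator A) x₁ (x₂, h₂) (x₃, h₃)) ∨
    (∀ h₁ h₂ h₃, digitIndicator A (x₁, h₁) (x₂, h₂) (x₃, h₃) = 1 →
      IsFiber₂ (digitIndicator A) (x₁, h₁) x₂ (x₃, h₃)) ∨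
    (∀ h₁ h₂ h₃, digitIndicator A (x₁, h₁) (x₂, h₂) (x₃, h₃) = 1 →
      IsFiber₃ (digitIndicator A) (x₁, h₁) (x₂, h₂) x₃) := by
  by_cases hex : ∃ h₁ h₂ h₃, digitIndicator A (x₁, h₁) (x₂, h₂) (x₃, h₃) = 1
  · obtain ⟨g₁, g₂, g₃, hg⟩ := hex
    rw [digitIndicator_eq_one_iff] at hg
    have hgrid : ∀ h₁ h₂ h₃, residueOfDigits ((x₁, h₁), (x₂, h₂), (x₃, h₃)) ∈
        gridSet _ (residueOfDigits ((x₁, g₁), (x₂, g₂), (x₃, g₃))) (p * q * r) := fun h₁ h₂ h₃ =>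
      (residueOfDigits_mem_gridSet_iff hpq hpr hqr (_, _, _) (_, _, _)).2 ⟨rfl, rfl, rfl⟩
    refine (hfib _ hg).imp (fun hn h₁ h₂ h₃ hh => ?_)
      (Or.imp (fun hn h₁ h₂ h₃ hh => ?_) fun hn h₁ h₂ h₃ hh => ?_) <;>
      replace hh := mem_fiberedPart_of_fibered hn (digitIndicator_eq_one_iff.1 hh) (hgrid h₁ h₂ h₃)
    · exact (residueOfDigits_mem_fiberedPart_iff₁ hp hpq hpr hqr
        ((x₁, h₁), (x₂, h₂), (x₃, h₃))).1 hh
    · exact (residueOfDigits_mem_fiberedPart_iff₂ hq hpq hpr hqr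
        ((x₁, h₁), (x₂, h₂), (x₃, h₃))).1 hh
    · exact (residueOfDigits_mem_fiberedPart_iff₃ hr hpq hpr hqr
        ((x₁, h₁), (x₂, h₂), (x₃, h₃))).1 hh
  · exact Or.inl fun h₁ h₂ h₃ hh => absurd ⟨h₁, h₂, h₃, hh⟩ hex

theorem IsTiling.vanishesAt_digitIndicator_or
    (h : IsTiling (p ^ 2 * q ^ 2 * r ^ 2) (A : Set (ZMod _)) (B : Set (ZMod _)))
    (hp : p.Prime) (hq : q.Prime) (hr : r.Prime) (hpq : p.Coprime q) (hpr : p.Coprime r)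
    (hqr : q.Coprime r) {s₁ s₂ s₃ : ℕ} (hs₁ : s₁ ≤ 2) (hs₂ : s₂ ≤ 2) (hs₃ : s₃ ≤ 2)
    (hs : s₁ ≠ 0 ∨ s₂ ≠ 0 ∨ s₃ ≠ 0) :
    VanishesAt s₁ s₂ s₃ (digitIndicator A) ∨ VanishesAt s₁ s₂ s₃ (digitIndicator B) := by
  have hne : p ^ s₁ * q ^ s₂ * r ^ s₃ ≠ 1 := by
    simp only [ne_eq, mul_eq_one, Nat.pow_eq_one, hp.ne_one, hq.ne_one, hr.ne_one, false_or]
    omega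
  exact (h.cycDvd_or_cycDvd (mul_dvd_mul (mul_dvd_mul (pow_dvd_pow p hs₁) (pow_dvd_pow q hs₂))
    (pow_dvd_pow r hs₃)) hne).imp
      (vanishesAt_digitIndicator hp hq hr hpq hpr hqr hs₁ hs₂ hs₃)
      (vanishesAt_digitIndicator hp hq hr hpq hpr hqr hs₁ hs₂ hs₃)

theorem IsTiling.fiberedTiling_digitIndicator
    (h : IsTiling (p ^ 2 * q ^ 2 * r ^ 2) (A : Set (ZMod _)) (B : Set (ZMod _)))
    (hp : p.Prime) (hq : q.Prime) (hr : r.Prime) (hp_odd : Odd p) (hq_odd : Odd q)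
    (hr_odd : Odd r) (hpq : p ≠ q) (hpr : p ≠ r) (hqr : q ≠ r) (hA : #A = p * q * r)
    (hB : #B = p * q * r)
    (hfib : ∀ a ∈ A,
      Fibered _ p ((A : Set (ZMod _)) ∩ gridSet _ a (p * q * r)) ∨
      Fibered _ q ((A : Set (ZMod _)) ∩ gridSet _ a (p * q * r)) ∨
      Fibered _ r ((A : Set (ZMod _)) ∩ gridSet _ a (p * q * r)))
    (h₁₂ : Disjoint (fiberedPart _ p A) (fiberedPart _ q A))
    (h₁₃ : Disjoint (fiberedPart _ p A) (fiberedPart _ r A))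
    (h₂₃ : Disjoint (fiberedPart _ q A) (fiberedPart _ r A)) :
    FiberedTiling (digitIndicator A) (digitIndicator B) := by
  have cpq := (Nat.coprime_primes hp hq).2 hpq
  have cpr := (Nat.coprime_primes hp hr).2 hpr
  have cqr := (Nat.coprime_primes hq hr).2 hqr
  have mem₁ := residueOfDigits_mem_fiberedPart_iff₁ (A := A) hp.ne_zero cpq cpr cqr
  have mem₂ := residueOfDigits_mem_fiberedPart_iff₂ (A := A) hq.ne_zero cpq cpr cqr
  have mem₃ := residueOfDigits_mem_fiberedPart_iff₃ (A := A) hr.ne_zero cpq cpr cqr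
  refine
    { left_zero_or_one := digitIndicator_eq_zero_or_one A
      right_zero_or_one := digitIndicator_eq_zero_or_one B
      sum_left := by simp [sum_digitIndicator cpq cpr cqr, hA]
      sum_right := by simp [sum_digitIndicator cpq cpr cqr, hB]
      prime₁ := by rwa [Fintype.card_fin]
      prime₂ := by rwa [Fintype.card_fin]
      prime₃ := by rwa [Fintype.card_fin]
      three_le₁ := by rw [Fintype.card_fin]; exact three_le_of_prime_of_odd hp hp_odd
      three_le₂ := by rw [Fintype.card_fin]; exact three_le_of_prime_of_odd hq hq_odd
      three_le₃ := by rw [Fintype.card_fin]; exact three_le_of_prime_of_odd hr hr_odd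
      card_ne₁₂ := by simpa only [Fintype.card_fin]
      card_ne₁₃ := by simpa only [Fintype.card_fin]
      card_ne₂₃ := by simpa only [Fintype.card_fin]
      sands := ?_
      vanishesAt := fun _ _ _ => h.vanishesAt_digitIndicator_or hp hq hr cpq cpr cqr
      fibered := isFiber_digitIndicator_of_fibered hp.ne_zero hq.ne_zero hr.ne_zero cpq cpr cqr hfib
      not_isFiber₁₂ := fun y₁ y₂ y₃ hy hy' =>
        Set.disjoint_left.1 h₁₂ ((mem₁ (y₁, y₂, y₃)).2 hy) ((mem₂ (y₁, y₂, y₃)).2 hy')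
      not_isFiber₁₃ := fun y₁ y₂ y₃ hy hy' =>
        Set.disjoint_left.1 h₁₃ ((mem₁ (y₁, y₂, y₃)).2 hy) ((mem₃ (y₁, y₂, y₃)).2 hy')
      not_isFiber₂₃ := fun y₁ y₂ y₃ hy hy' =>
        Set.disjoint_left.1 h₂₃ ((mem₂ (y₁, y₂, y₃)).2 hy) ((mem₃ (y₁, y₂, y₃)).2 hy') }
  intro y₁ y₂ y₃ y₁' y₂' y₃' z₁ z₂ z₃ z₁' z₂' z₃' hy hy' hz hz' hgap₁ hgap₂ hgap₃
  rw [digitIndicator_eq_one_iff] at hy hy' hz hz'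
  have heq := h.eq_of_sameGap (by rw [hA, hB]; ring) hp hq hr cpq cpr cqr hy hy' hz hz'
    hgap₁ hgap₂ hgap₃
  simpa only [Prod.mk.injEq] using heq

theorem hasFiber_digitIndicator_of_nonempty₁ (hp : p ≠ 0) (hpq : p.Coprime q) (hpr : p.Coprime r)
    (hqr : q.Coprime r) (h : (fiberedPart (p ^ 2 * q ^ 2 * r ^ 2) p A).Nonempty) :
    HasFiber₁ (digitIndicator A) := by
  obtain ⟨a, ha⟩ := h
  obtain ⟨y, rfl⟩ := (residueOfDigits_bijective hpq hpr hqr).surjective a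
  exact ⟨_, _, _, (residueOfDigits_mem_fiberedPart_iff₁ hp hpq hpr hqr y).1 ha⟩

theorem hasFiber_digitIndicator_of_nonempty₂ (hq : q ≠ 0) (hpq : p.Coprime q) (hpr : p.Coprime r)
    (hqr : q.Coprime r) (h : (fiberedPart (p ^ 2 * q ^ 2 * r ^ 2) q A).Nonempty) :
    HasFiber₂ (digitIndicator A) := by
  obtain ⟨a, ha⟩ := h
  obtain ⟨y, rfl⟩ := (residueOfDigits_bijective hpq hpr hqr).surjective a
  exact ⟨_, _, _, (residueOfDigits_mem_fiberedPart_iff₂ hq hpq hpr hqr y).1 ha⟩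

theorem hasFiber_digitIndicator_of_nonempty₃ (hr : r ≠ 0) (hpq : p.Coprime q) (hpr : p.Coprime r)
    (hqr : q.Coprime r) (h : (fiberedPart (p ^ 2 * q ^ 2 * r ^ 2) r A).Nonempty) :
    HasFiber₃ (digitIndicator A) := by
  obtain ⟨a, ha⟩ := h
  obtain ⟨y, rfl⟩ := (residueOfDigits_bijective hpq hpr hqr).surjective a
  exact ⟨_, _, _, (residueOfDigits_mem_fiberedPart_iff₃ hr hpq hpr hqr y).1 ha⟩

end FiberedPart

/-- **Case (F1).** If `A` is fibered on `D(M)`-grids and the sets `I, J, K` of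
elements of `A` lying on full `M`-fibers in the three directions are pairwise disjoint, then
at least one of them is empty. -/
theorem statement19
    (pi pj pk : ℕ) (hpi : pi.Prime) (hpj : pj.Prime) (hpk : pk.Prime)
    (hoi : Odd pi) (hoj : Odd pj) (hok : Odd pk)
    (hij : pi ≠ pj) (hik : pi ≠ pk) (hjk : pj ≠ pk)
    (M : ℕ) (hM : M = pi ^ 2 * pj ^ 2 * pk ^ 2)
    (A B : Finset (ZMod M))
    (htile : IsTiling M (A : Set (ZMod M)) (B : Set (ZMod M)))
    (hcardA : A.card = pi * pj * pk) (hcardB : B.card = pi * pj * pk)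
    (hPhiM : cycDvd M M A)
    (hfib : ∀ a ∈ A,
      Fibered M pi ((A : Set (ZMod M)) ∩ gridSet M a (pi * pj * pk)) ∨
      Fibered M pj ((A : Set (ZMod M)) ∩ gridSet M a (pi * pj * pk)) ∨
      Fibered M pk ((A : Set (ZMod M)) ∩ gridSet M a (pi * pj * pk)))
    (I J K : Set (ZMod M))
    (hI : I = {a : ZMod M | a ∈ A ∧ gridSet M a (M / pi) ⊆ (A : Set (ZMod M))})
    (hJ : J = {a : ZMod M | a ∈ A ∧ gridSet M a (M / pj) ⊆ (A : Set (ZMod M))})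
    (hK : K = {a : ZMod M | a ∈ A ∧ gridSet M a (M / pk) ⊆ (A : Set (ZMod M))})
    (hIJ : Disjoint I J) (hIK : Disjoint I K) (hJK : Disjoint J K) :
    I = ∅ ∨ J = ∅ ∨ K = ∅ := by
  subst hM hI hJ hK
  have hp₀ := hpi.ne_zero
  have hq₀ := hpj.ne_zero
  have hr₀ := hpk.ne_zero
  have : NeZero (pi ^ 2 * pj ^ 2 * pk ^ 2) := ⟨by positivity⟩
  have hpq := (Nat.coprime_primes hpi hpj).2 hij
  have hpr := (Nat.coprime_primes hpi hpk).2 hik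
  have hqr := (Nat.coprime_primes hpj hpk).2 hjk
  have hdigit := htile.fiberedTiling_digitIndicator hpi hpj hpk hoi hoj hok hij hik hjk hcardA
    hcardB hfib hIJ hIK hJK
  by_contra! ⟨hI, hJ, hK⟩
  exact hdigit.not_hasFiber₁₂₃
    ⟨hasFiber_digitIndicator_of_nonempty₁ hp₀ hpq hpr hqr hI,
      hasFiber_digitIndicator_of_nonempty₂ hq₀ hpq hpr hqr hJ,
      hasFiber_digitIndicator_of_nonempty₃ hr₀ hpq hpr hqr hK⟩
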